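/- arXiv:math/0501126 — 3 statements merged into one kernel-verified Lean document; each statement's English description precedes it below -/
import Mathlib

section
/- There exist x₁ ≥ 0 and λ₁ ≥ 0, depending only on V, and a jointly smooth function f̃₄ : ℝ × ℝ → ℂ² such that: (i) for every λ ∈ ℝ, f̃₄(·,λ) is a solution of ℋf = (1+λ²)f; (ii) for all integers k, ℓ ≥ 0 there is C_{k,ℓ} with |∂_λ^ℓ ∂ₓ^k (e^(−μx) f̃₄(x,λ) − (0,1))| ≤ C_{k,ℓ} μ^(−1+k) (1+x)^ℓ e^(−γx) for all λ ∈ ℝ and all x ≥ x₁ (so in particular f̃₄(x,λ) = e^(μx)(0,1) + O((1+|λ|)^(−1) e^((μ−γ)x)) as x → ∞); and (iii) the same bounds hold for all x ≥ 0 whenever |λ| ≥ λ₁. -/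
noncomputable section

open Real MeasureTheory

/-- The matrix Schrödinger operator `ℋ` acting on `f = (f₁, f₂) : ℝ → ℂ²`:
`ℋf = (−f₁'' + f₁ + V₁f₁ + V₂f₂, f₂'' − f₂ − V₂f₁ − V₁f₂)`. -/
def matH (V₁ V₂ : ℝ → ℝ) (f : ℝ → ℂ × ℂ) (x : ℝ) : ℂ × ℂ :=
  (-(iteratedDeriv 2 (fun y => (f y).1) x) + (f x).1
      + (V₁ x : ℂ) * (f x).1 + (V₂ x : ℂ) * (f x).2,
    iteratedDeriv 2 (fun y => (f y).2) x - (f x).2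
      - (V₂ x : ℂ) * (f x).1 - (V₁ x : ℂ) * (f x).2)

/-- `f` is a (classical, twice continuously differentiable) solution of `ℋf = z f`. -/
def IsSolution (V₁ V₂ : ℝ → ℝ) (z : ℂ) (f : ℝ → ℂ × ℂ) : Prop :=
  ContDiff ℝ 2 f ∧ ∀ x : ℝ, matH V₁ V₂ f x = z • f x

/-- The potentials `V₁, V₂` are smooth, even, and exponentially decaying with rate `γ ∈ (0,1)`,
together with all derivatives. -/
def PotentialHyp (γ : ℝ) (V₁ V₂ : ℝ → ℝ) : Prop :=
  0 < γ ∧ γ < 1 ∧ ContDiff ℝ (⊤ : ℕ∞) V₁ ∧ ContDiff ℝ (⊤ : ℕ∞) V₂ ∧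
    (∀ x, V₁ (-x) = V₁ x) ∧ (∀ x, V₂ (-x) = V₂ x) ∧
    ∀ k : ℕ, ∃ C : ℝ, ∀ x : ℝ,
      |iteratedDeriv k V₁ x| + |iteratedDeriv k V₂ x| ≤ C * Real.exp (-γ * |x|)

/-- `μ(λ) = √(λ² + 2)`. -/
def mu (lam : ℝ) : ℝ := Real.sqrt (lam ^ 2 + 2)

/-!
Write `f̃₄ = exp (μ x) (W + (0, 1))`. For `W = (W₁, W₂)` the equation becomes the system
`(∂ + μ + iλ)(∂ + μ - iλ) W₁ = V₁ W₁ + V₂ W₂ + V₂`, `∂ (∂ + 2μ) W₂ = V₂ W₁ + V₁ W₂ + V₁`.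
On functions decaying like `exp (-γ x)`, with `0 < γ < √2 ≤ μ`, every first order factor is
invertible with a bounded inverse, and these inverses are symbols in `λ`: this needs nothing but the
resolvent identity. The product of the inverses is `O(1/μ)`, so the potential is a small
perturbation except where `|λ|` and `x` are both bounded above. Cutting this region of phase space
out of the potential, the system is solved by a Neumann series. The source that restores the
missing part decays faster than any exponential as `x → ∞` and is compactly supported in `λ`, so the
corresponding correction is obtained by a second Neumann series in a weight `exp (-c x)` with `c`
large.
-/

namespace MatrixSchrodinger

open Filter Topology Asymptotics Set
open scoped BoundedContinuousFunction ContDiff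

section Mu

lemma mu_sq (t : ℝ) : mu t ^ 2 = t ^ 2 + 2 := Real.sq_sqrt (by positivity)

lemma sqrt_two_le_mu (t : ℝ) : √2 ≤ mu t := Real.sqrt_le_sqrt (by nlinarith [sq_nonneg t])

lemma mu_pos (t : ℝ) : 0 < mu t := (Real.sqrt_pos.2 zero_lt_two).trans_le (sqrt_two_le_mu t)

lemma one_le_mu (t : ℝ) : 1 ≤ mu t :=
  (Real.one_le_sqrt.2 one_le_two).trans (sqrt_two_le_mu t)

lemma abs_le_mu (t : ℝ) : |t| ≤ mu t := Real.abs_le_sqrt (by linarith)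

lemma contDiff_mu {n : WithTop ℕ∞} : ContDiff ℝ n mu :=
  ContDiff.sqrt (by fun_prop) fun t => by positivity

lemma hasDerivAt_mu (t : ℝ) : HasDerivAt mu (t * (mu t)⁻¹) t := by
  have h : HasDerivAt (fun s : ℝ => s ^ 2 + 2) (2 * t) t := by
    simpa using (hasDerivAt_pow 2 t).add_const (2 : ℝ)
  refine (h.sqrt (by positivity)).congr_deriv ?_
  rw [mul_div_mul_left _ _ two_ne_zero, div_eq_mul_inv, mu]

lemma continuous_mu_zpow (m : ℤ) : Continuous fun t => mu t ^ m :=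
  (contDiff_mu (n := 0)).continuous.zpow₀ m fun t => Or.inl (mu_pos t).ne'

lemma mu_zpow_isBigO {m m' : ℤ} (h : m ≤ m') :
    (fun t => mu t ^ m) =O[⊤] fun t => mu t ^ m' :=
  isBigO_of_le _ fun t => by
    simpa only [norm_zpow, Real.norm_of_nonneg (mu_pos t).le]
      using zpow_le_zpow_right₀ (one_le_mu t) h

end Mu

section Symbol

variable {E F G : Type*} [NormedAddCommGroup E] [NormedSpace ℝ E]
  [NormedAddCommGroup F] [NormedSpace ℝ F] [NormedAddCommGroup G] [NormedSpace ℝ G]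
  {w w' : ℝ → ℝ} {n : ℕ∞}

/-- `f` is a symbol with weight `w` and smoothness `n`: it is of class `C^n`, and its derivatives
up to order `n` are all bounded by multiples of the same weight `w`, uniformly on the line.
Powers of `mu` serve as weights in the spectral parameter, decaying exponentials in the space
variable. -/
def IsSymbol (w : ℝ → ℝ) (n : ℕ∞) (f : ℝ → E) : Prop :=
  ContDiff ℝ n f ∧ ∀ l : ℕ, (l : ℕ∞) ≤ n → iteratedDeriv l f =O[⊤] w

namespace IsSymbol

lemma isBigO {f : ℝ → E} (hf : IsSymbol w n f) : f =O[⊤] w := by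
  simpa using hf.2 0 zero_le

lemma contDiff {f : ℝ → E} (hf : IsSymbol w ⊤ f) : ContDiff ℝ ∞ f := hf.1

lemma hasDerivAt {f : ℝ → E} (hf : IsSymbol w ⊤ f) (t : ℝ) : HasDerivAt f (deriv f t) t :=
  (hf.contDiff.differentiable (by simp) t).hasDerivAt

lemma iff_forall_nat {f : ℝ → E} : IsSymbol w ⊤ f ↔ ∀ n : ℕ, IsSymbol w n f :=
  ⟨fun h _ => ⟨h.1.of_le (mod_cast le_top), fun l _ => h.2 l le_top⟩,
    fun h => ⟨contDiff_infty.2 fun n => (h n).1, fun l _ => (h l).2 l le_rfl⟩⟩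

lemma trans_isBigO {f : ℝ → E} (hf : IsSymbol w n f) (hw : w =O[⊤] w') : IsSymbol w' n f :=
  ⟨hf.1, fun l hl => (hf.2 l hl).trans hw⟩

lemma of_continuous {f : ℝ → E} (hf : Continuous f) (hb : f =O[⊤] w) : IsSymbol w 0 f :=
  ⟨contDiff_zero.2 hf, fun l hl => by
    obtain rfl : l = 0 := by simpa using hl
    simpa using hb⟩

lemma of_hasDerivAt {f f' : ℝ → E} (hb : f =O[⊤] w) (hd : ∀ t, HasDerivAt f (f' t) t)
    (hf' : IsSymbol w n f') : IsSymbol w (n + 1) f := by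
  have hderiv : deriv f = f' := funext fun t => (hd t).deriv
  refine ⟨?_, fun l hl => ?_⟩
  · push_cast
    exact contDiff_succ_iff_deriv.2 ⟨fun t => (hd t).differentiableAt, by simp, hderiv ▸ hf'.1⟩
  · rcases l with _ | l
    · simpa using hb
    · rw [iteratedDeriv_succ', hderiv]
      exact hf'.2 l (by simpa using hl)

lemma deriv {f : ℝ → E} (hf : IsSymbol w ⊤ f) : IsSymbol w ⊤ (deriv f) :=
  ⟨(contDiff_infty_iff_deriv.1 hf.1).2, fun l _ => by
    simpa only [iteratedDeriv_succ'] using hf.2 (l + 1) le_top⟩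

lemma add {f g : ℝ → E} (hf : IsSymbol w n f) (hg : IsSymbol w n g) :
    IsSymbol w n fun t => f t + g t := by
  refine ⟨hf.1.add hg.1, fun l hl => ((hf.2 l hl).add (hg.2 l hl)).congr_left fun t => ?_⟩
  rw [iteratedDeriv_fun_add (hf.1.contDiffAt.of_le (mod_cast hl))
    (hg.1.contDiffAt.of_le (mod_cast hl))]

lemma zero : IsSymbol w n fun _ => (0 : E) :=
  ⟨contDiff_const, fun l _ => by
    simpa [iteratedDeriv_const] using isBigO_zero (E' := E) w ⊤⟩

lemma sum {ι : Type*} (s : Finset ι) {f : ι → ℝ → E} (hf : ∀ i ∈ s, IsSymbol w n (f i)) :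
    IsSymbol w n fun t => ∑ i ∈ s, f i t := by
  classical
  induction s using Finset.induction_on with
  | empty => simpa using zero
  | insert i s hi ih =>
    simp only [Finset.sum_insert hi]
    exact (hf i (by simp)).add (ih fun j hj => hf j (by simp [hj]))

lemma const (e : E) : IsSymbol (fun _ => 1) n fun _ => e :=
  ⟨contDiff_const, fun l _ => isBigO_of_le' (c := ‖e‖) _ fun t => by
    rw [iteratedDeriv_const]
    split_ifs <;> simp⟩

lemma bilin (B : E →L[ℝ] F →L[ℝ] G) {f : ℝ → E} {g : ℝ → F} (hf : IsSymbol w n f)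
    (hg : IsSymbol w' n g) : IsSymbol (fun t => w t * w' t) n fun t => B (f t) (g t) := by
  refine ⟨B.isBoundedBilinearMap.contDiff.comp (hf.1.prodMk hg.1), fun l hl => ?_⟩
  have leibniz : iteratedDeriv l (fun t => B (f t) (g t)) =O[⊤] fun t =>
      ∑ i ∈ Finset.range (l + 1),
        (l.choose i : ℝ) * ‖iteratedDeriv i f t‖ * ‖iteratedDeriv (l - i) g t‖ :=
    isBigO_of_le' (c := ‖B‖) _ fun t => by
      rw [Real.norm_of_nonneg (by positivity)]
      simpa only [norm_iteratedFDeriv_eq_norm_iteratedDeriv] using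
        B.norm_iteratedFDeriv_le_of_bilinear hf.1 hg.1 t (n := l) (mod_cast hl)
  refine leibniz.trans (IsBigO.fun_sum fun i hi => ?_)
  have hi : i ≤ l := Finset.mem_range_succ_iff.1 hi
  have hfi := hf.2 i (le_trans (mod_cast hi) hl)
  have hgi := hg.2 (l - i) (le_trans (mod_cast l.sub_le i) hl)
  exact (hfi.norm_left.const_mul_left _).mul hgi.norm_left

lemma clm (L : E →L[ℝ] F) {f : ℝ → E} (hf : IsSymbol w n f) : IsSymbol w n fun t => L (f t) := by
  simpa using (const L).bilin (ContinuousLinearMap.id ℝ (E →L[ℝ] F)) hf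

lemma neg {f : ℝ → E} (hf : IsSymbol w n f) : IsSymbol w n fun t => -f t :=
  hf.clm (-ContinuousLinearMap.id ℝ E)

lemma mul {A : Type*} [NormedRing A] [NormedAlgebra ℝ A] {f g : ℝ → A} (hf : IsSymbol w n f)
    (hg : IsSymbol w' n g) : IsSymbol (fun t => w t * w' t) n fun t => f t * g t :=
  hf.bilin (ContinuousLinearMap.mul ℝ A) hg

lemma pi {ι : Type*} [Fintype ι] {f : ι → ℝ → E} (hf : ∀ i, IsSymbol w n (f i)) :
    IsSymbol w n fun t i => f i t := by
  classical
  have h := sum Finset.univ fun i _ => (hf i).clm (ContinuousLinearMap.single ℝ (fun _ : ι => E) i)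
  convert h using 2 with t
  exact (Finset.univ_sum_single fun i => f i t).symm

lemma of_hasCompactSupport {f : ℝ → E} (hf : ContDiff ℝ ∞ f) (hs : HasCompactSupport f)
    (hw : Continuous w) (hw0 : ∀ t, w t ≠ 0) : IsSymbol w ⊤ f := by
  refine ⟨hf, fun l _ => ?_⟩
  have hcont : Continuous fun t => ‖iteratedFDeriv ℝ l f t‖ * (w t)⁻¹ :=
    (hf.continuous_iteratedFDeriv (m := l) (mod_cast le_top)).norm.mul (hw.inv₀ hw0)
  obtain ⟨C, hC⟩ :=
    (hs.iteratedFDeriv (𝕜 := ℝ) l).norm.mul_right.exists_bound_of_continuous hcont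
  refine IsBigO.of_bound C (Eventually.of_forall fun t => ?_)
  rw [← norm_iteratedFDeriv_eq_norm_iteratedDeriv, ← div_le_iff₀ (norm_pos_iff.2 (hw0 t))]
  simpa [div_eq_mul_inv] using hC t

end IsSymbol

section ResolventIdentity

variable {A : Type*} [NormedRing A] [NormedAlgebra ℝ A] {f g : ℝ → A}

lemma hasDerivAt_of_resolvent_identity (hf : ∀ t, f =O[𝓝 t] fun _ => (1 : ℝ))
    (hfg : ∀ s t, f s - f t = f s * (g s - g t) * f t) {g' : A} {t : ℝ}
    (hg : HasDerivAt g g' t) : HasDerivAt f (f t * g' * f t) t := by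
  have hcont : Tendsto f (𝓝 t) (𝓝 (f t)) := by
    have hg0 : (fun s => g s - g t) =o[𝓝 t] fun _ => (1 : ℝ) :=
      (isLittleO_one_iff ℝ).2 (by simpa using hg.continuousAt.tendsto.sub_const (g t))
    have hf0 : (fun s => f s - f t) =o[𝓝 t] fun _ => (1 : ℝ) := by
      simpa only [hfg, mul_one] using
        ((hf t).mul_isLittleO hg0).mul_isBigO (isBigO_const_const (f t) one_ne_zero (𝓝 t))
    simpa using ((isLittleO_one_iff ℝ).1 hf0).add_const (f t)
  rw [hasDerivAt_iff_tendsto_slope] at hg ⊢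
  refine (((hcont.mono_left nhdsWithin_le_nhds).mul hg).mul_const (f t)).congr fun s => ?_
  simp [slope, hfg s t]

lemma IsSymbol.of_resolvent_identity (hw : Continuous w) (hf : f =O[⊤] w)
    (hfg : ∀ s t, f s - f t = f s * (g s - g t) * f t) (hg : ∀ t, HasDerivAt g (_root_.deriv g t) t)
    (hg' : IsSymbol w' ⊤ (_root_.deriv g)) (hww' : (fun t => w t * w' t * w t) =O[⊤] w) :
    IsSymbol w ⊤ f := by
  have hloc (t : ℝ) : f =O[𝓝 t] fun _ => (1 : ℝ) :=
    (hf.mono le_top).trans ((hw.tendsto t).isBigO_one ℝ)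
  have hder (t : ℝ) : HasDerivAt f (f t * _root_.deriv g t * f t) t :=
    hasDerivAt_of_resolvent_identity hloc hfg (hg t)
  rw [iff_forall_nat]
  intro n
  induction n with
  | zero => exact of_continuous (continuous_iff_continuousAt.2 fun t => (hder t).continuousAt) hf
  | succ n ih =>
    exact of_hasDerivAt hf hder
      (((ih.mul (iff_forall_nat.1 hg' n)).mul ih).trans_isBigO hww')

end ResolventIdentity

end Symbol

section Order

variable {E F G : Type*} [NormedAddCommGroup E] [NormedSpace ℝ E]
  [NormedAddCommGroup F] [NormedSpace ℝ F] [NormedAddCommGroup G] [NormedSpace ℝ G] {m m' : ℤ}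

/-- Symbols of order `m` in the spectral parameter: smooth families all of whose derivatives are
`O(mu ^ m)`. -/
abbrev HasOrder (m : ℤ) (f : ℝ → E) : Prop := IsSymbol (fun t => mu t ^ m) ⊤ f

namespace HasOrder

lemma mono {f : ℝ → E} (hf : HasOrder m f) (h : m ≤ m') : HasOrder m' f :=
  hf.trans_isBigO (mu_zpow_isBigO h)

lemma const (e : E) : HasOrder 0 fun _ => e := by
  simpa only [HasOrder, zpow_zero] using IsSymbol.const e

lemma bilin (B : E →L[ℝ] F →L[ℝ] G) {f : ℝ → E} {g : ℝ → F} (hf : HasOrder m f)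
    (hg : HasOrder m' g) : HasOrder (m + m') fun t => B (f t) (g t) := by
  simpa only [HasOrder, zpow_add₀ (mu_pos _).ne'] using IsSymbol.bilin B hf hg

lemma mul {A : Type*} [NormedRing A] [NormedAlgebra ℝ A] {f g : ℝ → A} (hf : HasOrder m f)
    (hg : HasOrder m' g) : HasOrder (m + m') fun t => f t * g t :=
  hf.bilin (ContinuousLinearMap.mul ℝ A) hg

lemma clm_apply {L : ℝ → E →L[ℝ] F} {f : ℝ → E} (hL : HasOrder m L) (hf : HasOrder m' f) :
    HasOrder (m + m') fun t => L t (f t) :=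
  hL.bilin (ContinuousLinearMap.id ℝ (E →L[ℝ] F)) hf

lemma of_hasCompactSupport {f : ℝ → E} (hf : ContDiff ℝ ∞ f) (hs : HasCompactSupport f) :
    HasOrder m f :=
  IsSymbol.of_hasCompactSupport hf hs (continuous_mu_zpow m) fun t => (zpow_pos (mu_pos t) m).ne'

lemma id : HasOrder 1 fun t : ℝ => t := by
  have hb : (fun t : ℝ => t) =O[⊤] fun t => mu t ^ (1 : ℤ) :=
    isBigO_of_le _ fun t => by simpa using (abs_le_mu t).trans (le_abs_self _)
  simpa [HasOrder] using IsSymbol.of_hasDerivAt hb hasDerivAt_id ((const (1 : ℝ)).mono zero_le_one)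

lemma mu_inv : HasOrder (-1) fun t => (mu t)⁻¹ := by
  have hb : (fun t => (mu t)⁻¹) =O[⊤] fun t => mu t ^ (-1 : ℤ) :=
    isBigO_of_le _ fun t => by simp
  have hder (t : ℝ) :
      HasDerivAt (fun t => (mu t)⁻¹) (-(t * (mu t)⁻¹ * (mu t)⁻¹ * (mu t)⁻¹)) t := by
    refine ((hasDerivAt_mu t).inv (mu_pos t).ne').congr_deriv ?_
    rw [div_eq_mul_inv, pow_two, mul_inv]
    ring
  rw [HasOrder, IsSymbol.iff_forall_nat]
  intro n
  induction n with
  | zero =>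
    exact .of_continuous (contDiff_mu (n := 0).continuous.inv₀ fun t => (mu_pos t).ne') hb
  | succ n ih =>
    have hw : (fun t => mu t ^ (1 : ℤ) * mu t ^ (-1 : ℤ) * mu t ^ (-1 : ℤ) * mu t ^ (-1 : ℤ))
        =O[⊤] fun t => mu t ^ (-1 : ℤ) := by
      simpa only [← zpow_add₀ (mu_pos _).ne'] using mu_zpow_isBigO (by norm_num)
    exact .of_hasDerivAt hb hder
      ((((IsSymbol.iff_forall_nat.1 id n).mul ih).mul ih).mul ih |>.trans_isBigO hw).neg

protected lemma mu : HasOrder 1 mu := by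
  have h : HasOrder 1 fun t : ℝ => t * t * (mu t)⁻¹ + 2 * (mu t)⁻¹ :=
    ((id.mul id).mul mu_inv).add (((const (2 : ℝ)).mul mu_inv).mono (by norm_num))
  refine (funext fun t => ?_ : (fun t : ℝ => t * t * (mu t)⁻¹ + 2 * (mu t)⁻¹) = mu) ▸ h
  rw [← add_mul, ← pow_two, ← mu_sq, pow_two, mul_inv_cancel_right₀ (mu_pos t).ne']

end HasOrder

section Neumann

variable {A : Type*} [NormedRing A] [CompleteSpace A]

lemma norm_inverse_one_sub_le {T : A} {r : ℝ} (hr : r < 1) (hT : ‖T‖ ≤ r) :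
    ‖Ring.inverse (1 - T)‖ ≤ ‖(1 : A)‖ / (1 - r) := by
  set I := Ring.inverse (1 - T)
  have hI : I = 1 + T * I := by
    have := Ring.mul_inverse_cancel _ (isUnit_one_sub_of_norm_lt_one (hT.trans_lt hr))
    rwa [sub_mul, one_mul, sub_eq_iff_eq_add] at this
  have hle : ‖I‖ ≤ ‖(1 : A)‖ + r * ‖I‖ :=
    calc ‖I‖ = ‖1 + T * I‖ := congrArg norm hI
      _ ≤ ‖(1 : A)‖ + ‖T‖ * ‖I‖ := (norm_add_le _ _).trans (by gcongr; exact norm_mul_le _ _)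
      _ ≤ ‖(1 : A)‖ + r * ‖I‖ := by gcongr
  rw [le_div_iff₀ (by linarith)]
  linarith

lemma HasOrder.inverse_one_sub [NormedAlgebra ℝ A] {T : ℝ → A} {r : ℝ} (hT : HasOrder 0 T)
    (hr : r < 1) (hTr : ∀ t, ‖T t‖ ≤ r) : HasOrder 0 fun t => Ring.inverse (1 - T t) := by
  have hu (t : ℝ) : IsUnit (1 - T t) := isUnit_one_sub_of_norm_lt_one ((hTr t).trans_lt hr)
  have hb : (fun t => Ring.inverse (1 - T t)) =O[⊤] fun t => mu t ^ (0 : ℤ) :=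
    isBigO_of_le' (c := ‖(1 : A)‖ / (1 - r)) _ fun t => by
      simpa using norm_inverse_one_sub_le hr (hTr t)
  refine .of_resolvent_identity (g := T) (continuous_mu_zpow 0) hb (fun s t => ?_) hT.hasDerivAt
    hT.deriv (by simpa using isBigO_refl (fun _ : ℝ => (1 : ℝ)) ⊤)
  have hst : T s - T t = (1 - T t) - (1 - T s) := by abel
  rw [hst, mul_sub, sub_mul, mul_assoc, Ring.mul_inverse_cancel _ (hu t),
    Ring.inverse_mul_cancel _ (hu s), mul_one, one_mul]

end Neumann

lemma HasOrder.exists_fixedPoint [CompleteSpace E] {T : ℝ → E →L[ℝ] E} {b : ℝ → E} {r : ℝ}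
    (hT : HasOrder 0 T) (hr : r < 1) (hTr : ∀ t, ‖T t‖ ≤ r) (hb : HasOrder m b) :
    ∃ u : ℝ → E, HasOrder m u ∧ ∀ t, u t = T t (u t) + b t := by
  refine ⟨fun t => Ring.inverse (1 - T t) (b t), ?_, fun t => ?_⟩
  · simpa using (hT.inverse_one_sub hr hTr).clm_apply hb
  · have hu := isUnit_one_sub_of_norm_lt_one ((hTr t).trans_lt hr)
    rw [← sub_eq_iff_eq_add']
    exact congrArg (fun L : E →L[ℝ] E => L (b t)) (Ring.mul_inverse_cancel _ hu)

end Order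

section Resolvent

variable {a b : ℂ}

/-- The solution `y x = ∫ s in (-∞, x], exp (-a (x - s)) g s` of `y' + a y = g`, bounded when
`0 < re a`. -/
def expConv (a : ℂ) (g : ℝ →ᵇ ℂ) (x : ℝ) : ℂ :=
  Complex.exp (-a * x) * ∫ s in Iic x, Complex.exp (a * s) * g s

lemma norm_cexp_mul_ofReal (a : ℂ) (x : ℝ) : ‖Complex.exp (a * x)‖ = Real.exp (a.re * x) := by
  simp [Complex.norm_exp]

lemma hasDerivAt_cexp_mul_ofReal (a : ℂ) (x : ℝ) :
    HasDerivAt (fun s : ℝ => Complex.exp (a * s)) (Complex.exp (a * x) * a) x := by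
  have h : HasDerivAt (fun s : ℝ => a * (s : ℂ)) a x := by
    simpa using (Complex.ofRealCLM.hasDerivAt (x := x)).const_mul a
  exact h.cexp

lemma integrableOn_cexp_mul_Iic (ha : 0 < a.re) (g : ℝ →ᵇ ℂ) (x : ℝ) :
    IntegrableOn (fun s : ℝ => Complex.exp (a * s) * g s) (Iic x) :=
  Integrable.mul_bdd (c := ‖g‖) (integrableOn_exp_mul_complex_Iic ha x)
    g.continuous.aestronglyMeasurable (ae_of_all _ g.norm_coe_le_norm)

lemma hasDerivAt_expConv (ha : 0 < a.re) (g : ℝ →ᵇ ℂ) (x : ℝ) :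
    HasDerivAt (expConv a g) (g x - a * expConv a g x) x := by
  have hcont : Continuous fun s : ℝ => Complex.exp (a * s) * g s := by
    have := g.continuous
    fun_prop
  have hsplit (y : ℝ) : ∫ s in Iic y, Complex.exp (a * s) * g s
      = (∫ s in Iic (0 : ℝ), Complex.exp (a * s) * g s)
        + ∫ s in (0 : ℝ)..y, Complex.exp (a * s) * g s := by
    rw [← intervalIntegral.integral_Iic_sub_Iic (integrableOn_cexp_mul_Iic ha g 0)
      (integrableOn_cexp_mul_Iic ha g y), add_sub_cancel]
  have hint : HasDerivAt (fun y : ℝ => ∫ s in Iic y, Complex.exp (a * s) * g s)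
      (Complex.exp (a * x) * g x) x := by
    rw [funext hsplit]
    exact (intervalIntegral.integral_hasDerivAt_right (hcont.intervalIntegrable _ _)
      (hcont.stronglyMeasurableAtFilter _ _) hcont.continuousAt).const_add _
  refine ((hasDerivAt_cexp_mul_ofReal (-a) x).mul hint).congr_deriv ?_
  have hexp : Complex.exp (-a * x) * Complex.exp (a * x) = 1 := by
    rw [← Complex.exp_add]
    simp
  unfold expConv
  linear_combination g x * hexp

lemma norm_expConv_le (ha : 0 < a.re) (g : ℝ →ᵇ ℂ) (x : ℝ) : ‖expConv a g x‖ ≤ a.re⁻¹ * ‖g‖ := by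
  have hint : ‖∫ s in Iic x, Complex.exp (a * s) * g s‖ ≤ ∫ s in Iic x, Real.exp (a.re * s) * ‖g‖ :=
    norm_integral_le_of_norm_le ((integrableOn_exp_mul_Iic ha x).mul_const _)
      (ae_of_all _ fun s => by
        rw [norm_mul, norm_cexp_mul_ofReal]
        gcongr
        exact g.norm_coe_le_norm s)
  rw [integral_mul_const, integral_exp_mul_Iic ha] at hint
  calc ‖expConv a g x‖
      ≤ Real.exp (-a.re * x) * (Real.exp (a.re * x) / a.re * ‖g‖) := by
        rw [expConv, norm_mul, norm_cexp_mul_ofReal, Complex.neg_re]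
        gcongr
    _ = Real.exp (-a.re * x) * Real.exp (a.re * x) * a.re⁻¹ * ‖g‖ := by ring
    _ = a.re⁻¹ * ‖g‖ := by rw [← Real.exp_add]; simp

lemma eq_zero_of_hasDerivAt_neg_mul (ha : a.re ≠ 0) (y : ℝ →ᵇ ℂ)
    (hy : ∀ x, HasDerivAt y (-a * y x) x) : y = 0 := by
  have hder (x : ℝ) : HasDerivAt (fun s : ℝ => Complex.exp (a * s) * y s) 0 x :=
    ((hasDerivAt_cexp_mul_ofReal a x).mul (hy x)).congr_deriv (by ring)
  have hconst (s t : ℝ) : Complex.exp (a * s) * y s = Complex.exp (a * t) * y t :=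
    is_const_of_deriv_eq_zero (fun x => (hder x).differentiableAt) (fun x => (hder x).deriv) s t
  have hle (x r : ℝ) : ‖Complex.exp (a * x) * y x‖ ≤ Real.exp r * ‖y‖ := by
    rw [hconst x (r / a.re), norm_mul, norm_cexp_mul_ofReal, mul_div_cancel₀ r ha]
    gcongr
    exact y.norm_coe_le_norm _
  ext x
  have hlim : Tendsto (fun r => Real.exp r * ‖y‖) atBot (𝓝 0) := by
    simpa using Real.tendsto_exp_atBot.mul_const ‖y‖
  have hzero : Complex.exp (a * x) * y x = 0 := norm_le_zero_iff.1 (ge_of_tendsto' hlim (hle x))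
  exact (mul_eq_zero.1 hzero).resolve_left (Complex.exp_ne_zero _)

/-- Convolution with `exp (-a x)` on the half-line `0 ≤ x`, as a bounded operator; this is
`(d/dx + a)⁻¹` for `0 < re a`. -/
def expConvCLM (a : ℂ) (ha : 0 < a.re) : (ℝ →ᵇ ℂ) →L[ℝ] (ℝ →ᵇ ℂ) :=
  LinearMap.mkContinuous
    { toFun g := BoundedContinuousFunction.ofNormedAddCommGroup (expConv a g)
        (continuous_iff_continuousAt.2 fun x => (hasDerivAt_expConv ha g x).continuousAt)
        (a.re⁻¹ * ‖g‖) (norm_expConv_le ha g)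
      map_add' f g := by
        ext x
        simp only [BoundedContinuousFunction.coe_ofNormedAddCommGroup,
          BoundedContinuousFunction.coe_add, Pi.add_apply, expConv, ← mul_add,
          ← integral_add (integrableOn_cexp_mul_Iic ha f x) (integrableOn_cexp_mul_Iic ha g x)]
      map_smul' c g := by
        ext x
        simp only [BoundedContinuousFunction.coe_ofNormedAddCommGroup,
          BoundedContinuousFunction.coe_smul, expConv, RingHom.id_apply, mul_smul_comm,
          integral_smul] }
    a.re⁻¹
    fun g => BoundedContinuousFunction.norm_ofNormedAddCommGroup_le _ (by positivity)
      (norm_expConv_le ha g)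

/-- Precomposition with `x ↦ -x`. -/
def reflect : (ℝ →ᵇ ℂ) →L[ℝ] (ℝ →ᵇ ℂ) :=
  LinearMap.mkContinuous
    { toFun g := g.compContinuous ⟨fun x => -x, continuous_neg⟩
      map_add' _ _ := rfl
      map_smul' _ _ := rfl } 1
    fun g => (g.norm_compContinuous_le _).trans_eq (one_mul _).symm

lemma reflect_apply (g : ℝ →ᵇ ℂ) (x : ℝ) : reflect g x = g (-x) := rfl

lemma norm_reflect_le : ‖reflect‖ ≤ 1 := LinearMap.mkContinuous_norm_le _ zero_le_one _

/-- The operator `(d/dx + a)⁻¹` on bounded continuous functions, for `re a ≠ 0`. On the imaginary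
axis, where `d/dx + a` is not invertible, it is the junk value `0`. -/
def derivResolvent (a : ℂ) : (ℝ →ᵇ ℂ) →L[ℝ] (ℝ →ᵇ ℂ) :=
  if ha : 0 < a.re then expConvCLM a ha
  else if ha : 0 < (-a).re then -(reflect * expConvCLM (-a) ha * reflect)
  else 0

lemma norm_derivResolvent_le (a : ℂ) : ‖derivResolvent a‖ ≤ |a.re|⁻¹ := by
  have hpos (b : ℂ) (hb : 0 < b.re) : ‖expConvCLM b hb‖ ≤ b.re⁻¹ :=
    LinearMap.mkContinuous_norm_le _ (by positivity) _
  unfold derivResolvent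
  split_ifs with ha ha'
  · rw [abs_of_pos ha]
    exact hpos a ha
  · rw [norm_neg, ← abs_neg, ← Complex.neg_re, abs_of_pos ha']
    calc ‖reflect * expConvCLM (-a) ha' * reflect‖
        ≤ ‖reflect‖ * ‖expConvCLM (-a) ha'‖ * ‖reflect‖ :=
          (norm_mul_le _ _).trans (by gcongr; exact norm_mul_le _ _)
      _ ≤ 1 * (-a).re⁻¹ * 1 := by
          gcongr
          exacts [norm_reflect_le, hpos _ _, norm_reflect_le]
      _ = (-a).re⁻¹ := by ring
  · simp

lemma hasDerivAt_derivResolvent (ha : a.re ≠ 0) (g : ℝ →ᵇ ℂ) (x : ℝ) :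
    HasDerivAt (derivResolvent a g) (g x - a * derivResolvent a g x) x := by
  rcases ha.lt_or_gt with hneg | hpos
  · have hneg' : 0 < (-a).re := by simpa using hneg
    have h := ((hasDerivAt_expConv hneg' (reflect g) (-x)).scomp x (hasDerivAt_neg x)).neg
    rw [derivResolvent, dif_neg hneg.not_gt, dif_pos hneg']
    refine h.congr_deriv ?_
    simp [mul_apply_eq_comp, reflect_apply, expConvCLM, add_comm]
  · rw [derivResolvent, dif_pos hpos]
    exact hasDerivAt_expConv hpos g x

lemma derivResolvent_sub (ha : a.re ≠ 0) (hb : b.re ≠ 0) :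
    derivResolvent a - derivResolvent b
      = derivResolvent a * ContinuousLinearMap.lsmul ℝ ℂ (b - a) * derivResolvent b := by
  ext1 g
  refine sub_eq_zero.1 (eq_zero_of_hasDerivAt_neg_mul ha _ fun x => ?_)
  refine (((hasDerivAt_derivResolvent ha g x).sub (hasDerivAt_derivResolvent hb g x)).sub
    (hasDerivAt_derivResolvent ha ((b - a) • derivResolvent b g) x)).congr_deriv ?_
  simp only [mul_apply_eq_comp, sub_apply, ContinuousLinearMap.lsmul_apply,
    BoundedContinuousFunction.coe_sub, Pi.sub_apply, BoundedContinuousFunction.coe_smul,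
    smul_eq_mul]
  ring

/-- Ellipticity of order `k` of the family of operators `d/dx + a t - c`: besides being a symbol of
order `k`, `a t` stays away from the line `re = c` by at least a multiple of `mu t ^ k`. -/
structure IsElliptic (c : ℝ) (k : ℤ) (a : ℝ → ℂ) : Prop where
  hasOrder : HasOrder k a
  re_ne : ∀ t, (a t).re ≠ c
  inv_isBigO : (fun t => ((a t).re - c)⁻¹) =O[⊤] fun t => mu t ^ (-k)

lemma IsElliptic.hasOrder_derivResolvent {c : ℝ} {k : ℤ} {a : ℝ → ℂ} (ha : IsElliptic c k a) :
    HasOrder (-k) fun t => derivResolvent (a t - c) := by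
  have hre (t : ℝ) : (a t - c : ℂ).re ≠ 0 := by simpa [sub_ne_zero] using ha.re_ne t
  have hb : (fun t => derivResolvent (a t - c)) =O[⊤] fun t => mu t ^ (-k) :=
    (isBigO_of_le _ fun t => by simpa using norm_derivResolvent_le (a t - c)).trans ha.inv_isBigO
  have hg : HasOrder k fun t => ContinuousLinearMap.lsmul ℝ ℂ (E := ℝ →ᵇ ℂ) (-a t) :=
    ha.hasOrder.neg.clm (ContinuousLinearMap.lsmul ℝ ℂ (E := ℝ →ᵇ ℂ))
  refine .of_resolvent_identity (continuous_mu_zpow (-k)) hb (fun s t => ?_) hg.hasDerivAt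
    hg.deriv ?_
  · rw [derivResolvent_sub (hre s) (hre t), ← map_sub]
    congr 3
    ring
  · simpa only [← zpow_add₀ (mu_pos _).ne'] using mu_zpow_isBigO (by omega)

end Resolvent

section Weighted

variable {c d : ℝ} {n : ℕ} {m m' : ℤ}

/-- The function `exp (-c x) h x` with bounded part `h`. -/
def weighted (c : ℝ) (h : ℝ →ᵇ ℂ) (x : ℝ) : ℂ := Real.exp (-c * x) * h x

/-- The relation `(weighted c h)' = weighted c h'`, written in terms of the bounded parts. -/
def HasWeightedDeriv (c : ℝ) (h h' : ℝ →ᵇ ℂ) : Prop := ∀ x, HasDerivAt h (h' x + c * h x) x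

/-- The family of functions `weighted c (h t)` is a symbol of order `m` in the parameter `t`, and
`n` derivatives in the space variable are available, each of which raises the order by one. -/
def IsWeightedSymbol (c : ℝ) : ℕ → ℤ → (ℝ → ℝ →ᵇ ℂ) → Prop
  | 0, m, h => HasOrder m h
  | n + 1, m, h =>
    HasOrder m h ∧ ∃ h', (∀ t, HasWeightedDeriv c (h t) (h' t)) ∧ IsWeightedSymbol c n (m + 1) h'

lemma weighted_add (c : ℝ) (f g : ℝ →ᵇ ℂ) (x : ℝ) :
    weighted c (f + g) x = weighted c f x + weighted c g x := mul_add _ _ _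

lemma weighted_smul (c : ℝ) (a : ℂ) (f : ℝ →ᵇ ℂ) (x : ℝ) :
    weighted c (a • f) x = a * weighted c f x := mul_left_comm _ _ _

lemma norm_weighted_le (c : ℝ) (h : ℝ →ᵇ ℂ) (x : ℝ) :
    ‖weighted c h x‖ ≤ ‖h‖ * Real.exp (-c * x) := by
  rw [weighted, norm_mul, Complex.norm_of_nonneg (Real.exp_pos _).le, mul_comm]
  gcongr
  exact h.norm_coe_le_norm x

/-- Evaluation of `weighted c h` at a point, as a continuous linear map of `h`. -/
def weightedEval (c x : ℝ) : (ℝ →ᵇ ℂ) →L[ℝ] ℂ :=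
  Real.exp (-c * x) • BoundedContinuousFunction.evalCLM ℝ x

lemma weightedEval_apply (c x : ℝ) (h : ℝ →ᵇ ℂ) : weightedEval c x h = weighted c h x :=
  Complex.real_smul

namespace HasWeightedDeriv

lemma hasDerivAt_weighted {h h' : ℝ →ᵇ ℂ} (hd : HasWeightedDeriv c h h') (x : ℝ) :
    HasDerivAt (weighted c h) (weighted c h' x) x := by
  have hexp : HasDerivAt (fun y : ℝ => Real.exp (-c * y)) (Real.exp (-c * x) * -c) x := by
    simpa using ((hasDerivAt_id x).const_mul (-c)).exp
  refine (hexp.ofReal_comp.mul (hd x)).congr_deriv ?_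
  unfold weighted
  push_cast
  ring

lemma unique {h h₁ h₂ : ℝ →ᵇ ℂ} (hd₁ : HasWeightedDeriv c h h₁) (hd₂ : HasWeightedDeriv c h h₂) :
    h₁ = h₂ := by
  ext x
  exact add_right_cancel ((hd₁ x).unique (hd₂ x))

lemma add {f f' g g' : ℝ →ᵇ ℂ} (hf : HasWeightedDeriv c f f') (hg : HasWeightedDeriv c g g') :
    HasWeightedDeriv c (f + g) (f' + g') := fun x =>
  ((hf x).add (hg x)).congr_deriv (by simp; ring)

lemma mul {f f' g g' : ℝ →ᵇ ℂ} (hf : HasWeightedDeriv c f f') (hg : HasWeightedDeriv d g g') :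
    HasWeightedDeriv (c + d) (f * g) (f' * g + f * g') := fun x =>
  ((hf x).mul (hg x)).congr_deriv (by simp; ring)

lemma const_smul (a : ℂ) {f f' : ℝ →ᵇ ℂ} (hf : HasWeightedDeriv c f f') :
    HasWeightedDeriv c (a • f) (a • f') := fun x =>
  ((hf x).const_smul a).congr_deriv (by simp; ring)

lemma zero : HasWeightedDeriv c 0 0 := fun x =>
  (hasDerivAt_const x (0 : ℂ)).congr_deriv (by simp)

lemma deriv {h h' : ℝ → ℝ →ᵇ ℂ} {k k' : ℝ →ᵇ ℂ} {t : ℝ}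
    (hd : ∀ t, HasWeightedDeriv c (h t) (h' t)) (hk : HasDerivAt h k t)
    (hk' : HasDerivAt h' k' t) : HasWeightedDeriv c k k' := by
  intro x
  have hslope := hasDerivAt_iff_tendsto_slope.1 hk
  have hslope' : Tendsto (fun s => slope h' t s + (c : ℂ) • slope h t s) (𝓝[≠] t)
      (𝓝 (k' + (c : ℂ) • k)) :=
    (hasDerivAt_iff_tendsto_slope.1 hk').add (hslope.const_smul _)
  refine hasDerivAt_of_tendstoUniformly (f := fun s => slope h t s)
    (BoundedContinuousFunction.tendsto_iff_tendstoUniformly.1 hslope')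
    (Eventually.of_forall fun s y => ?_)
    (fun y => (BoundedContinuousFunction.tendsto_iff_tendstoUniformly.1 hslope).tendsto_at y) x
  refine (((hd s y).sub (hd t y)).const_smul (s - t)⁻¹).congr_deriv ?_
  simp [slope]
  ring

end HasWeightedDeriv

namespace IsWeightedSymbol

lemma hasOrder {h : ℝ → ℝ →ᵇ ℂ} (H : IsWeightedSymbol c n m h) : HasOrder m h := by
  cases n with
  | zero => exact H
  | succ n => exact H.1

lemma mono {h : ℝ → ℝ →ᵇ ℂ} (H : IsWeightedSymbol c n m h) (hm : m ≤ m') :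
    IsWeightedSymbol c n m' h := by
  induction n generalizing m m' h with
  | zero => exact HasOrder.mono H hm
  | succ n ih =>
    obtain ⟨h', hd, H'⟩ := H.2
    exact ⟨H.1.mono hm, h', hd, ih H' (by omega)⟩

lemma pred {h : ℝ → ℝ →ᵇ ℂ} (H : IsWeightedSymbol c (n + 1) m h) : IsWeightedSymbol c n m h := by
  induction n generalizing m h with
  | zero => exact H.1
  | succ n ih =>
    obtain ⟨h', hd, H'⟩ := H.2
    exact ⟨H.1, h', hd, ih H'⟩

lemma add {f g : ℝ → ℝ →ᵇ ℂ} (hf : IsWeightedSymbol c n m f) (hg : IsWeightedSymbol c n m g) :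
    IsWeightedSymbol c n m fun t => f t + g t := by
  induction n generalizing m f g with
  | zero => exact IsSymbol.add hf hg
  | succ n ih =>
    obtain ⟨f', hfd, hf'⟩ := hf.2
    obtain ⟨g', hgd, hg'⟩ := hg.2
    exact ⟨hf.1.add hg.1, _, fun t => (hfd t).add (hgd t), ih hf' hg'⟩

lemma zero : IsWeightedSymbol c n m fun _ => 0 := by
  induction n generalizing m with
  | zero => exact IsSymbol.zero
  | succ n ih => exact ⟨IsSymbol.zero, _, fun _ => .zero, ih⟩

lemma sum {ι : Type*} (s : Finset ι) {f : ι → ℝ → ℝ →ᵇ ℂ}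
    (hf : ∀ i ∈ s, IsWeightedSymbol c n m (f i)) :
    IsWeightedSymbol c n m fun t => ∑ i ∈ s, f i t := by
  classical
  induction s using Finset.induction_on with
  | empty => simpa using zero
  | insert i s hi ih =>
    simp only [Finset.sum_insert hi]
    exact (hf i (by simp)).add (ih fun j hj => hf j (by simp [hj]))

lemma mul {f g : ℝ → ℝ →ᵇ ℂ} (hf : IsWeightedSymbol c n m f) (hg : IsWeightedSymbol d n m' g) :
    IsWeightedSymbol (c + d) n (m + m') fun t => f t * g t := by
  induction n generalizing m m' f g with
  | zero => exact HasOrder.mul hf hg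
  | succ n ih =>
    obtain ⟨f', hfd, hf'⟩ := hf.2
    obtain ⟨g', hgd, hg'⟩ := hg.2
    exact ⟨hf.1.mul hg.1, _, fun t => (hfd t).mul (hgd t),
      ((ih hf' hg.pred).mono (by omega)).add ((ih hf.pred hg').mono (by omega))⟩

lemma smul {a : ℝ → ℂ} {f : ℝ → ℝ →ᵇ ℂ} (ha : HasOrder m a) (hf : IsWeightedSymbol c n m' f) :
    IsWeightedSymbol c n (m + m') fun t => a t • f t := by
  have hsmul {f : ℝ → ℝ →ᵇ ℂ} {m' : ℤ} (hf : HasOrder m' f) :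
      HasOrder (m + m') fun t => a t • f t :=
    ha.bilin (ContinuousLinearMap.lsmul ℝ ℂ) hf
  induction n generalizing m' f with
  | zero => exact hsmul hf
  | succ n ih =>
    obtain ⟨f', hfd, hf'⟩ := hf.2
    exact ⟨hsmul hf.1, _, fun t => (hfd t).const_smul (a t), (ih hf').mono (by omega)⟩

lemma deriv {h : ℝ → ℝ →ᵇ ℂ} (H : IsWeightedSymbol c n m h) :
    IsWeightedSymbol c n m (deriv h) := by
  induction n generalizing m h with
  | zero => exact IsSymbol.deriv H
  | succ n ih =>
    obtain ⟨h', hd, H'⟩ := H.2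
    exact ⟨H.1.deriv, _root_.deriv h', fun t =>
      .deriv hd (H.1.hasDerivAt t) (H'.hasOrder.hasDerivAt t), ih H'⟩

lemma exists_hasWeightedDeriv {h : ℝ → ℝ →ᵇ ℂ} (H : ∀ n, IsWeightedSymbol c n m h) :
    ∃ h', (∀ t, HasWeightedDeriv c (h t) (h' t)) ∧ ∀ n, IsWeightedSymbol c n (m + 1) h' := by
  obtain ⟨h', hd, -⟩ := (H 1).2
  refine ⟨h', hd, fun n => ?_⟩
  obtain ⟨h'', hd', H'⟩ := (H (n + 1)).2
  rwa [funext fun t => (hd t).unique (hd' t)]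

lemma exists_iteratedDeriv_eq {h : ℝ → ℝ →ᵇ ℂ} (H : IsWeightedSymbol c n m h) :
    ∃ hn : ℝ → ℝ →ᵇ ℂ, HasOrder (m + n) hn ∧
      ∀ t, iteratedDeriv n (weighted c (h t)) = weighted c (hn t) := by
  induction n generalizing m h with
  | zero => exact ⟨h, by simpa using H.hasOrder, fun t => iteratedDeriv_zero⟩
  | succ n ih =>
    obtain ⟨h', hd, H'⟩ := H.2
    obtain ⟨hn, hs, he⟩ := ih H'
    refine ⟨hn, hs.mono (by push_cast; omega), fun t => ?_⟩
    rw [iteratedDeriv_succ', ← he, funext fun x => ((hd t).hasDerivAt_weighted x).deriv]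

lemma hasFDerivAt_uncurry {h h' : ℝ → ℝ →ᵇ ℂ} (hh : HasOrder m h) (hh' : Continuous h')
    (hd : ∀ t, HasWeightedDeriv c (h t) (h' t)) (p : ℝ × ℝ) :
    HasFDerivAt (fun p : ℝ × ℝ => weighted c (h p.1) p.2)
      ((ContinuousLinearMap.toSpanSingleton ℝ (weighted c (_root_.deriv h p.1) p.2)).coprod
        (ContinuousLinearMap.toSpanSingleton ℝ (weighted c (h' p.1) p.2))) p := by
  have hcont {g : ℝ → ℝ →ᵇ ℂ} (hg : Continuous g) : Continuous fun p : ℝ × ℝ =>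
      ContinuousLinearMap.toSpanSingleton ℝ (weighted c (g p.1) p.2) := by
    have : Continuous fun p : ℝ × ℝ => g p.1 p.2 := (hg.comp continuous_fst).eval continuous_snd
    refine (ContinuousLinearMap.toSpanSingletonCLE (𝕜 := ℝ) (E := ℂ)).continuous.comp ?_
    unfold weighted
    fun_prop
  exact (hasStrictFDerivAt_uncurry_coprod (𝕜 := ℝ) (u := p) (f := fun t x => weighted c (h t) x)
    (f₁ := fun t x => .toSpanSingleton ℝ (weighted c (_root_.deriv h t) x))
    (f₂ := fun t x => .toSpanSingleton ℝ (weighted c (h' t) x))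
    (Eventually.of_forall fun q => HasDerivAt.hasFDerivAt <| by
      simpa only [Function.comp_def, weightedEval_apply] using
        (weightedEval c q.2).hasFDerivAt.comp_hasDerivAt q.1 (hh.hasDerivAt q.1))
    (Eventually.of_forall fun q => ((hd q.1).hasDerivAt_weighted q.2).hasFDerivAt)
    (hcont hh.deriv.contDiff.continuous).continuousAt (hcont hh').continuousAt).hasFDerivAt

lemma contDiff_uncurry {h : ℝ → ℝ →ᵇ ℂ} (H : ∀ n, IsWeightedSymbol c n m h) :
    ContDiff ℝ ∞ fun p : ℝ × ℝ => weighted c (h p.1) p.2 := by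
  rw [contDiff_infty]
  intro n
  induction n generalizing m h with
  | zero =>
    have : Continuous fun p : ℝ × ℝ => h p.1 p.2 :=
      ((H 0).hasOrder.contDiff.continuous.comp continuous_fst).eval continuous_snd
    refine contDiff_zero.2 ?_
    unfold weighted
    fun_prop
  | succ n ih =>
    obtain ⟨h', hd, H'⟩ := exists_hasWeightedDeriv H
    push_cast
    refine contDiff_succ_iff_hasFDerivAt.2 ⟨_, ?_,
      hasFDerivAt_uncurry (H 0).hasOrder (H' 0).hasOrder.contDiff.continuous hd⟩
    let toSpan := ContinuousLinearMap.toSpanSingletonCLE (𝕜 := ℝ) (E := ℂ)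
    have ht := toSpan.contDiff.comp (ih fun k => (H k).deriv)
    have hx := toSpan.contDiff.comp (ih H')
    have hsum := (ht.clm_comp (contDiff_const (c := ContinuousLinearMap.fst ℝ ℝ ℝ))).add
      (hx.clm_comp (contDiff_const (c := ContinuousLinearMap.snd ℝ ℝ ℝ)))
    convert hsum using 2 with p
    ext <;> simp [toSpan]

end IsWeightedSymbol

end Weighted

section Coefficient

variable {c : ℝ} {v : ℝ → ℝ}

/-- The bounded function `exp (c x) v x`, for a coefficient `v` that is `O(exp (-c x))`; it is the
bounded part of `v` with respect to this weight. -/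
def IsSymbol.boundedPart (hv : IsSymbol (fun x => Real.exp (-c * x)) ⊤ v) : ℝ →ᵇ ℂ :=
  BoundedContinuousFunction.ofNormedAddCommGroup (fun x => ((Real.exp (c * x) * v x : ℝ) : ℂ))
    (by have := hv.contDiff.continuous; fun_prop) (isBigO_top.1 hv.isBigO).choose fun x => by
      have h := (isBigO_top.1 hv.isBigO).choose_spec x
      rw [Complex.norm_real, norm_mul, Real.norm_of_nonneg (Real.exp_pos _).le, ← le_div_iff₀']
      · simpa [Real.exp_neg, div_eq_mul_inv] using h
      · positivity

lemma IsSymbol.boundedPart_apply (hv : IsSymbol (fun x => Real.exp (-c * x)) ⊤ v) (x : ℝ) :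
    hv.boundedPart x = ((Real.exp (c * x) * v x : ℝ) : ℂ) := rfl

lemma IsSymbol.weighted_boundedPart (hv : IsSymbol (fun x => Real.exp (-c * x)) ⊤ v) (x : ℝ) :
    weighted c hv.boundedPart x = v x := by
  rw [weighted, boundedPart_apply, ← Complex.ofReal_mul, ← mul_assoc, ← Real.exp_add]
  simp

lemma IsSymbol.hasWeightedDeriv (hv : IsSymbol (fun x => Real.exp (-c * x)) ⊤ v) :
    HasWeightedDeriv c hv.boundedPart hv.deriv.boundedPart := fun x => by
  have hexp : HasDerivAt (fun y : ℝ => Real.exp (c * y)) (Real.exp (c * x) * c) x := by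
    simpa using ((hasDerivAt_id x).const_mul c).exp
  refine (hexp.mul (hv.hasDerivAt x)).ofReal_comp.congr_deriv ?_
  simp only [boundedPart_apply]
  push_cast
  ring

lemma IsSymbol.isWeightedSymbol (hv : IsSymbol (fun x => Real.exp (-c * x)) ⊤ v) {n : ℕ} {m : ℤ}
    (hm : 0 ≤ m) : IsWeightedSymbol c n m fun _ => hv.boundedPart := by
  induction n generalizing v m with
  | zero => exact (HasOrder.const _).mono hm
  | succ n ih =>
    exact ⟨(HasOrder.const _).mono hm, _, fun _ => hv.hasWeightedDeriv, ih hv.deriv (by omega)⟩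

end Coefficient

section MatrixOperator

variable {ι E F G : Type*} [Fintype ι] [NormedAddCommGroup E] [NormedSpace ℝ E]
  [NormedAddCommGroup F] [NormedSpace ℝ F] [NormedAddCommGroup G] [NormedSpace ℝ G]

/-- The operator on `ι → E` with matrix entries `A i ∘ B i j`. -/
def matrixOp (A : ι → E →L[ℝ] E) (B : ι → ι → E →L[ℝ] E) : (ι → E) →L[ℝ] (ι → E) :=
  ContinuousLinearMap.pi fun i => (A i).comp (∑ j, (B i j).comp (ContinuousLinearMap.proj j))

lemma matrixOp_apply (A : ι → E →L[ℝ] E) (B : ι → ι → E →L[ℝ] E) (u : ι → E) (i : ι) :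
    matrixOp A B u i = A i (∑ j, B i j (u j)) := by
  simp [matrixOp]

lemma norm_matrixOp_le {A : ι → E →L[ℝ] E} {B : ι → ι → E →L[ℝ] E} {r : ℝ} (hr : 0 ≤ r)
    (hAB : ∀ i, ‖A i‖ * ∑ j, ‖B i j‖ ≤ r) : ‖matrixOp A B‖ ≤ r := by
  refine ContinuousLinearMap.opNorm_le_bound _ hr fun u => ?_
  refine (pi_norm_le_iff_of_nonneg (by positivity)).2 fun i => ?_
  calc ‖matrixOp A B u i‖ ≤ ‖A i‖ * ∑ j, ‖B i j (u j)‖ := by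
        rw [matrixOp_apply]
        exact ((A i).le_opNorm _).trans (by gcongr; exact norm_sum_le _ _)
    _ ≤ ‖A i‖ * ∑ j, ‖B i j‖ * ‖u‖ := by
        gcongr with j
        exact (B i j).le_opNorm_of_le (norm_le_pi_norm u j)
    _ ≤ r * ‖u‖ := by
        rw [← Finset.sum_mul, ← mul_assoc]
        gcongr
        exact hAB i

namespace HasOrder

variable {m m' : ℤ}

lemma clm_comp {L : ℝ → F →L[ℝ] G} {K : ℝ → E →L[ℝ] F} (hL : HasOrder m L) (hK : HasOrder m' K) :
    HasOrder (m + m') fun t => (L t).comp (K t) :=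
  hL.bilin (ContinuousLinearMap.compL ℝ E F G) hK

lemma matrixOp {A : ι → ℝ → E →L[ℝ] E} {B : ι → ι → ℝ → E →L[ℝ] E}
    (hA : ∀ i, HasOrder m (A i)) (hB : ∀ i j, HasOrder m' (B i j)) :
    HasOrder (m + m') fun t => matrixOp (fun i => A i t) (fun i j => B i j t) := by
  classical
  have hrow (i : ι) : HasOrder m' fun t => ∑ j, (B i j t).comp
      (ContinuousLinearMap.proj (R := ℝ) (φ := fun _ : ι => E) j) :=
    IsSymbol.sum _ fun j _ => ((hB i j).clm_comp (const _)).mono (add_zero m').le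
  have hsum : HasOrder (m + m') fun t => ∑ i, (ContinuousLinearMap.single ℝ (fun _ => E) i).comp
      ((A i t).comp (∑ j, (B i j t).comp (ContinuousLinearMap.proj j))) :=
    IsSymbol.sum _ fun i _ => ((const _).clm_comp ((hA i).clm_comp (hrow i))).mono (zero_add _).le
  convert hsum using 2 with t
  ext u i
  simp [matrixOp_apply, Finset.sum_apply, Pi.single_apply]

lemma exists_matrixOp_fixedPoint [CompleteSpace E] {r : ℝ} {A : ι → ℝ → E →L[ℝ] E}
    {B : ι → ι → ℝ → E →L[ℝ] E} {p : ι → ℝ → E} (hm : m ≤ 0) (hA : ∀ i, HasOrder m (A i))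
    (hB : ∀ i j, HasOrder 0 (B i j)) (hp : ∀ i, HasOrder 0 (p i)) (hr0 : 0 ≤ r) (hr : r < 1)
    (hAB : ∀ i t, ‖A i t‖ * ∑ j, ‖B i j t‖ ≤ r) :
    ∃ u : ι → ℝ → E, (∀ i, HasOrder m (u i)) ∧
      ∀ i t, u i t = A i t (∑ j, B i j t (u j t) + p i t) := by
  have hT := (HasOrder.matrixOp hA hB).mono ((add_zero m).trans_le hm)
  have hb : HasOrder m fun t i => A i t (p i t) :=
    (IsSymbol.pi fun i => (hA i).clm_apply (hp i)).trans_isBigO (mu_zpow_isBigO (add_zero m).le)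
  obtain ⟨u, hu, hfix⟩ :=
    hT.exists_fixedPoint hr (fun t => norm_matrixOp_le hr0 fun i => hAB i t) hb
  refine ⟨fun i t => u t i, fun i => hu.clm (ContinuousLinearMap.proj i), fun i t => ?_⟩
  refine (congrFun (hfix t) i).trans ?_
  rw [Pi.add_apply, matrixOp_apply, map_add]

end HasOrder

end MatrixOperator

section FactoredEquation

/-- The function `y` solves the factored second order equation `(d/dx + b) (d/dx + a) y = g`. -/
def SolvesFactored (a b : ℂ) (g y : ℝ → ℂ) : Prop :=
  ∃ z : ℝ → ℂ, (∀ x, HasDerivAt y (z x - a * y x) x) ∧ ∀ x, HasDerivAt z (g x - b * z x) x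

namespace SolvesFactored

variable {a b : ℂ} {g g₁ g₂ y y₁ y₂ : ℝ → ℂ}

lemma add (h₁ : SolvesFactored a b g₁ y₁) (h₂ : SolvesFactored a b g₂ y₂) :
    SolvesFactored a b (fun x => g₁ x + g₂ x) fun x => y₁ x + y₂ x := by
  obtain ⟨z₁, hy₁, hz₁⟩ := h₁
  obtain ⟨z₂, hy₂, hz₂⟩ := h₂
  exact ⟨fun x => z₁ x + z₂ x, fun x => ((hy₁ x).add (hy₂ x)).congr_deriv (by ring),
    fun x => ((hz₁ x).add (hz₂ x)).congr_deriv (by ring)⟩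

lemma const_mul (r : ℂ) (h : SolvesFactored a b g y) :
    SolvesFactored a b (fun x => r * g x) fun x => r * y x := by
  obtain ⟨z, hy, hz⟩ := h
  exact ⟨fun x => r * z x, fun x => ((hy x).const_mul r).congr_deriv (by ring),
    fun x => ((hz x).const_mul r).congr_deriv (by ring)⟩

lemma zero : SolvesFactored a b (fun _ => 0) fun _ => 0 :=
  ⟨fun _ => 0, fun x => by simpa using hasDerivAt_const x (0 : ℂ),
    fun x => by simpa using hasDerivAt_const x (0 : ℂ)⟩

lemma const (r : ℂ) : SolvesFactored 0 b (fun _ => 0) fun _ => r :=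
  ⟨fun _ => 0, fun x => by simpa using hasDerivAt_const x r,
    fun x => by simpa using hasDerivAt_const x (0 : ℂ)⟩

lemma cexp_mul (m : ℂ) (h : SolvesFactored a b g y) :
    SolvesFactored (a - m) (b - m) (fun x => Complex.exp (m * x) * g x)
      fun x => Complex.exp (m * x) * y x := by
  obtain ⟨z, hy, hz⟩ := h
  exact ⟨fun x => Complex.exp (m * x) * z x,
    fun x => ((hasDerivAt_cexp_mul_ofReal m x).mul (hy x)).congr_deriv (by ring),
    fun x => ((hasDerivAt_cexp_mul_ofReal m x).mul (hz x)).congr_deriv (by ring)⟩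

lemma iteratedDeriv_two (h : SolvesFactored a b g y) (hab : a + b = 0) (x : ℝ) :
    iteratedDeriv 2 y x = g x + a ^ 2 * y x := by
  obtain ⟨z, hy, hz⟩ := h
  rw [iteratedDeriv_succ, iteratedDeriv_one, funext fun x => (hy x).deriv,
    ((hz x).fun_sub ((hy x).const_mul a)).deriv]
  linear_combination -z x * hab

end SolvesFactored

section WeightedResolvent

variable {c : ℝ} {k l : ℤ} {n : ℕ}

lemma hasWeightedDeriv_derivResolvent {a : ℂ} (ha : a.re ≠ c) (g : ℝ →ᵇ ℂ) :
    HasWeightedDeriv c (derivResolvent (a - c) g) (g - a • derivResolvent (a - c) g) := fun x =>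
  (hasDerivAt_derivResolvent (by simpa [sub_eq_zero] using ha) g x).congr_deriv (by simp; ring)

lemma IsWeightedSymbol.resolvent {a : ℝ → ℂ} {g : ℝ → ℝ →ᵇ ℂ} (ha : IsElliptic c k a)
    (hk : k ≤ 1) (hg : IsWeightedSymbol c n l g) :
    IsWeightedSymbol c (n + 1) (l - k) fun t => derivResolvent (a t - c) (g t) := by
  have order {g : ℝ → ℝ →ᵇ ℂ} (hg : HasOrder l g) :
      HasOrder (l - k) fun t => derivResolvent (a t - c) (g t) :=
    (ha.hasOrder_derivResolvent.clm_apply hg).mono (by omega)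
  have of_resolvent {n : ℕ} (hg : IsWeightedSymbol c n l g)
      (hR : IsWeightedSymbol c n (l - k) fun t => derivResolvent (a t - c) (g t)) :
      IsWeightedSymbol c (n + 1) (l - k) fun t => derivResolvent (a t - c) (g t) := by
    refine ⟨hR.hasOrder, _, fun t => hasWeightedDeriv_derivResolvent (ha.re_ne t) (g t), ?_⟩
    have hsub := (hg.mono (by omega : l ≤ l - k + 1)).add
      ((hR.smul ha.hasOrder.neg).mono (by omega : k + (l - k) ≤ l - k + 1))
    simpa only [neg_smul, ← sub_eq_add_neg] using hsub
  induction n with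
  | zero => exact of_resolvent hg (order hg)
  | succ n ih => exact of_resolvent hg (ih hg.pred)

end WeightedResolvent

lemma SolvesFactored.of_derivResolvent {a b : ℂ} {c : ℝ} (ha : a.re ≠ c) (hb : b.re ≠ c)
    (g : ℝ →ᵇ ℂ) : SolvesFactored a b (weighted c g)
      (weighted c (derivResolvent (a - c) (derivResolvent (b - c) g))) := by
  have hderiv {a : ℂ} (ha : a.re ≠ c) (g : ℝ →ᵇ ℂ) (x : ℝ) :
      HasDerivAt (weighted c (derivResolvent (a - c) g))
        (weighted c g x - a * weighted c (derivResolvent (a - c) g) x) x :=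
    ((hasWeightedDeriv_derivResolvent ha g).hasDerivAt_weighted x).congr_deriv
      (by simp [weighted]; ring)
  exact ⟨_, hderiv ha _, hderiv hb g⟩

lemma exists_weighted_solution {ι : Type*} [Fintype ι] {c r : ℝ} {m : ℤ} {k : ι → ℤ}
    {a b : ι → ℝ → ℂ} {Q : ι → ι → ℝ → ℝ →ᵇ ℂ} {p : ι → ℝ → ℝ →ᵇ ℂ}
    (hk : ∀ i, k i ∈ Icc (0 : ℤ) 1) (hm : m ∈ Icc (0 : ℤ) 1)
    (ha : ∀ i, IsElliptic c (k i) (a i)) (hb : ∀ i, IsElliptic c m (b i))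
    (hQ : ∀ i j n, IsWeightedSymbol 0 n 0 (Q i j)) (hp : ∀ i n, IsWeightedSymbol c n 0 (p i))
    (hr0 : 0 ≤ r) (hr : r < 1)
    (hsmall : ∀ i t, ‖(derivResolvent (a i t - c)).comp (derivResolvent (b i t - c))‖ *
      ∑ j, ‖Q i j t‖ ≤ r) :
    ∃ h : ι → ℝ → ℝ →ᵇ ℂ, (∀ i n, IsWeightedSymbol c n (-m) (h i)) ∧
      ∀ i t, SolvesFactored (a i t) (b i t) (weighted c (∑ j, Q i j t * h j t + p i t))
        (weighted c (h i t)) := by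
  have hA (i : ι) : HasOrder (-m) fun t =>
      (derivResolvent (a i t - c)).comp (derivResolvent (b i t - c)) :=
    ((ha i).hasOrder_derivResolvent.clm_comp (hb i).hasOrder_derivResolvent).mono
      (by linarith [(hk i).1])
  obtain ⟨h, hord, hfix⟩ := HasOrder.exists_matrixOp_fixedPoint (neg_nonpos.2 hm.1) hA
    (B := fun i j t => ContinuousLinearMap.mul ℝ (ℝ →ᵇ ℂ) (Q i j t))
    (fun i j => (hQ i j 0).hasOrder.clm _) (fun i => (hp i 0).hasOrder) hr0 hr fun i t =>
      le_trans (by gcongr; exact ContinuousLinearMap.opNorm_mul_apply_le ..) (hsmall i t)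
  simp only [ContinuousLinearMap.mul_apply', ContinuousLinearMap.comp_apply] at hfix
  refine ⟨h, fun i n => ?_, fun i t => ?_⟩
  · induction n generalizing i with
    | zero => exact hord i
    | succ n ih =>
      have hsource : IsWeightedSymbol c n 0 fun t => ∑ j, Q i j t * h j t + p i t :=
        (IsWeightedSymbol.sum _ fun j _ => by
          simpa using ((hQ i j n).mul (ih j)).mono (by linarith [hm.1] : 0 + -m ≤ 0)).add (hp i n)
      rw [funext (hfix i)]
      exact ((hsource.resolvent (hb i) hm.2).resolvent (ha i) (hk i).2).pred.mono
        (by linarith [(hk i).1])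
  · rw [congrArg (weighted c) (hfix i t)]
    exact .of_derivResolvent ((ha i).re_ne t) ((hb i).re_ne t) _

end FactoredEquation

section Cutoff

variable {R c : ℝ}

/-- A smooth function equal to `1` on `(-∞, R]` and to `0` on `[R + 1, ∞)`. -/
def cutoff (R x : ℝ) : ℝ := Real.smoothTransition (R + 1 - x)

lemma cutoff_eq_one {x : ℝ} (hx : x ≤ R) : cutoff R x = 1 :=
  Real.smoothTransition.one_of_one_le (by linarith)

lemma cutoff_eq_zero {x : ℝ} (hx : R + 1 ≤ x) : cutoff R x = 0 :=
  Real.smoothTransition.zero_of_nonpos (by linarith)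

lemma cutoff_nonneg (R x : ℝ) : 0 ≤ cutoff R x := Real.smoothTransition.nonneg _

lemma cutoff_le_one (R x : ℝ) : cutoff R x ≤ 1 := Real.smoothTransition.le_one _

lemma contDiff_cutoff (R : ℝ) : ContDiff ℝ ∞ (cutoff R) :=
  Real.smoothTransition.contDiff.comp (contDiff_const.sub contDiff_id)

lemma hasCompactSupport_deriv_cutoff (R : ℝ) : HasCompactSupport (deriv (cutoff R)) := by
  refine HasCompactSupport.intro (isCompact_Icc (a := R) (b := R + 1)) fun x hx => ?_
  rcases lt_or_ge x R with h | h
  · have : cutoff R =ᶠ[𝓝 x] fun _ => 1 := by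
      filter_upwards [Iio_mem_nhds h] with y hy using cutoff_eq_one hy.le
    rw [this.deriv_eq, deriv_const]
  · have : cutoff R =ᶠ[𝓝 x] fun _ => 0 := by
      filter_upwards [Ioi_mem_nhds (not_le.1 fun h' => hx ⟨h, h'⟩)] with y hy
        using cutoff_eq_zero (le_of_lt hy)
    rw [this.deriv_eq, deriv_const]

lemma isSymbol_cutoff (hc : 0 ≤ c) : IsSymbol (fun x => Real.exp (-c * x)) ⊤ (cutoff R) := by
  have hbound : cutoff R =O[⊤] fun x => Real.exp (-c * x) := by
    refine isBigO_top.2 ⟨Real.exp (c * (R + 1)), fun x => ?_⟩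
    rw [Real.norm_of_nonneg (cutoff_nonneg R x), Real.norm_of_nonneg (Real.exp_pos _).le,
      ← Real.exp_add]
    rcases le_total x (R + 1) with hx | hx
    · exact (cutoff_le_one R x).trans (Real.one_le_exp (by nlinarith))
    · exact (cutoff_eq_zero hx).trans_le (Real.exp_pos _).le
  have hderiv (x : ℝ) : HasDerivAt (cutoff R) (deriv (cutoff R) x) x :=
    ((contDiff_cutoff R).differentiable (by simp) x).hasDerivAt
  exact IsSymbol.of_hasDerivAt (n := ⊤) hbound hderiv <|
    .of_hasCompactSupport (contDiff_infty_iff_deriv.1 (contDiff_cutoff R)).2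
      (hasCompactSupport_deriv_cutoff R) (by fun_prop) fun x => (Real.exp_pos _).ne'

lemma hasCompactSupport_cutoff_sq (R : ℝ) : HasCompactSupport fun t => cutoff R (t ^ 2) := by
  refine HasCompactSupport.intro (isCompact_Icc (a := -(|R| + 1)) (b := |R| + 1)) fun t ht => ?_
  refine cutoff_eq_zero (not_lt.1 fun h => ht (abs_le.1 ?_))
  refine abs_le_of_sq_le_sq ?_ (by positivity)
  nlinarith [le_abs_self R, abs_nonneg R]

lemma contDiff_cutoff_sq (R : ℝ) : ContDiff ℝ ∞ fun t => cutoff R (t ^ 2) :=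
  (contDiff_cutoff R).comp (contDiff_id.pow 2)

lemma hasOrder_smul_cutoff_sq (R : ℝ) {m : ℤ} {E : Type*} [NormedAddCommGroup E] [NormedSpace ℝ E]
    {f : ℝ → E} (hf : ContDiff ℝ ∞ f) : HasOrder m fun t => cutoff R (t ^ 2) • f t :=
  .of_hasCompactSupport ((contDiff_cutoff_sq R).smul hf) (hasCompactSupport_cutoff_sq R).smul_right

/-- A cut-off to the part `t ^ 2 ≤ R + 1`, `x ≤ R + 1` of phase space, where the potential need
not be small. -/
def phaseCutoff (R t x : ℝ) : ℝ := cutoff R (t ^ 2) * cutoff R x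

lemma exists_sub_phaseCutoff_mul {v : ℝ → ℝ} (hv : IsSymbol (fun x => Real.exp (-c * x)) ⊤ v)
    (R : ℝ) : ∃ q : ℝ → ℝ →ᵇ ℂ, (∀ n, IsWeightedSymbol c n 0 q) ∧
      ∀ t x, weighted c (q t) x = (1 - phaseCutoff R t x : ℝ) * v x := by
  have hζv : IsSymbol (fun x => Real.exp (-c * x)) ⊤ fun x => cutoff R x * v x := by
    simpa using (isSymbol_cutoff le_rfl).mul hv
  have hχ : HasOrder 0 fun t => -cutoff R (t ^ 2) • (1 : ℂ) := by
    simpa using (hasOrder_smul_cutoff_sq R (f := fun _ => -(1 : ℂ)) contDiff_const)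
  refine ⟨fun t => hv.boundedPart + (-cutoff R (t ^ 2) • (1 : ℂ)) • hζv.boundedPart,
    fun n => (hv.isWeightedSymbol le_rfl).add (.smul hχ (hζv.isWeightedSymbol le_rfl)),
    fun t x => ?_⟩
  rw [weighted_add, weighted_smul, hv.weighted_boundedPart, hζv.weighted_boundedPart, phaseCutoff]
  simp only [Complex.real_smul]
  push_cast
  ring

lemma phaseCutoff_nonneg (R t x : ℝ) : 0 ≤ phaseCutoff R t x :=
  mul_nonneg (cutoff_nonneg _ _) (cutoff_nonneg _ _)

lemma phaseCutoff_le_one (R t x : ℝ) : phaseCutoff R t x ≤ 1 :=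
  mul_le_one₀ (cutoff_le_one _ _) (cutoff_nonneg _ _) (cutoff_le_one _ _)

lemma mu_inv_mul_one_sub_phaseCutoff_le {γ : ℝ} (hγ : 0 ≤ γ) (hR : 0 < R) (t x : ℝ) :
    (mu t)⁻¹ * ((1 - phaseCutoff R t x) * Real.exp (-γ * max x 0)) ≤
      (√R)⁻¹ + Real.exp (-γ * R) := by
  have hφ := sub_nonneg.2 (phaseCutoff_le_one R t x)
  have hφ' := sub_le_self 1 (phaseCutoff_nonneg R t x)
  have : 0 ≤ (mu t)⁻¹ := (inv_pos.2 (mu_pos t)).le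
  rcases lt_or_ge R (t ^ 2) with ht | ht
  · have hmuR : (mu t)⁻¹ ≤ (√R)⁻¹ := by
      gcongr
      exact Real.sqrt_le_sqrt (by linarith)
    have hexp : Real.exp (-γ * max x 0) ≤ 1 :=
      Real.exp_le_one_iff.2 (by nlinarith [le_max_right x 0])
    calc _ ≤ (√R)⁻¹ * (1 * 1) := by gcongr
      _ ≤ (√R)⁻¹ + Real.exp (-γ * R) := by linarith [Real.exp_pos (-γ * R)]
  rcases le_or_gt x R with hx | hx
  · rw [phaseCutoff, cutoff_eq_one ht, cutoff_eq_one hx]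
    simp only [mul_one, sub_self, zero_mul, mul_zero]
    positivity
  · have hexp : Real.exp (-γ * max x 0) ≤ Real.exp (-γ * R) :=
      Real.exp_le_exp.2 (by nlinarith [le_max_left x 0])
    have hmu1 : (mu t)⁻¹ ≤ 1 := inv_le_one_of_one_le₀ (one_le_mu t)
    calc _ ≤ 1 * (1 * Real.exp (-γ * R)) := by gcongr
      _ ≤ (√R)⁻¹ + Real.exp (-γ * R) := by linarith [inv_nonneg.2 (Real.sqrt_nonneg R)]

end Cutoff

section Decaying

variable {γ c : ℝ} {v : ℝ → ℝ}

/-- Admissible coefficients: smooth functions whose derivatives are all bounded on the line and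
decay like `exp (-γ x)` as `x → ∞`. -/
abbrev IsDecaying (γ : ℝ) (v : ℝ → ℝ) : Prop := IsSymbol (fun x => Real.exp (-γ * max x 0)) ⊤ v

lemma IsDecaying.isSymbol_exp (hc : 0 ≤ c) (hcγ : c ≤ γ) (hv : IsDecaying γ v) :
    IsSymbol (fun x => Real.exp (-c * x)) ⊤ v :=
  hv.trans_isBigO <| isBigO_of_le _ fun x => by
    simp only [Real.norm_of_nonneg (Real.exp_pos _).le, Real.exp_le_exp]
    nlinarith [le_max_left x 0, le_max_right x 0]

lemma IsDecaying.cutoff_mul (hγ : 0 ≤ γ) (hc : 0 ≤ c) (hv : IsDecaying γ v) (R : ℝ) :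
    IsSymbol (fun x => Real.exp (-c * x)) ⊤ fun x => cutoff R x * v x := by
  simpa using (isSymbol_cutoff hc).mul (hv.isSymbol_exp le_rfl hγ)

lemma IsDecaying.exists_mu_inv_mul_norm_le (hγ : 0 ≤ γ) (hv : IsDecaying γ v) :
    ∃ C, ∀ R > 0, ∀ (t : ℝ) (q : ℝ →ᵇ ℂ),
      (∀ x, weighted 0 q x = (1 - phaseCutoff R t x : ℝ) * v x) →
        (mu t)⁻¹ * ‖q‖ ≤ C * ((√R)⁻¹ + Real.exp (-γ * R)) := by
  obtain ⟨C, hC0, hC⟩ := hv.isBigO.exists_nonneg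
  rw [isBigOWith_top] at hC
  refine ⟨C, fun R hR t q hq => ?_⟩
  rw [inv_mul_le_iff₀ (mu_pos t)]
  have := mu_pos t
  refine (BoundedContinuousFunction.norm_le (by positivity)).2 fun x => ?_
  have hqx : q x = (1 - phaseCutoff R t x : ℝ) * v x := by simpa [weighted] using hq x
  have hv : |v x| ≤ C * Real.exp (-γ * max x 0) := by simpa using hC x
  rw [hqx, ← Complex.ofReal_mul, Complex.norm_real, norm_mul,
    Real.norm_of_nonneg (sub_nonneg.2 (phaseCutoff_le_one R t x)), Real.norm_eq_abs,
    ← inv_mul_le_iff₀ (mu_pos t)]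
  calc (mu t)⁻¹ * ((1 - phaseCutoff R t x) * |v x|)
      ≤ (mu t)⁻¹ * ((1 - phaseCutoff R t x) * (C * Real.exp (-γ * max x 0))) := by
        gcongr
        exact sub_nonneg.2 (phaseCutoff_le_one R t x)
    _ = C * ((mu t)⁻¹ * ((1 - phaseCutoff R t x) * Real.exp (-γ * max x 0))) := by ring
    _ ≤ C * ((√R)⁻¹ + Real.exp (-γ * R)) := by
        gcongr
        exact mu_inv_mul_one_sub_phaseCutoff_le hγ hR t x

end Decaying

section CutoffSystem

variable {ι : Type*} [Fintype ι] {γ R : ℝ}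

lemma weighted_mul (c d : ℝ) (f g : ℝ →ᵇ ℂ) (x : ℝ) :
    weighted (c + d) (f * g) x = weighted c f x * weighted d g x := by
  rw [weighted, neg_add, add_mul, Real.exp_add, Complex.ofReal_mul]
  exact mul_mul_mul_comm _ _ _ _

lemma weighted_sum (c : ℝ) (f : ι → ℝ →ᵇ ℂ) (x : ℝ) :
    weighted c (∑ i, f i) x = ∑ i, weighted c (f i) x := by
  simp only [← weightedEval_apply, map_sum]

lemma weighted_sum_mul_add {b c d : ℝ} (hd : b + c = d) (q h : ι → ℝ →ᵇ ℂ) (p : ℝ →ᵇ ℂ) (x : ℝ) :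
    weighted d (∑ j, q j * h j + p) x =
      ∑ j, weighted b (q j) x * weighted c (h j) x + weighted d p x := by
  simp only [weighted_add, weighted_sum, ← hd, weighted_mul]

lemma eventually_norm_mul_sum_norm_le {F : Type*} [NormedAddCommGroup F] [NormedSpace ℝ F]
    {A : ℝ → F} {v : ι → ℝ → ℝ} (hγ : 0 < γ) (hA : HasOrder (-1) A)
    (hv : ∀ j, IsDecaying γ (v j)) :
    ∀ᶠ R in atTop, ∀ (t : ℝ) (q : ι → ℝ →ᵇ ℂ),
      (∀ j x, weighted 0 (q j) x = (1 - phaseCutoff R t x : ℝ) * v j x) →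
        ‖A t‖ * ∑ j, ‖q j‖ ≤ 1 / 2 := by
  obtain ⟨K, hK0, hK⟩ := hA.isBigO.exists_nonneg
  rw [isBigOWith_top] at hK
  choose C hC using fun j => (hv j).exists_mu_inv_mul_norm_le hγ.le
  have hlim : Tendsto (fun R => K * (∑ j, C j) * ((√R)⁻¹ + Real.exp (-γ * R))) atTop (𝓝 0) := by
    have hexp : Tendsto (fun R => Real.exp (-γ * R)) atTop (𝓝 0) :=
      Real.tendsto_exp_atBot.comp (tendsto_id.const_mul_atTop_of_neg (neg_lt_zero.2 hγ))
    simpa using ((tendsto_inv_atTop_zero.comp Real.tendsto_sqrt_atTop).add hexp).const_mul _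
  filter_upwards [hlim.eventually_le_const (by norm_num : (0 : ℝ) < 1 / 2), eventually_gt_atTop 0]
    with R hR hR0 t q hq
  have hmu := mu_pos t
  calc ‖A t‖ * ∑ j, ‖q j‖ ≤ K * (mu t)⁻¹ * ∑ j, ‖q j‖ := by
        gcongr
        simpa [abs_of_pos hmu] using hK t
    _ = K * ∑ j, (mu t)⁻¹ * ‖q j‖ := by rw [mul_assoc, Finset.mul_sum]
    _ ≤ K * ∑ j, C j * ((√R)⁻¹ + Real.exp (-γ * R)) := by
        refine mul_le_mul_of_nonneg_left (Finset.sum_le_sum fun j _ => ?_) hK0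
        exact hC j R hR0 t (q j) (hq j)
    _ ≤ 1 / 2 := by rwa [← Finset.sum_mul, ← mul_assoc]

lemma exists_cutoff_solution {k : ι → ℤ} {a b : ι → ℝ → ℂ} {V : ι → ι → ℝ → ℝ} {u : ι → ℝ → ℝ}
    (hγ : 0 < γ) (hk : ∀ i, k i ∈ Icc (0 : ℤ) 1) (ha : ∀ i, IsElliptic γ (k i) (a i))
    (hb : ∀ i, IsElliptic γ 1 (b i)) (hV : ∀ i j, IsDecaying γ (V i j))
    (hu : ∀ i, IsDecaying γ (u i)) :
    ∃ (R : ℝ) (h : ι → ℝ → ℝ →ᵇ ℂ), (∀ i n, IsWeightedSymbol γ n (-1) (h i)) ∧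
      ∀ i t, SolvesFactored (a i t) (b i t) (fun x => (1 - phaseCutoff R t x : ℝ) *
        (∑ j, V i j x * weighted γ (h j t) x + u i x)) (weighted γ (h i t)) := by
  have hA (i : ι) : HasOrder (-1) fun t =>
      (derivResolvent (a i t - γ)).comp (derivResolvent (b i t - γ)) :=
    ((ha i).hasOrder_derivResolvent.clm_comp (hb i).hasOrder_derivResolvent).mono
      (by linarith [(hk i).1])
  obtain ⟨R, hR⟩ :=
    (eventually_all.2 fun i => eventually_norm_mul_sum_norm_le hγ (hA i) (hV i)).exists
  choose Q hQ hQV using fun i j =>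
    exists_sub_phaseCutoff_mul ((hV i j).isSymbol_exp le_rfl hγ.le) R
  choose p hp hpu using fun i => exists_sub_phaseCutoff_mul ((hu i).isSymbol_exp hγ.le le_rfl) R
  obtain ⟨h, hh, hsol⟩ := exists_weighted_solution hk (by simp) ha hb hQ hp (by norm_num)
    (by norm_num) fun i t => hR i t (fun j => Q i j t) fun j => hQV i j t
  refine ⟨R, h, hh, fun i t => ?_⟩
  convert hsol i t using 1
  ext x
  rw [weighted_sum_mul_add (zero_add _), mul_add, Finset.mul_sum]
  simp only [hQV, hpu, mul_assoc]

lemma HasOrder.eventually_isElliptic {a : ℝ → ℂ} {ε : ℝ} (ha : HasOrder 0 a) (hε : 0 < ε) :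
    ∀ᶠ c in atTop, IsElliptic c 0 a ∧ ∀ t, ‖derivResolvent (a t - c)‖ ≤ ε := by
  obtain ⟨M, hM⟩ := isBigO_top.1 ha.isBigO
  filter_upwards [eventually_ge_atTop (M + ε⁻¹)] with c hc
  have hre (t : ℝ) : ε⁻¹ ≤ |(a t).re - c| := by
    have := (Complex.re_le_norm (a t)).trans (hM t)
    simp only [zpow_zero, norm_one, mul_one] at this
    exact le_abs.2 (Or.inr (by linarith))
  have hpos (t : ℝ) : 0 < |(a t).re - c| := (inv_pos.2 hε).trans_le (hre t)
  refine ⟨⟨ha, fun t => sub_ne_zero.1 (abs_pos.1 (hpos t)),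
    isBigO_of_le' (c := ε) _ fun t => ?_⟩, fun t => (norm_derivResolvent_le _).trans ?_⟩
  · simpa using inv_le_of_inv_le₀ hε (hre t)
  · simpa using inv_le_of_inv_le₀ hε (hre t)

lemma exists_solution_of_hasOrder_zero {a b : ι → ℝ → ℂ} {V : ι → ι → ℝ → ℝ}
    {s : ι → ℝ → ℝ → ℂ} (ha : ∀ i, HasOrder 0 (a i)) (hb : ∀ i, HasOrder 0 (b i))
    (hV : ∀ i j, IsSymbol (fun x => Real.exp (-0 * x)) ⊤ (V i j))
    (hs : ∀ c ≥ γ, ∃ S : ι → ℝ → ℝ →ᵇ ℂ, (∀ i n, IsWeightedSymbol c n 0 (S i)) ∧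
      ∀ i t x, weighted c (S i t) x = s i t x) :
    ∃ c ≥ γ, ∃ h : ι → ℝ → ℝ →ᵇ ℂ, (∀ i n, IsWeightedSymbol c n 0 (h i)) ∧
      ∀ i t, SolvesFactored (a i t) (b i t)
        (fun x => ∑ j, V i j x * weighted c (h j t) x + s i t x) (weighted c (h i t)) := by
  obtain ⟨c, ⟨hca, hcb⟩, hγc⟩ :=
    (((eventually_all.2 fun i => (ha i).eventually_isElliptic one_pos).and
      (eventually_all.2 fun i => (hb i).eventually_isElliptic
        (by positivity : 0 < (2 * (∑ j, ‖(hV i j).boundedPart‖) + 1)⁻¹))).and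
      (eventually_ge_atTop γ)).exists
  obtain ⟨S, hS, hSs⟩ := hs c hγc
  have hsmall (i : ι) (t : ℝ) : ‖(derivResolvent (a i t - c)).comp (derivResolvent (b i t - c))‖ *
      ∑ j, ‖(hV i j).boundedPart‖ ≤ 1 / 2 := by
    set K := ∑ j, ‖(hV i j).boundedPart‖
    have : 0 ≤ K := by positivity
    calc _ ≤ 1 * (2 * K + 1)⁻¹ * K := by
          gcongr
          exact (ContinuousLinearMap.opNorm_comp_le _ _).trans
            (by gcongr; exacts [(hca i).2 t, (hcb i).2 t])
      _ ≤ 1 / 2 := by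
          rw [one_mul, inv_mul_le_iff₀ (by positivity)]
          linarith
  obtain ⟨h, hh, hsol⟩ := exists_weighted_solution (fun _ => by simp) (by simp)
    (fun i => (hca i).1) (fun i => (hcb i).1) (fun i j n => (hV i j).isWeightedSymbol le_rfl) hS
    (by norm_num) (by norm_num) hsmall
  refine ⟨c, hγc, h, fun i n => (hh i n).mono (by simp), fun i t => ?_⟩
  convert hsol i t using 1
  ext x
  rw [weighted_sum_mul_add (zero_add _)]
  simp only [(hV i _).weighted_boundedPart, hSs]

lemma SolvesFactored.cutoff_smul {a b : ℂ} {g y : ℝ → ℂ} {t : ℝ}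
    (h : SolvesFactored (cutoff (R + 1) (t ^ 2) • a) (cutoff (R + 1) (t ^ 2) • b) g y) :
    SolvesFactored a b (fun x => cutoff R (t ^ 2) * g x) fun x => cutoff R (t ^ 2) * y x := by
  rcases le_total (t ^ 2) (R + 1) with ht | ht
  · rw [cutoff_eq_one ht, one_smul, one_smul] at h
    exact h.const_mul _
  · simpa only [cutoff_eq_zero ht, Complex.ofReal_zero, zero_mul] using SolvesFactored.zero

lemma exists_compactly_supported_solution {a b : ι → ℝ → ℂ} {V : ι → ι → ℝ → ℝ}
    {s : ι → ℝ → ℝ → ℂ} {m : ℤ} (ha : ∀ i, ContDiff ℝ ∞ (a i)) (hb : ∀ i, ContDiff ℝ ∞ (b i))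
    (hV : ∀ i j, IsSymbol (fun x => Real.exp (-0 * x)) ⊤ (V i j))
    (hs : ∀ c ≥ γ, ∃ S : ι → ℝ → ℝ →ᵇ ℂ, (∀ i n, IsWeightedSymbol c n 0 (S i)) ∧
      ∀ i t x, weighted c (S i t) x = s i t x) (R : ℝ) :
    ∃ c ≥ γ, ∃ h : ι → ℝ → ℝ →ᵇ ℂ, (∀ i n, IsWeightedSymbol c n m (h i)) ∧
      ∀ i t, SolvesFactored (a i t) (b i t) (fun x => ∑ j, V i j x * weighted c (h j t) x +
        cutoff R (t ^ 2) * s i t x) (weighted c (h i t)) := by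
  obtain ⟨c, hγc, h, hh, hsol⟩ := exists_solution_of_hasOrder_zero
    (fun i => hasOrder_smul_cutoff_sq (R + 1) (ha i))
    (fun i => hasOrder_smul_cutoff_sq (R + 1) (hb i)) hV hs
  have hχ : HasOrder m fun t => cutoff R (t ^ 2) • (1 : ℂ) :=
    hasOrder_smul_cutoff_sq R contDiff_const
  refine ⟨c, hγc, fun i t => (cutoff R (t ^ 2) • (1 : ℂ)) • h i t,
    fun i n => (IsWeightedSymbol.smul hχ (hh i n)).mono (by simp), fun i t => ?_⟩
  convert (hsol i t).cutoff_smul using 1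
  · ext x
    simp only [weighted_smul, Complex.real_smul, mul_one, mul_left_comm, mul_add, Finset.mul_sum]
  · ext x
    rw [weighted_smul, Complex.real_smul, mul_one]

end CutoffSystem

section Profile

variable {E F : Type*} [NormedAddCommGroup E] [NormedSpace ℝ E] [NormedAddCommGroup F]
  [NormedSpace ℝ F] {γ c : ℝ} {m : ℤ}

lemma contDiff_uncurry_iteratedDeriv {y : ℝ → ℝ → E}
    (hy : ContDiff ℝ ∞ fun p : ℝ × ℝ => y p.1 p.2) (k : ℕ) :
    ContDiff ℝ ∞ fun p : ℝ × ℝ => iteratedDeriv k (y p.1) p.2 := by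
  induction k with
  | zero => simpa using hy
  | succ k ih =>
    have hF : ContDiff ℝ ∞ (Function.uncurry fun (p : ℝ × ℝ) x => iteratedDeriv k (y p.1) x) :=
      ih.comp (contDiff_fst.fst.prodMk contDiff_snd)
    simpa only [iteratedDeriv_succ, fderiv_apply_one_eq_deriv] using
      hF.fderiv_apply contDiff_snd (contDiff_const (c := (1 : ℝ))) (by simp)

lemma iteratedDeriv_clm_comp (L : E →L[ℝ] F) {f : ℝ → E} {n : ℕ} (hf : ContDiff ℝ n f) (x : ℝ) :
    iteratedDeriv n (fun s => L (f s)) x = L (iteratedDeriv n f x) := by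
  simp only [iteratedDeriv_eq_iteratedFDeriv]
  exact congrArg (fun M => M fun _ => (1 : ℝ))
    (L.iteratedFDeriv_comp_left hf.contDiffAt le_rfl)

/-- The function `y t x` is jointly smooth and, on `x ≥ 0`, its mixed derivatives decay like
`exp (-γ x)` and are symbols in `t`: the order is `m` for `y`, it is raised by each `x`-derivative
and not changed by `t`-derivatives. -/
structure IsProfile (γ : ℝ) (m : ℤ) (y : ℝ → ℝ → E) : Prop where
  contDiff : ContDiff ℝ ∞ fun p : ℝ × ℝ => y p.1 p.2
  bound : ∀ k l : ℕ, ∃ C, ∀ t x : ℝ, 0 ≤ x →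
    ‖iteratedDeriv l (fun s => iteratedDeriv k (y s) x) t‖ ≤ C * mu t ^ (m + k) * Real.exp (-γ * x)

namespace IsProfile

lemma contDiff_right {y : ℝ → ℝ → E} (hy : IsProfile γ m y) (t : ℝ) : ContDiff ℝ ∞ (y t) :=
  hy.contDiff.comp (contDiff_const.prodMk contDiff_id)

lemma contDiff_iteratedDeriv {y : ℝ → ℝ → E} (hy : IsProfile γ m y) (k : ℕ) (x : ℝ) :
    ContDiff ℝ ∞ fun t => iteratedDeriv k (y t) x :=
  (contDiff_uncurry_iteratedDeriv hy.contDiff k).comp (contDiff_id.prodMk contDiff_const)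

lemma add {y z : ℝ → ℝ → E} (hy : IsProfile γ m y) (hz : IsProfile γ m z) :
    IsProfile γ m fun t x => y t x + z t x where
  contDiff := hy.contDiff.add hz.contDiff
  bound k l := by
    obtain ⟨C, hC⟩ := hy.bound k l
    obtain ⟨D, hD⟩ := hz.bound k l
    refine ⟨C + D, fun t x hx => ?_⟩
    have hsum (s : ℝ) : iteratedDeriv k (fun x => y s x + z s x) x =
        iteratedDeriv k (y s) x + iteratedDeriv k (z s) x :=
      iteratedDeriv_fun_add ((hy.contDiff_right s).of_le (mod_cast le_top)).contDiffAt
        ((hz.contDiff_right s).of_le (mod_cast le_top)).contDiffAt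
    rw [funext hsum, iteratedDeriv_fun_add
      ((hy.contDiff_iteratedDeriv k x).of_le (mod_cast le_top)).contDiffAt
      ((hz.contDiff_iteratedDeriv k x).of_le (mod_cast le_top)).contDiffAt, add_mul, add_mul]
    exact norm_add_le_of_le (hC t x hx) (hD t x hx)

lemma clm {y : ℝ → ℝ → E} (L : E →L[ℝ] F) (hy : IsProfile γ m y) :
    IsProfile γ m fun t x => L (y t x) where
  contDiff := L.contDiff.comp hy.contDiff
  bound k l := by
    obtain ⟨C, hC⟩ := hy.bound k l
    refine ⟨‖L‖ * C, fun t x hx => ?_⟩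
    rw [funext fun s => iteratedDeriv_clm_comp L
        ((hy.contDiff_right s).of_le (mod_cast le_top)) x,
      iteratedDeriv_clm_comp L ((hy.contDiff_iteratedDeriv k x).of_le (mod_cast le_top)),
      mul_assoc, mul_assoc, ← mul_assoc C]
    exact L.le_opNorm_of_le (hC t x hx)

lemma prodMk {y : ℝ → ℝ → E} {z : ℝ → ℝ → F} (hy : IsProfile γ m y) (hz : IsProfile γ m z) :
    IsProfile γ m fun t x => (y t x, z t x) := by
  simpa using (hy.clm (.inl ℝ E F)).add (hz.clm (.inr ℝ E F))

lemma of_isWeightedSymbol (hc : γ ≤ c) {h : ℝ → ℝ →ᵇ ℂ} (H : ∀ n, IsWeightedSymbol c n m h) :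
    IsProfile γ m fun t => weighted c (h t) where
  contDiff := IsWeightedSymbol.contDiff_uncurry H
  bound k l := by
    obtain ⟨hk, hord, heq⟩ := (H k).exists_iteratedDeriv_eq
    obtain ⟨C, hC0, hC⟩ := (hord.2 l le_top).exists_nonneg
    rw [isBigOWith_top] at hC
    refine ⟨C, fun t x hx => ?_⟩
    have hmu := mu_pos t
    simp only [heq, ← weightedEval_apply]
    rw [iteratedDeriv_clm_comp _ (hord.contDiff.of_le (mod_cast le_top)), weightedEval_apply]
    refine (norm_weighted_le ..).trans (mul_le_mul ?_ ?_ (Real.exp_pos _).le (by positivity))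
    · simpa [abs_of_pos hmu] using hC t
    · exact Real.exp_le_exp.2 (by nlinarith)

end IsProfile

variable {ι : Type*} [Fintype ι]

lemma exists_weighted_cutoff_mul {V : ι → ℝ → ℝ} {u : ℝ → ℝ} {h : ι → ℝ → ℝ →ᵇ ℂ} (hγ : 0 ≤ γ)
    (hV : ∀ j, IsDecaying γ (V j)) (hu : IsDecaying γ u)
    (hh : ∀ j n, IsWeightedSymbol γ n 0 (h j)) (R : ℝ) (hc : γ ≤ c) :
    ∃ S : ℝ → ℝ →ᵇ ℂ, (∀ n, IsWeightedSymbol c n 0 S) ∧ ∀ t x,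
      weighted c (S t) x = cutoff R x * (∑ j, V j x * weighted γ (h j t) x + u x) := by
  have hζV (j : ι) := (hV j).cutoff_mul hγ (sub_nonneg.2 hc) R
  have hζu := hu.cutoff_mul hγ (hγ.trans hc) R
  refine ⟨fun t => ∑ j, (hζV j).boundedPart * h j t + hζu.boundedPart, fun n => ?_, fun t x => ?_⟩
  · refine (IsWeightedSymbol.sum _ fun j _ => ?_).add (hζu.isWeightedSymbol le_rfl)
    simpa using ((hζV j).isWeightedSymbol (n := n) le_rfl).mul (hh j n)
  · rw [weighted_sum_mul_add (sub_add_cancel c γ), hζu.weighted_boundedPart]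
    simp only [(hζV _).weighted_boundedPart, mul_add, Finset.mul_sum, Complex.ofReal_mul, mul_assoc]

lemma exists_profile {k : ι → ℤ} {a b : ι → ℝ → ℂ} {V : ι → ι → ℝ → ℝ} {u : ι → ℝ → ℝ}
    (hγ : 0 < γ) (hk : ∀ i, k i ∈ Icc (0 : ℤ) 1) (ha : ∀ i, IsElliptic γ (k i) (a i))
    (hb : ∀ i, IsElliptic γ 1 (b i)) (hV : ∀ i j, IsDecaying γ (V i j))
    (hu : ∀ i, IsDecaying γ (u i)) :
    ∃ W : ι → ℝ → ℝ → ℂ, (∀ i, IsProfile γ (-1) (W i)) ∧ ∀ i t,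
      SolvesFactored (a i t) (b i t) (fun x => ∑ j, V i j x * W j t x + u i x) (W i t) := by
  obtain ⟨R, h, hh, hsol⟩ := exists_cutoff_solution hγ hk ha hb hV hu
  obtain ⟨c, hc, g, hg, gsol⟩ := exists_compactly_supported_solution (m := -1) (γ := γ)
    (s := fun i t x => cutoff R x * (∑ j, V i j x * weighted γ (h j t) x + u i x))
    (fun i => (ha i).hasOrder.contDiff) (fun i => (hb i).hasOrder.contDiff)
    (fun i j => (hV i j).isSymbol_exp le_rfl hγ.le)
    (fun c hc => by
      choose S hS using fun i => exists_weighted_cutoff_mul hγ.le (hV i) (hu i)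
        (fun j n => (hh j n).mono (by norm_num)) R hc
      exact ⟨S, fun i => (hS i).1, fun i => (hS i).2⟩) R
  refine ⟨fun i t x => weighted γ (h i t) x + weighted c (g i t) x,
    fun i => (IsProfile.of_isWeightedSymbol le_rfl (hh i)).add (.of_isWeightedSymbol hc (hg i)),
    fun i t => ?_⟩
  convert (hsol i t).add (gsol i t) using 1
  ext x
  simp only [mul_add, Finset.sum_add_distrib, phaseCutoff]
  push_cast
  ring

end Profile

section MatrixSystem

variable {γ t : ℝ} {V₁ V₂ : ℝ → ℝ}

lemma isElliptic_mul_mu_add {r : ℝ} (s : ℝ) (hγ0 : 0 ≤ γ) (hγ : γ < r * √2) :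
    IsElliptic γ 1 fun t => r * mu t + s * t * Complex.I := by
  have hδ : 0 < r - γ / √2 := sub_pos.2 ((div_lt_iff₀ (by positivity)).2 hγ)
  have hgap (t : ℝ) : (r - γ / √2) * mu t ≤ r * mu t - γ := by
    have : γ / √2 * √2 ≤ γ / √2 * mu t := by gcongr; exact sqrt_two_le_mu t
    rw [div_mul_cancel₀ γ (by positivity)] at this
    linarith
  have hgap_pos (t : ℝ) : 0 < (r - γ / √2) * mu t := mul_pos hδ (mu_pos t)
  have hre (t : ℝ) : (r * mu t + s * t * Complex.I : ℂ).re = r * mu t := by simp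
  have horder : HasOrder 1 fun t => mu t • (r : ℂ) + t • (s * Complex.I) :=
    (HasOrder.mu.clm (.toSpanSingleton ℝ (r : ℂ))).add
      (HasOrder.id.clm (.toSpanSingleton ℝ (s * Complex.I)))
  refine ⟨?_, fun t => ?_, isBigO_of_le' (c := (r - γ / √2)⁻¹) _ fun t => ?_⟩
  · simpa only [Complex.real_smul, mul_comm, mul_left_comm] using horder
  · rw [hre]
    linarith [hgap t, hgap_pos t]
  · rw [hre, norm_inv, zpow_neg_one, norm_inv, Real.norm_of_nonneg (mu_pos t).le, ← mul_inv,
      Real.norm_of_nonneg ((hgap_pos t).le.trans (hgap t))]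
    exact inv_anti₀ (hgap_pos t) (hgap t)

lemma isElliptic_zero (hγ : 0 < γ) : IsElliptic γ 0 fun _ => 0 :=
  ⟨IsSymbol.zero, fun _ => hγ.ne, by
    simpa using isBigO_const_const (-γ⁻¹) (one_ne_zero (α := ℝ)) ⊤⟩

/-- The factored form of `ℋ f = (1 + t ^ 2) f` for `f = exp (mu t * x) • y`. -/
def SolvesConjugated (V₁ V₂ : ℝ → ℝ) (t : ℝ) (y₁ y₂ : ℝ → ℂ) : Prop :=
  SolvesFactored (mu t + t * Complex.I) (mu t - t * Complex.I)
      (fun x => V₁ x * y₁ x + V₂ x * y₂ x) y₁ ∧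
    SolvesFactored 0 (2 * mu t) (fun x => V₂ x * y₁ x + V₁ x * y₂ x) y₂

lemma SolvesConjugated.isSolution {y₁ y₂ : ℝ → ℂ} (h : SolvesConjugated V₁ V₂ t y₁ y₂)
    (hy₁ : ContDiff ℝ 2 y₁) (hy₂ : ContDiff ℝ 2 y₂) :
    IsSolution V₁ V₂ ((1 + t ^ 2 : ℝ) : ℂ) fun x => Real.exp (mu t * x) • (y₁ x, y₂ x) := by
  refine ⟨by fun_prop, fun x => ?_⟩
  have h₁ := (h.1.cexp_mul (mu t)).iteratedDeriv_two (by ring) x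
  have h₂ := (h.2.cexp_mul (mu t)).iteratedDeriv_two (by ring) x
  have hmu : (mu t : ℂ) ^ 2 = t ^ 2 + 2 := mod_cast mu_sq t
  simp only [matH, Prod.smul_mk, Complex.real_smul, smul_eq_mul, Complex.ofReal_exp,
    Complex.ofReal_mul, h₁, h₂, add_sub_cancel_left, zero_sub, neg_sq, hmu, mul_pow,
    Complex.I_sq]
  push_cast
  ext <;> ring

lemma exists_profile_solvesConjugated (hγ0 : 0 < γ) (hγ : γ < √2) (hV₁ : IsDecaying γ V₁)
    (hV₂ : IsDecaying γ V₂) :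
    ∃ W₁ W₂ : ℝ → ℝ → ℂ, IsProfile γ (-1) W₁ ∧ IsProfile γ (-1) W₂ ∧
      ∀ t, SolvesConjugated V₁ V₂ t (W₁ t) fun x => W₂ t x + 1 := by
  obtain ⟨W, hW, hsol⟩ := exists_profile (k := ![1, 0])
    (a := ![fun t => (1 : ℝ) * mu t + (1 : ℝ) * t * Complex.I, fun _ => 0])
    (b := ![fun t => (1 : ℝ) * mu t + (-1 : ℝ) * t * Complex.I,
      fun t => (2 : ℝ) * mu t + (0 : ℝ) * t * Complex.I])
    (V := !![V₁, V₂; V₂, V₁]) (u := ![V₂, V₁]) hγ0 (by simp [Fin.forall_fin_two])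
    (Fin.forall_fin_two.2 ⟨isElliptic_mul_mu_add 1 hγ0.le (by linarith), isElliptic_zero hγ0⟩)
    (Fin.forall_fin_two.2 ⟨isElliptic_mul_mu_add _ hγ0.le (by linarith),
      isElliptic_mul_mu_add 0 hγ0.le (by linarith [Real.sqrt_nonneg 2])⟩)
    (by simp [Fin.forall_fin_two, hV₁, hV₂]) (by simp [Fin.forall_fin_two, hV₁, hV₂])
  refine ⟨W 0, W 1, hW 0, hW 1, fun t => ⟨?_, ?_⟩⟩
  · simpa [mul_add, add_assoc, sub_eq_add_neg] using hsol 0 t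
  · simpa [mul_add, add_assoc] using (hsol 1 t).add (SolvesFactored.const 1)

lemma PotentialHyp.isDecaying (hV : PotentialHyp γ V₁ V₂) : IsDecaying γ V₁ ∧ IsDecaying γ V₂ := by
  obtain ⟨hγ, -, hV₁, hV₂, -, -, hdecay⟩ := hV
  have bound {v w : ℝ → ℝ} {C : ℝ} (h : ∀ x, |v x| + |w x| ≤ C * Real.exp (-γ * |x|)) :
      v =O[⊤] fun x => Real.exp (-γ * max x 0) := by
    refine isBigO_top.2 ⟨|C|, fun x => ?_⟩
    rw [Real.norm_of_nonneg (Real.exp_pos _).le]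
    have : max x 0 ≤ |x| := max_le (le_abs_self x) (abs_nonneg x)
    calc |v x| ≤ C * Real.exp (-γ * |x|) := by linarith [h x, abs_nonneg (w x)]
      _ ≤ |C| * Real.exp (-γ * max x 0) :=
        mul_le_mul (le_abs_self C) (Real.exp_le_exp.2 (by nlinarith)) (Real.exp_pos _).le
          (abs_nonneg C)
  refine ⟨⟨hV₁, fun l _ => ?_⟩, ⟨hV₂, fun l _ => ?_⟩⟩
  · exact bound (hdecay l).choose_spec
  · exact bound fun x => (add_comm _ _).trans_le ((hdecay l).choose_spec x)

end MatrixSystem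

end MatrixSchrodinger

open MatrixSchrodinger in
theorem stmt_6_general (γ : ℝ) (V₁ V₂ : ℝ → ℝ) (hγ0 : 0 < γ) (hγ : γ < √2)
    (hV₁ : IsDecaying γ V₁) (hV₂ : IsDecaying γ V₂) :
    ∃ f₄t : ℝ → ℝ → ℂ × ℂ,
      ContDiff ℝ (⊤ : ℕ∞) (fun p : ℝ × ℝ => f₄t p.1 p.2) ∧
      (∀ lam : ℝ, IsSolution V₁ V₂ ((1 + lam ^ 2 : ℝ) : ℂ) (fun x => f₄t x lam)) ∧
      ∀ k l : ℕ, ∃ C : ℝ, ∀ lam x : ℝ, 0 ≤ x →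
        ‖iteratedDeriv l (fun m : ℝ => iteratedDeriv k
            (fun y : ℝ => Real.exp (-(mu m) * y) • f₄t y m - ((0 : ℂ), (1 : ℂ))) x) lam‖
          ≤ C * mu lam ^ ((k : ℝ) - 1) * Real.exp (-γ * x) := by
  obtain ⟨W₁, W₂, hW₁, hW₂, hsol⟩ := exists_profile_solvesConjugated hγ0 hγ hV₁ hV₂
  refine ⟨fun x t => Real.exp (mu t * x) • (W₁ t x, W₂ t x + 1), ?_, fun t => ?_, fun k l => ?_⟩
  · have hswap : ContDiff ℝ (⊤ : ℕ∞) (Prod.swap : ℝ × ℝ → ℝ × ℝ) := contDiff_snd.prodMk contDiff_fst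
    exact ((contDiff_mu.comp contDiff_snd).mul contDiff_fst).exp.smul
      ((hW₁.contDiff.comp hswap).prodMk ((hW₂.contDiff.comp hswap).add contDiff_const))
  · exact (hsol t).isSolution ((hW₁.contDiff_right t).of_le ENat.LEInfty.out)
      (((hW₂.contDiff_right t).of_le ENat.LEInfty.out).add contDiff_const)
  · obtain ⟨C, hC⟩ := (hW₁.prodMk hW₂).bound k l
    refine ⟨C, fun t x hx => ?_⟩
    have hpow : mu t ^ ((k : ℝ) - 1) = mu t ^ (-1 + k : ℤ) := by
      rw [← Real.rpow_intCast]
      push_cast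
      ring_nf
    have hcancel (s y : ℝ) : Real.exp (-mu s * y) • Real.exp (mu s * y) • (W₁ s y, W₂ s y + 1) -
        ((0 : ℂ), (1 : ℂ)) = (W₁ s y, W₂ s y) := by
      rw [smul_smul, ← Real.exp_add]
      simp
    simpa only [hcancel, hpow] using hC t x hx

theorem stmt_6 (γ : ℝ) (V₁ V₂ : ℝ → ℝ) (hV : PotentialHyp γ V₁ V₂) :
    ∃ x1 lam1 : ℝ, 0 ≤ x1 ∧ 0 ≤ lam1 ∧
      ∃ f₄t : ℝ → ℝ → ℂ × ℂ,
        ContDiff ℝ (⊤ : ℕ∞) (fun p : ℝ × ℝ => f₄t p.1 p.2) ∧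
        (∀ lam : ℝ, IsSolution V₁ V₂ (((1 + lam ^ 2 : ℝ) : ℂ)) (fun x => f₄t x lam)) ∧
        (∀ k l : ℕ, ∃ C : ℝ,
          (∀ lam x : ℝ, x1 ≤ x →
            ‖iteratedDeriv l
                (fun m : ℝ => iteratedDeriv k
                  (fun y : ℝ => Real.exp (-(mu m) * y) • f₄t y m
                    - ((0 : ℂ), (1 : ℂ))) x) lam‖
              ≤ C * mu lam ^ ((k : ℝ) - 1) * (1 + x) ^ l * Real.exp (-γ * x)) ∧
          (∀ lam x : ℝ, lam1 ≤ |lam| → 0 ≤ x →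
            ‖iteratedDeriv l
                (fun m : ℝ => iteratedDeriv k
                  (fun y : ℝ => Real.exp (-(mu m) * y) • f₄t y m
                    - ((0 : ℂ), (1 : ℂ))) x) lam‖
              ≤ C * mu lam ^ ((k : ℝ) - 1) * (1 + x) ^ l * Real.exp (-γ * x))) := by
  obtain ⟨hV₁, hV₂⟩ := MatrixSchrodinger.PotentialHyp.isDecaying hV
  have hγ : γ < √2 := hV.2.1.trans (Real.lt_sqrt_of_sq_lt (by norm_num))
  obtain ⟨f, hf, hsol, hbound⟩ := stmt_6_general γ V₁ V₂ hV.1 hγ hV₁ hV₂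
  refine ⟨0, 0, le_rfl, le_rfl, f, hf, hsol, fun k l => ?_⟩
  obtain ⟨C, hC⟩ := hbound k l
  have hC' (lam x : ℝ) (hx : 0 ≤ x) := (hC lam x hx).trans <|
    mul_le_mul_of_nonneg_right (le_mul_of_one_le_right
      (nonneg_of_mul_nonneg_left ((norm_nonneg _).trans (hC lam x hx)) (Real.exp_pos _))
      (one_le_pow₀ (n := l) (le_add_of_nonneg_right hx))) (Real.exp_pos _).le
  exact ⟨C, hC', fun lam x _ hx => hC' lam x hx⟩
end
end

section
/- Let λ ≠ 0, adopt the Jost/matrix-solution setup of the context, and assume in addition that f₃(·,λ) and f̃₄(·,λ) are invariant under componentwise complex conjugation. With A = A(λ), B = B(λ) the unique matrices satisfying F₁ = G₁A + G₂B, the following relations hold (A* denotes the conjugate transpose): (i) −2iλp = −2iλ A*pA − 2μ A*qB + 2μ B*qA + 2iλ B*pB; (ii) Aᵀ(2iλp − 2μq)B = Bᵀ(2iλp − 2μq)A; (iii) 2μ A*q − 2iλ B*p = 2μ qA + 2iλ pB. -/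
noncomputable section

open Real MeasureTheory Matrix

/-- Componentwise complex conjugation of a `ℂ²`-valued function. -/
def conj2 (f : ℝ → ℂ × ℂ) : ℝ → ℂ × ℂ :=
  fun x => (starRingEnd ℂ (f x).1, starRingEnd ℂ (f x).2)

/-- The (bilinear, unconjugated) Wronskian
`W[f,g](x) = f₁'g₁ + f₂'g₂ − f₁g₁' − f₂g₂'`. -/
def Wr (f g : ℝ → ℂ × ℂ) (x : ℝ) : ℂ :=
  deriv (fun y => (f y).1) x * (g x).1 + deriv (fun y => (f y).2) x * (g x).2
    - (f x).1 * deriv (fun y => (g y).1) x - (f x).2 * deriv (fun y => (g y).2) x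

/-- The Jost-type asymptotics of `f₁(·,λ), f₃(·,λ), f̃₄(·,λ)` for a fixed `λ`. -/
def JostAsymp (γ lam : ℝ) (f₁ f₃ f₄t : ℝ → ℂ × ℂ) : Prop :=
  ∃ x0 C : ℝ, 0 ≤ x0 ∧ 0 < C ∧ ∀ j : ℕ, j ≤ 1 → ∀ x : ℝ, x0 ≤ x →
    ‖iteratedDeriv j
        (fun y : ℝ => Complex.exp (-Complex.I * (lam : ℂ) * (y : ℂ)) • f₁ y
          - ((1 : ℂ), (0 : ℂ))) x‖
      ≤ C * mu lam ^ ((j : ℝ) - 1) * Real.exp (-γ * x) ∧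
    ‖iteratedDeriv j
        (fun y : ℝ => Real.exp (mu lam * y) • f₃ y - ((0 : ℂ), (1 : ℂ))) x‖
      ≤ C * mu lam ^ ((j : ℝ) - 1) * Real.exp (-γ * x) ∧
    ‖iteratedDeriv j
        (fun y : ℝ => Real.exp (-(mu lam) * y) • f₄t y - ((0 : ℂ), (1 : ℂ))) x‖
      ≤ C * mu lam ^ ((j : ℝ) - 1) * Real.exp (-γ * x)

/-- Entrywise derivative of a matrix-valued function. -/
def mderiv (F : ℝ → Matrix (Fin 2) (Fin 2) ℂ) (x : ℝ) : Matrix (Fin 2) (Fin 2) ℂ :=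
  Matrix.of fun i j => deriv (fun y => F y i j) x

/-- The matrix Wronskian `𝒲[F,G](x) = F'(x)ᵀ G(x) − F(x)ᵀ G'(x)`. -/
def mWr (F G : ℝ → Matrix (Fin 2) (Fin 2) ℂ) (x : ℝ) : Matrix (Fin 2) (Fin 2) ℂ :=
  (mderiv F x)ᵀ * G x - (F x)ᵀ * mderiv G x

/-- The 2×2 matrix-valued function with columns `u` and `v`. -/
def matOf (u v : ℝ → ℂ × ℂ) (x : ℝ) : Matrix (Fin 2) (Fin 2) ℂ :=
  !![(u x).1, (v x).1; (u x).2, (v x).2]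

/-- `p = diag(1,0)`. -/
def pmat : Matrix (Fin 2) (Fin 2) ℂ := !![1, 0; 0, 0]

/-- `q = diag(0,1)`. -/
def qmat : Matrix (Fin 2) (Fin 2) ℂ := !![0, 0; 0, 1]

/-- `f₄ := f̃₄ − c₁ f₁ − c₂ f₂` where `f₂ = conj2 f₁`. -/
def f4def (f₁ f₄t : ℝ → ℂ × ℂ) (c₁ c₂ : ℂ) : ℝ → ℂ × ℂ :=
  fun y => f₄t y - c₁ • f₁ y - c₂ • conj2 f₁ y

/-! Everything is read off from Wronskians. The Wronskian of two solutions is constant, so it can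
be evaluated at `+∞` from the asymptotics of the solutions and their derivatives: exponents with
`a + b = 0` leave the limit `(a - b) ⟨v, w⟩`, and exponents with `Re (a + b) < 0` leave `0`. This,
with the normalisation of `f₄`, gives every Wronskian between `f₁, f̄₁, f₃, f₄`; in particular
`c₁ = c̄₂`, hence `f₄` is real.

Reflection `x ↦ -x` changes the sign of a Wronskian. Hence a relation `F = G(-·) A + F(-·) B`,
paired with itself, with its complex conjugate, and with the conjugate of `F(-·)`, expresses matrix
Wronskians through themselves; at `x = 0` these are the three identities. -/

section Calculus

open Filter Topology

theorem hasDerivAt_fst_comp {E F : Type*} [NormedAddCommGroup E] [NormedSpace ℝ E]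
    [NormedAddCommGroup F] [NormedSpace ℝ F] {f : ℝ → E × F} {f' : E × F} {x : ℝ}
    (hf : HasDerivAt f f' x) : HasDerivAt (fun y => (f y).1) f'.1 x := by
  simpa using hf.hasFDerivAt.fst.hasDerivAt

theorem hasDerivAt_snd_comp {E F : Type*} [NormedAddCommGroup E] [NormedSpace ℝ E]
    [NormedAddCommGroup F] [NormedSpace ℝ F] {f : ℝ → E × F} {f' : E × F} {x : ℝ}
    (hf : HasDerivAt f f' x) : HasDerivAt (fun y => (f y).2) f'.2 x := by
  simpa using hf.hasFDerivAt.snd.hasDerivAt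

theorem hasDerivAt_cexp_mul_ofReal (a : ℂ) (x : ℝ) :
    HasDerivAt (fun y : ℝ => Complex.exp (a * y)) (Complex.exp (a * x) * a) x := by
  simpa using ((Complex.ofRealCLM.hasDerivAt (x := x)).const_mul a).cexp

theorem tendsto_cexp_mul_ofReal_atTop {a : ℂ} (ha : a.re < 0) :
    Tendsto (fun x : ℝ => Complex.exp (a * x)) atTop (𝓝 0) := by
  rw [Complex.tendsto_exp_nhds_zero_iff]
  simpa using tendsto_id.const_mul_atTop_of_neg ha

theorem tendsto_zero_of_norm_le_mul_exp {E : Type*} [SeminormedAddCommGroup E] {g : ℝ → E}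
    {γ C x₀ : ℝ} (hγ : 0 < γ) (hg : ∀ x, x₀ ≤ x → ‖g x‖ ≤ C * Real.exp (-γ * x)) :
    Tendsto g atTop (𝓝 0) := by
  have hexp : Tendsto (fun x : ℝ => Real.exp (-γ * x)) atTop (𝓝 0) :=
    Real.tendsto_exp_atBot.comp (tendsto_id.const_mul_atTop_of_neg (neg_lt_zero.2 hγ))
  exact squeeze_zero_norm' ((eventually_ge_atTop x₀).mono hg) (by simpa using hexp.const_mul C)

end Calculus

section ExponentialAsymptotics

open Filter Topology

variable {E : Type*} [NormedAddCommGroup E] [NormedSpace ℝ E] [NormedSpace ℂ E]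
  {a : ℂ} {v : E} {f : ℝ → E}

/-- `f(x) ~ e^(ax) v` and `f'(x) ~ a e^(ax) v` as `x → +∞`. -/
structure HasExpAsymptotics (a : ℂ) (v : E) (f : ℝ → E) : Prop where
  tendsto : Tendsto (fun x : ℝ => Complex.exp (-a * x) • f x) atTop (𝓝 v)
  tendsto_deriv : Tendsto (fun x : ℝ => Complex.exp (-a * x) • deriv f x) atTop (𝓝 (a • v))

theorem HasExpAsymptotics.of_tendsto_deriv_zero [IsScalarTower ℝ ℂ E] (hf : Differentiable ℝ f)
    (h₀ : Tendsto (fun x : ℝ => Complex.exp (-a * x) • f x) atTop (𝓝 v))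
    (h₁ : Tendsto (deriv fun x : ℝ => Complex.exp (-a * x) • f x) atTop (𝓝 0)) :
    HasExpAsymptotics a v f where
  tendsto := h₀
  tendsto_deriv := by
    have hderiv (x : ℝ) : Complex.exp (-a * x) • deriv f x
        = deriv (fun y : ℝ => Complex.exp (-a * y) • f y) x
          + a • Complex.exp (-a * x) • f x := by
      rw [((hasDerivAt_cexp_mul_ofReal (-a) x).fun_smul (hf x).hasDerivAt).deriv]
      module
    simpa only [hderiv, zero_add] using h₁.add (h₀.const_smul a)

theorem HasExpAsymptotics.of_norm_iteratedDeriv_le [IsScalarTower ℝ ℂ E] {γ x₀ : ℝ} {C : ℕ → ℝ}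
    (hγ : 0 < γ) (hf : Differentiable ℝ f)
    (h : ∀ j ≤ 1, ∀ x, x₀ ≤ x →
      ‖iteratedDeriv j (fun y : ℝ => Complex.exp (-a * y) • f y - v) x‖
        ≤ C j * Real.exp (-γ * x)) :
    HasExpAsymptotics a v f := by
  have h₀ := tendsto_zero_of_norm_le_mul_exp hγ (h 0 zero_le_one)
  have h₁ := tendsto_zero_of_norm_le_mul_exp hγ (h 1 le_rfl)
  simp only [iteratedDeriv_zero] at h₀
  simp only [iteratedDeriv_one, deriv_sub_const_fun] at h₁
  exact .of_tendsto_deriv_zero hf (tendsto_sub_nhds_zero_iff.1 h₀) h₁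

protected theorem HasExpAsymptotics.star [StarAddMonoid E] [StarModule ℝ E] [StarModule ℂ E]
    [ContinuousStar E] (h : HasExpAsymptotics a v f) :
    HasExpAsymptotics (star a) (star v) (fun x => star (f x)) where
  tendsto := by
    simpa [star_smul, ← Complex.exp_conj] using h.tendsto.star
  tendsto_deriv := by
    simpa [star_smul, ← Complex.exp_conj] using h.tendsto_deriv.star

theorem JostAsymp.hasExpAsymptotics {γ lam : ℝ} {f₁ f₃ f₄t : ℝ → ℂ × ℂ} (hγ : 0 < γ)
    (h₁ : Differentiable ℝ f₁) (h₃ : Differentiable ℝ f₃) (h₄ : Differentiable ℝ f₄t)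
    (h : JostAsymp γ lam f₁ f₃ f₄t) :
    HasExpAsymptotics (Complex.I * lam) (1, 0) f₁ ∧
      HasExpAsymptotics (-(mu lam : ℂ)) (0, 1) f₃ ∧
      HasExpAsymptotics (mu lam : ℂ) (0, 1) f₄t := by
  obtain ⟨x₀, C, -, -, hbound⟩ := h
  have cexp_smul (t y : ℝ) (w : ℂ × ℂ) :
      Complex.exp ((t : ℂ) * y) • w = Real.exp (t * y) • w := by
    rw [← Complex.coe_smul, Complex.ofReal_exp, Complex.ofReal_mul]
  let bound (j : ℕ) : ℝ := C * mu lam ^ ((j : ℝ) - 1)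
  refine ⟨.of_norm_iteratedDeriv_le (x₀ := x₀) (C := bound) hγ h₁ fun j hj x hx => ?_,
    .of_norm_iteratedDeriv_le (x₀ := x₀) (C := bound) hγ h₃ fun j hj x hx => ?_,
    .of_norm_iteratedDeriv_le (x₀ := x₀) (C := bound) hγ h₄ fun j hj x hx => ?_⟩
  · simpa only [neg_mul] using (hbound j hj x hx).1
  · simpa only [neg_neg, cexp_smul] using (hbound j hj x hx).2.1
  · simpa only [← Complex.ofReal_neg, cexp_smul] using (hbound j hj x hx).2.2

theorem mu_pos (lam : ℝ) : 0 < mu lam :=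
  Real.sqrt_pos.2 (by positivity)

end ExponentialAsymptotics

section Solutions

variable {V₁ V₂ : ℝ → ℝ} {z : ℂ} {f : ℝ → ℂ × ℂ}

theorem conj2_eq_star (f : ℝ → ℂ × ℂ) : conj2 f = fun x => star (f x) := rfl

theorem conj2_conj2 (f : ℝ → ℂ × ℂ) : conj2 (conj2 f) = f :=
  funext fun x => star_star (f x)

theorem matH_conj2 (V₁ V₂ : ℝ → ℝ) (f : ℝ → ℂ × ℂ) (x : ℝ) :
    matH V₁ V₂ (conj2 f) x = star (matH V₁ V₂ f x) := by
  have star_ofReal (r : ℝ) : star (r : ℂ) = r := Complex.conj_ofReal r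
  ext <;> simp [matH, conj2, starRingEnd_apply, iteratedDeriv_succ, star_ofReal,
    -RCLike.star_def, -Complex.star_def]

theorem differentiable_conj2 (hf : Differentiable ℝ f) : Differentiable ℝ (conj2 f) :=
  hf.star

theorem IsSolution.differentiable (hf : IsSolution V₁ V₂ z f) : Differentiable ℝ f :=
  hf.1.differentiable two_ne_zero

protected theorem IsSolution.conj2 (hf : IsSolution V₁ V₂ z f) :
    IsSolution V₁ V₂ (star z) (conj2 f) := by
  refine ⟨(starL' ℝ : (ℂ × ℂ) ≃L[ℝ] (ℂ × ℂ)).contDiff.comp hf.1, fun x => ?_⟩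
  rw [matH_conj2, hf.2 x, star_smul, conj2_eq_star]

theorem IsSolution.hasDerivAt_deriv (hf : IsSolution V₁ V₂ z f) (x : ℝ) :
    HasDerivAt (deriv f) ((1 + V₁ x - z) * (f x).1 + V₂ x * (f x).2,
      V₂ x * (f x).1 + (1 + V₁ x + z) * (f x).2) x := by
  have hdiff : Differentiable ℝ (deriv f) :=
    (hf.1.deriv' (n := 1)).differentiable one_ne_zero
  have hfst : deriv (fun y => (f y).1) = fun y => (deriv f y).1 :=
    funext fun y => (hasDerivAt_fst_comp (hf.differentiable y).hasDerivAt).deriv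
  have hsnd : deriv (fun y => (f y).2) = fun y => (deriv f y).2 :=
    funext fun y => (hasDerivAt_snd_comp (hf.differentiable y).hasDerivAt).deriv
  have heq := hf.2 x
  simp only [matH, iteratedDeriv_succ, iteratedDeriv_zero, hfst, hsnd, Prod.ext_iff,
    (hasDerivAt_fst_comp (hdiff x).hasDerivAt).deriv,
    (hasDerivAt_snd_comp (hdiff x).hasDerivAt).deriv, Prod.smul_fst, Prod.smul_snd,
    smul_eq_mul] at heq
  refine (hdiff x).hasDerivAt.congr_deriv (Prod.ext ?_ ?_)
  · linear_combination -heq.1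
  · linear_combination heq.2

end Solutions

section ScalarWronskian

open Filter Topology

variable {f g : ℝ → ℂ × ℂ} {x : ℝ}

theorem Wr_eq_of_differentiableAt (hf : DifferentiableAt ℝ f x) (hg : DifferentiableAt ℝ g x) :
    Wr f g x = (deriv f x).1 * (g x).1 + (deriv f x).2 * (g x).2
      - (f x).1 * (deriv g x).1 - (f x).2 * (deriv g x).2 := by
  rw [Wr, (hasDerivAt_fst_comp hf.hasDerivAt).deriv, (hasDerivAt_snd_comp hf.hasDerivAt).deriv,
    (hasDerivAt_fst_comp hg.hasDerivAt).deriv, (hasDerivAt_snd_comp hg.hasDerivAt).deriv]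

theorem Wr_self (f : ℝ → ℂ × ℂ) (x : ℝ) : Wr f f x = 0 := by
  rw [Wr]; ring

theorem Wr_swap (f g : ℝ → ℂ × ℂ) (x : ℝ) : Wr g f x = -Wr f g x := by
  rw [Wr, Wr]; ring

theorem Wr_conj2 (f g : ℝ → ℂ × ℂ) (x : ℝ) :
    Wr (conj2 f) (conj2 g) x = starRingEnd ℂ (Wr f g x) := by
  simp [Wr, conj2, starRingEnd_apply, -RCLike.star_def, -Complex.star_def]

theorem Wr_f4def_right {f₁ f₄t : ℝ → ℂ × ℂ} (hf₁ : DifferentiableAt ℝ f₁ x)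
    (hf₄ : DifferentiableAt ℝ f₄t x) (h : ℝ → ℂ × ℂ) (c₁ c₂ : ℂ) :
    Wr h (f4def f₁ f₄t c₁ c₂) x
      = Wr h f₄t x - c₁ * Wr h f₁ x - c₂ * Wr h (conj2 f₁) x := by
  have hfst := ((hf₄.fst.hasDerivAt.sub (hf₁.fst.hasDerivAt.const_mul c₁)).sub
    (hf₁.star.fst.hasDerivAt.const_mul c₂)).deriv
  have hsnd := ((hf₄.snd.hasDerivAt.sub (hf₁.snd.hasDerivAt.const_mul c₁)).sub
    (hf₁.star.snd.hasDerivAt.const_mul c₂)).deriv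
  change deriv (fun y => (f4def f₁ f₄t c₁ c₂ y).1) x = _ at hfst
  change deriv (fun y => (f4def f₁ f₄t c₁ c₂ y).2) x = _ at hsnd
  rw [Wr, hfst, hsnd]
  simp only [Wr, f4def, conj2_eq_star, Prod.fst_sub, Prod.snd_sub, Prod.smul_fst,
    Prod.smul_snd, smul_eq_mul]
  ring

theorem HasExpAsymptotics.tendsto_Wr {a b : ℂ} {v w : ℂ × ℂ} (hf : Differentiable ℝ f)
    (hg : Differentiable ℝ g) (hfa : HasExpAsymptotics a v f) (hgb : HasExpAsymptotics b w g) :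
    Tendsto (fun x : ℝ => Complex.exp (-(a + b) * x) * Wr f g x) atTop
      (𝓝 ((a - b) * (v.1 * w.1 + v.2 * w.2))) := by
  have lim := (((hfa.tendsto_deriv.fst_nhds.mul hgb.tendsto.fst_nhds).add
    (hfa.tendsto_deriv.snd_nhds.mul hgb.tendsto.snd_nhds)).sub
    (hfa.tendsto.fst_nhds.mul hgb.tendsto_deriv.fst_nhds)).sub
    (hfa.tendsto.snd_nhds.mul hgb.tendsto_deriv.snd_nhds)
  convert lim using 2 with x
  · rw [Wr_eq_of_differentiableAt (hf x) (hg x), neg_add, add_mul, Complex.exp_add]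
    simp only [Prod.smul_fst, Prod.smul_snd, smul_eq_mul]
    ring
  · simp only [Prod.smul_fst, Prod.smul_snd, smul_eq_mul]
    ring

namespace IsSolution

variable {V₁ V₂ : ℝ → ℝ} {z a b : ℂ} {v w : ℂ × ℂ}

theorem Wr_eq_Wr (hf : IsSolution V₁ V₂ z f) (hg : IsSolution V₁ V₂ z g) (x y : ℝ) :
    Wr f g x = Wr f g y := by
  have hWr : Wr f g = fun x => (deriv f x).1 * (g x).1 + (deriv f x).2 * (g x).2
      - (f x).1 * (deriv g x).1 - (f x).2 * (deriv g x).2 :=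
    funext fun x => Wr_eq_of_differentiableAt (hf.differentiable x) (hg.differentiable x)
  have hderiv (x : ℝ) : HasDerivAt (Wr f g) 0 x := by
    have f' := (hf.differentiable x).hasDerivAt
    have g' := (hg.differentiable x).hasDerivAt
    have f'' := hf.hasDerivAt_deriv x
    have g'' := hg.hasDerivAt_deriv x
    rw [hWr]
    refine (((((hasDerivAt_fst_comp f'').mul (hasDerivAt_fst_comp g')).add
      ((hasDerivAt_snd_comp f'').mul (hasDerivAt_snd_comp g'))).sub
      ((hasDerivAt_fst_comp f').mul (hasDerivAt_fst_comp g''))).sub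
      ((hasDerivAt_snd_comp f').mul (hasDerivAt_snd_comp g''))).congr_deriv ?_
    ring
  exact is_const_of_deriv_eq_zero (fun x => (hderiv x).differentiableAt)
    (fun x => (hderiv x).deriv) x y

theorem Wr_eq_of_add_eq_zero (hf : IsSolution V₁ V₂ z f) (hg : IsSolution V₁ V₂ z g)
    (hfa : HasExpAsymptotics a v f) (hgb : HasExpAsymptotics b w g) (hab : a + b = 0) (x : ℝ) :
    Wr f g x = (a - b) * (v.1 * w.1 + v.2 * w.2) := by
  have lim := hfa.tendsto_Wr hf.differentiable hg.differentiable hgb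
  simp only [hab, neg_zero, zero_mul, Complex.exp_zero, one_mul, hf.Wr_eq_Wr hg _ x] at lim
  exact tendsto_nhds_unique tendsto_const_nhds lim

theorem Wr_eq_zero_of_re_add_neg (hf : IsSolution V₁ V₂ z f) (hg : IsSolution V₁ V₂ z g)
    (hfa : HasExpAsymptotics a v f) (hgb : HasExpAsymptotics b w g) (hab : (a + b).re < 0)
    (x : ℝ) : Wr f g x = 0 := by
  have lim := (tendsto_cexp_mul_ofReal_atTop hab).mul
    (hfa.tendsto_Wr hf.differentiable hg.differentiable hgb)
  have hconst (y : ℝ) :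
      Complex.exp ((a + b) * y) * (Complex.exp (-(a + b) * y) * Wr f g y) = Wr f g x := by
    rw [← mul_assoc, ← Complex.exp_add, neg_mul, add_neg_cancel, Complex.exp_zero, one_mul,
      hf.Wr_eq_Wr hg y x]
  simp only [hconst, zero_mul] at lim
  exact tendsto_nhds_unique tendsto_const_nhds lim

end IsSolution

end ScalarWronskian

section MatrixWronskian

/-- Differentiability of every entry of a matrix-valued function, the natural notion for
`mderiv`; it avoids choosing a norm on matrices. -/
def EntrywiseDifferentiable {m n : Type*} (F : ℝ → Matrix m n ℂ) : Prop :=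
  ∀ i j, Differentiable ℝ fun x => F x i j

namespace EntrywiseDifferentiable

variable {l m n : Type*} {F : ℝ → Matrix m n ℂ}

theorem comp_neg (hF : EntrywiseDifferentiable F) : EntrywiseDifferentiable fun x => F (-x) :=
  fun i j => (hF i j).comp differentiable_neg

theorem mul_const [Fintype n] (hF : EntrywiseDifferentiable F) (A : Matrix n l ℂ) :
    EntrywiseDifferentiable fun x => F x * A := fun i j => by
  simp only [Matrix.mul_apply]
  exact Differentiable.fun_sum fun k _ => (hF i k).mul_const (A k j)

end EntrywiseDifferentiable

theorem entrywiseDifferentiable_matOf {u v : ℝ → ℂ × ℂ} (hu : Differentiable ℝ u)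
    (hv : Differentiable ℝ v) : EntrywiseDifferentiable (matOf u v) := fun i j => by
  fin_cases i <;> fin_cases j
  exacts [hu.fst, hv.fst, hu.snd, hv.snd]

variable {F G : ℝ → Matrix (Fin 2) (Fin 2) ℂ}

theorem mderiv_add (hF : EntrywiseDifferentiable F) (hG : EntrywiseDifferentiable G) (x : ℝ) :
    mderiv (fun y => F y + G y) x = mderiv F x + mderiv G x := by
  ext i j
  exact deriv_fun_add (hF i j x) (hG i j x)

theorem mderiv_mul_const (hF : EntrywiseDifferentiable F) (A : Matrix (Fin 2) (Fin 2) ℂ) (x : ℝ) :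
    mderiv (fun y => F y * A) x = mderiv F x * A := by
  ext i j
  simp only [mderiv, Matrix.mul_apply, Matrix.of_apply]
  exact (HasDerivAt.fun_sum fun k _ => (hF i k x).hasDerivAt.mul_const (A k j)).deriv

theorem mderiv_comp_neg (F : ℝ → Matrix (Fin 2) (Fin 2) ℂ) (x : ℝ) :
    mderiv (fun y => F (-y)) x = -mderiv F (-x) := by
  ext i j
  exact deriv_comp_neg (fun y => F y i j) x

theorem mWr_transpose (F G : ℝ → Matrix (Fin 2) (Fin 2) ℂ) (x : ℝ) :
    (mWr F G x)ᵀ = -mWr G F x := by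
  simp [mWr, Matrix.transpose_mul]

theorem mWr_comp_neg (F G : ℝ → Matrix (Fin 2) (Fin 2) ℂ) (x : ℝ) :
    mWr (fun y => F (-y)) (fun y => G (-y)) x = -mWr F G (-x) := by
  simp only [mWr, mderiv_comp_neg, Matrix.transpose_neg]
  noncomm_ring

theorem mWr_mul_add_mul_right (hF : EntrywiseDifferentiable F) (hG : EntrywiseDifferentiable G)
    (H : ℝ → Matrix (Fin 2) (Fin 2) ℂ) (A B : Matrix (Fin 2) (Fin 2) ℂ) (x : ℝ) :
    mWr H (fun y => F y * A + G y * B) x = mWr H F x * A + mWr H G x * B := by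
  simp only [mWr, mderiv_add (hF.mul_const A) (hG.mul_const B), mderiv_mul_const hF,
    mderiv_mul_const hG]
  noncomm_ring

theorem mWr_matOf (f g h k : ℝ → ℂ × ℂ) (x : ℝ) :
    mWr (matOf f g) (matOf h k) x = !![Wr f h x, Wr f k x; Wr g h x, Wr g k x] := by
  ext i j
  fin_cases i <;> fin_cases j <;>
    simp only [mWr, mderiv, matOf, Wr, Fin.zero_eta, Fin.mk_one, Fin.isValue, of_apply, cons_val',
      cons_val_zero, cons_val_one, cons_val_fin_one, Matrix.sub_apply, Matrix.mul_apply,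
      transpose_apply, Fin.sum_univ_two] <;> ring

end MatrixWronskian

section Scattering

/-- The scattering relation `F = G(-·) A + F(-·) B` between matrix-valued functions on the
line. -/
def ScatteringRelation (F G : ℝ → Matrix (Fin 2) (Fin 2) ℂ) (A B : Matrix (Fin 2) (Fin 2) ℂ) :
    Prop :=
  ∀ x, F x = G (-x) * A + F (-x) * B

namespace ScatteringRelation

variable {F G K L : ℝ → Matrix (Fin 2) (Fin 2) ℂ} {A B C D : Matrix (Fin 2) (Fin 2) ℂ}

theorem mWr_right (h : ScatteringRelation F G A B) (hF : EntrywiseDifferentiable F)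
    (hG : EntrywiseDifferentiable G) (H : ℝ → Matrix (Fin 2) (Fin 2) ℂ) (x : ℝ) :
    mWr (fun y => H (-y)) F x = -(mWr H G (-x) * A + mWr H F (-x) * B) := by
  conv_lhs => rw [funext h]
  rw [mWr_mul_add_mul_right hG.comp_neg hF.comp_neg, mWr_comp_neg, mWr_comp_neg]
  noncomm_ring

theorem mWr_comp_neg_left (h : ScatteringRelation K L C D) (hK : EntrywiseDifferentiable K)
    (hL : EntrywiseDifferentiable L) (H : ℝ → Matrix (Fin 2) (Fin 2) ℂ) (x : ℝ) :
    mWr (fun y => K (-y)) H x = Cᵀ * mWr L H x + Dᵀ * mWr K H x := by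
  have hneg : (fun y => K (-y)) = fun y => L y * C + K y * D :=
    funext fun y => by simpa only [neg_neg] using h (-y)
  rw [← neg_neg (mWr _ H x), ← mWr_transpose, hneg, mWr_mul_add_mul_right hL hK,
    Matrix.transpose_add, Matrix.transpose_mul, Matrix.transpose_mul, mWr_transpose, mWr_transpose]
  noncomm_ring

theorem mWr_quadratic (hKL : ScatteringRelation K L C D) (hFG : ScatteringRelation F G A B)
    (hK : EntrywiseDifferentiable K) (hL : EntrywiseDifferentiable L)
    (hF : EntrywiseDifferentiable F) (hG : EntrywiseDifferentiable G) (x : ℝ) :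
    mWr K F x = -((Cᵀ * mWr L G (-x) + Dᵀ * mWr K G (-x)) * A
      + (Cᵀ * mWr L F (-x) + Dᵀ * mWr K F (-x)) * B) := by
  rw [← hKL.mWr_comp_neg_left hK hL, ← hKL.mWr_comp_neg_left hK hL, ← hFG.mWr_right hF hG]
  simp only [neg_neg]

theorem mWr_linear (hKL : ScatteringRelation K L C D) (hFG : ScatteringRelation F G A B)
    (hK : EntrywiseDifferentiable K) (hL : EntrywiseDifferentiable L)
    (hF : EntrywiseDifferentiable F) (hG : EntrywiseDifferentiable G) (x : ℝ) :
    Cᵀ * mWr L F x + Dᵀ * mWr K F x = -(mWr K G (-x) * A + mWr K F (-x) * B) := by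
  rw [← hKL.mWr_comp_neg_left hK hL, hFG.mWr_right hF hG]

theorem map_conj {f g h k : ℝ → ℂ × ℂ} (hfg : ScatteringRelation (matOf f g) (matOf h k) A B) :
    ScatteringRelation (matOf (conj2 f) (conj2 g)) (matOf (conj2 h) (conj2 k))
      (A.map (starRingEnd ℂ)) (B.map (starRingEnd ℂ)) := by
  have matOf_conj2 (u v : ℝ → ℂ × ℂ) (x : ℝ) :
      matOf (conj2 u) (conj2 v) x = (matOf u v x).map (starRingEnd ℂ) := by
    ext i j
    fin_cases i <;> fin_cases j <;> rfl
  intro x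
  simp only [matOf_conj2, ← Matrix.map_mul]
  rw [hfg x, Matrix.map_add _ (map_add _)]

end ScatteringRelation

end Scattering

section JostFrame

variable {k μ : ℝ} {f₁ f₃ f₄ f₄t : ℝ → ℂ × ℂ} {c₁ c₂ : ℂ} {A B : Matrix (Fin 2) (Fin 2) ℂ}

/-- The Wronskian data of Jost solutions `f₁, f̄₁, f₃, f₄` with `f₃, f₄` real, where `k` is the
wave number of `f₁` and `μ` the decay rate of `f₃`. -/
structure IsJostFrame (k μ : ℝ) (f₁ f₃ f₄ : ℝ → ℂ × ℂ) : Prop where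
  differentiable₁ : Differentiable ℝ f₁
  differentiable₃ : Differentiable ℝ f₃
  differentiable₄ : Differentiable ℝ f₄
  conj2_f₃ : conj2 f₃ = f₃
  conj2_f₄ : conj2 f₄ = f₄
  Wr_f₁_conj2_f₁ : ∀ x, Wr f₁ (conj2 f₁) x = 2 * Complex.I * k
  Wr_f₁_f₃ : ∀ x, Wr f₁ f₃ x = 0
  Wr_f₁_f₄ : ∀ x, Wr f₁ f₄ x = 0
  Wr_f₃_f₄ : ∀ x, Wr f₃ f₄ x = -(2 * μ)

theorem eq_conj_of_Wr_f4def_eq_zero (hk : k ≠ 0) {x : ℝ} (hf₁ : DifferentiableAt ℝ f₁ x)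
    (hf₄ : DifferentiableAt ℝ f₄t x) (hconj : conj2 f₄t = f₄t)
    (hWr : Wr f₁ (conj2 f₁) x = 2 * Complex.I * k)
    (h₁ : Wr f₁ (f4def f₁ f₄t c₁ c₂) x = 0)
    (h₂ : Wr (conj2 f₁) (f4def f₁ f₄t c₁ c₂) x = 0) :
    c₁ = starRingEnd ℂ c₂ := by
  rw [Wr_f4def_right hf₁ hf₄, Wr_self, hWr] at h₁
  rw [Wr_f4def_right hf₁ hf₄, Wr_self, Wr_swap f₁, hWr] at h₂
  have hWr₄ : Wr f₁ f₄t x = c₂ * (2 * Complex.I * k) := by linear_combination h₁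
  have hWr₄_conj := Wr_conj2 f₁ f₄t x
  rw [hconj, hWr₄] at hWr₄_conj
  simp only [map_mul, Complex.conj_I, Complex.conj_ofReal, map_ofNat] at hWr₄_conj
  refine mul_right_cancel₀ (b := 2 * Complex.I * (k : ℂ)) (by simp [hk]) ?_
  linear_combination h₂ - hWr₄_conj

theorem conj2_f4def (hconj : conj2 f₄t = f₄t) (c : ℂ) :
    conj2 (f4def f₁ f₄t (starRingEnd ℂ c) c) = f4def f₁ f₄t (starRingEnd ℂ c) c := by
  funext x
  have hx : star (f₄t x) = f₄t x := congrFun hconj x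
  simp only [f4def, conj2_eq_star, star_sub, star_smul, hx, star_star, starRingEnd_apply]
  abel

theorem isJostFrame_f4def {V₁ V₂ : ℝ → ℝ} {z : ℝ} (hk : k ≠ 0) (hμ : 0 < μ)
    (h₁ : IsSolution V₁ V₂ z f₁) (h₃ : IsSolution V₁ V₂ z f₃) (h₄ : IsSolution V₁ V₂ z f₄t)
    (ha₁ : HasExpAsymptotics (Complex.I * k) (1, 0) f₁)
    (ha₃ : HasExpAsymptotics (-(μ : ℂ)) (0, 1) f₃) (ha₄ : HasExpAsymptotics (μ : ℂ) (0, 1) f₄t)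
    (hconj₃ : conj2 f₃ = f₃) (hconj₄ : conj2 f₄t = f₄t)
    (hc₁ : ∀ x, Wr f₁ (f4def f₁ f₄t c₁ c₂) x = 0)
    (hc₂ : ∀ x, Wr (conj2 f₁) (f4def f₁ f₄t c₁ c₂) x = 0) :
    IsJostFrame k μ f₁ f₃ (f4def f₁ f₄t c₁ c₂) := by
  have h₂ : IsSolution V₁ V₂ z (conj2 f₁) := by simpa using h₁.conj2
  have Wr₁₂ (x : ℝ) : Wr f₁ (conj2 f₁) x = 2 * Complex.I * k := by
    rw [h₁.Wr_eq_of_add_eq_zero h₂ ha₁ ha₁.star (by simp)]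
    simp only [star_mul', RCLike.star_def, Complex.conj_I, Complex.conj_ofReal, Prod.fst_star,
      Prod.snd_star, star_one, star_zero]
    ring
  have Wr₁₃ (x : ℝ) : Wr f₁ f₃ x = 0 :=
    h₁.Wr_eq_zero_of_re_add_neg h₃ ha₁ ha₃ (by simpa using hμ) x
  have Wr₂₃ (x : ℝ) : Wr (conj2 f₁) f₃ x = 0 := by
    rw [← hconj₃, Wr_conj2, Wr₁₃, map_zero]
  have Wr₃₄ (x : ℝ) : Wr f₃ f₄t x = -(2 * μ) := by
    rw [h₃.Wr_eq_of_add_eq_zero h₄ ha₃ ha₄ (by simp)]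
    ring
  have hc : c₁ = starRingEnd ℂ c₂ := eq_conj_of_Wr_f4def_eq_zero hk (h₁.differentiable 0)
    (h₄.differentiable 0) hconj₄ (Wr₁₂ 0) (hc₁ 0) (hc₂ 0)
  exact {
    differentiable₁ := h₁.differentiable
    differentiable₃ := h₃.differentiable
    differentiable₄ := (h₄.differentiable.sub (h₁.differentiable.const_smul c₁)).sub
      (h₂.differentiable.const_smul c₂)
    conj2_f₃ := hconj₃
    conj2_f₄ := hc ▸ conj2_f4def hconj₄ c₂
    Wr_f₁_conj2_f₁ := Wr₁₂
    Wr_f₁_f₃ := Wr₁₃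
    Wr_f₁_f₄ := hc₁
    Wr_f₃_f₄ := fun x => by
      rw [Wr_f4def_right (h₁.differentiable x) (h₄.differentiable x), Wr_swap f₁, Wr₁₃,
        Wr_swap (conj2 f₁), Wr₂₃, Wr₃₄]
      ring }

theorem diag_eq_smul_pmat_add_smul_qmat (a d : ℂ) :
    !![a, 0; 0, d] = a • pmat + d • qmat := by
  ext i j
  fin_cases i <;> fin_cases j <;> simp [pmat, qmat]

namespace IsJostFrame

theorem Wr_conj2_f₁_f₃ (h : IsJostFrame k μ f₁ f₃ f₄) (x : ℝ) : Wr (conj2 f₁) f₃ x = 0 := by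
  rw [← h.conj2_f₃, Wr_conj2, h.Wr_f₁_f₃, map_zero]

theorem Wr_conj2_f₁_f₄ (h : IsJostFrame k μ f₁ f₃ f₄) (x : ℝ) : Wr (conj2 f₁) f₄ x = 0 := by
  rw [← h.conj2_f₄, Wr_conj2, h.Wr_f₁_f₄, map_zero]

theorem mWr_decaying_self (h : IsJostFrame k μ f₁ f₃ f₄) (x : ℝ) :
    mWr (matOf f₁ f₃) (matOf f₁ f₃) x = 0 := by
  simp [mWr_matOf, diag_eq_smul_pmat_add_smul_qmat, Wr_self, h.Wr_f₁_f₃, Wr_swap f₁ f₃]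

theorem mWr_growing_self (h : IsJostFrame k μ f₁ f₃ f₄) (x : ℝ) :
    mWr (matOf (conj2 f₁) f₄) (matOf (conj2 f₁) f₄) x = 0 := by
  simp [mWr_matOf, diag_eq_smul_pmat_add_smul_qmat, Wr_self, h.Wr_conj2_f₁_f₄,
    Wr_swap (conj2 f₁) f₄]

theorem mWr_decaying_growing (h : IsJostFrame k μ f₁ f₃ f₄) (x : ℝ) :
    mWr (matOf f₁ f₃) (matOf (conj2 f₁) f₄) x
      = (2 * Complex.I * (k : ℂ)) • pmat - (2 * (μ : ℂ)) • qmat := by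
  simp [mWr_matOf, diag_eq_smul_pmat_add_smul_qmat, h.Wr_f₁_conj2_f₁, h.Wr_f₁_f₄,
    Wr_swap (conj2 f₁) f₃, h.Wr_conj2_f₁_f₃, h.Wr_f₃_f₄, sub_eq_add_neg]

theorem mWr_growing_decaying (h : IsJostFrame k μ f₁ f₃ f₄) (x : ℝ) :
    mWr (matOf (conj2 f₁) f₄) (matOf f₁ f₃) x
      = -((2 * Complex.I * (k : ℂ)) • pmat - (2 * (μ : ℂ)) • qmat) := by
  simp [mWr_matOf, diag_eq_smul_pmat_add_smul_qmat, Wr_swap f₁ (conj2 f₁),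
    h.Wr_f₁_conj2_f₁, h.Wr_conj2_f₁_f₃, Wr_swap f₁ f₄, h.Wr_f₁_f₄, Wr_swap f₃ f₄, h.Wr_f₃_f₄,
    neg_add_eq_sub]

theorem mWr_conj_decaying_decaying (h : IsJostFrame k μ f₁ f₃ f₄) (x : ℝ) :
    mWr (matOf (conj2 f₁) f₃) (matOf f₁ f₃) x = -(2 * Complex.I * (k : ℂ)) • pmat := by
  simp [mWr_matOf, diag_eq_smul_pmat_add_smul_qmat, Wr_swap f₁ (conj2 f₁),
    h.Wr_f₁_conj2_f₁, h.Wr_conj2_f₁_f₃, Wr_swap f₁ f₃, h.Wr_f₁_f₃, Wr_self]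

theorem mWr_conj_growing_growing (h : IsJostFrame k μ f₁ f₃ f₄) (x : ℝ) :
    mWr (matOf f₁ f₄) (matOf (conj2 f₁) f₄) x = (2 * Complex.I * (k : ℂ)) • pmat := by
  simp [mWr_matOf, diag_eq_smul_pmat_add_smul_qmat, h.Wr_f₁_conj2_f₁, h.Wr_f₁_f₄,
    Wr_swap (conj2 f₁) f₄, h.Wr_conj2_f₁_f₄, Wr_self]

theorem mWr_conj_decaying_growing (h : IsJostFrame k μ f₁ f₃ f₄) (x : ℝ) :
    mWr (matOf (conj2 f₁) f₃) (matOf (conj2 f₁) f₄) x = -(2 * (μ : ℂ)) • qmat := by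
  simp [mWr_matOf, diag_eq_smul_pmat_add_smul_qmat, Wr_self, h.Wr_conj2_f₁_f₄,
    Wr_swap (conj2 f₁) f₃, h.Wr_conj2_f₁_f₃, h.Wr_f₃_f₄]

theorem mWr_conj_growing_decaying (h : IsJostFrame k μ f₁ f₃ f₄) (x : ℝ) :
    mWr (matOf f₁ f₄) (matOf f₁ f₃) x = (2 * (μ : ℂ)) • qmat := by
  simp [mWr_matOf, diag_eq_smul_pmat_add_smul_qmat, Wr_self, h.Wr_f₁_f₃,
    Wr_swap f₁ f₄, h.Wr_f₁_f₄, Wr_swap f₃ f₄, h.Wr_f₃_f₄]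

theorem scatteringRelation_conj (h : IsJostFrame k μ f₁ f₃ f₄)
    (hAB : ScatteringRelation (matOf f₁ f₃) (matOf (conj2 f₁) f₄) A B) :
    ScatteringRelation (matOf (conj2 f₁) f₃) (matOf f₁ f₄)
      (A.map (starRingEnd ℂ)) (B.map (starRingEnd ℂ)) := by
  simpa only [h.conj2_f₃, h.conj2_f₄, conj2_conj2] using hAB.map_conj

theorem conjTranspose_quadratic_relation (h : IsJostFrame k μ f₁ f₃ f₄)
    (hAB : ScatteringRelation (matOf f₁ f₃) (matOf (conj2 f₁) f₄) A B) :
    (-(2 * Complex.I * (k : ℂ))) • pmat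
      = (-(2 * Complex.I * (k : ℂ))) • (Aᴴ * pmat * A) - (2 * (μ : ℂ)) • (Aᴴ * qmat * B)
        + (2 * (μ : ℂ)) • (Bᴴ * qmat * A) + (2 * Complex.I * (k : ℂ)) • (Bᴴ * pmat * B) := by
  have key := (h.scatteringRelation_conj hAB).mWr_quadratic hAB
    (entrywiseDifferentiable_matOf (differentiable_conj2 h.differentiable₁) h.differentiable₃)
    (entrywiseDifferentiable_matOf h.differentiable₁ h.differentiable₄)
    (entrywiseDifferentiable_matOf h.differentiable₁ h.differentiable₃)
    (entrywiseDifferentiable_matOf (differentiable_conj2 h.differentiable₁) h.differentiable₄) 0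
  rw [h.mWr_conj_decaying_decaying, h.mWr_conj_decaying_decaying, h.mWr_conj_growing_growing,
    h.mWr_conj_decaying_growing, h.mWr_conj_growing_decaying] at key
  change _ = -((Aᴴ * _ + Bᴴ * _) * A + (Aᴴ * _ + Bᴴ * _) * B) at key
  rw [key]
  simp only [Matrix.mul_smul, Matrix.smul_mul, Matrix.add_mul]
  module

theorem transpose_quadratic_relation (h : IsJostFrame k μ f₁ f₃ f₄)
    (hAB : ScatteringRelation (matOf f₁ f₃) (matOf (conj2 f₁) f₄) A B) :
    Aᵀ * ((2 * Complex.I * (k : ℂ)) • pmat - (2 * (μ : ℂ)) • qmat) * B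
      = Bᵀ * ((2 * Complex.I * (k : ℂ)) • pmat - (2 * (μ : ℂ)) • qmat) * A := by
  have hF := entrywiseDifferentiable_matOf h.differentiable₁ h.differentiable₃
  have hG := entrywiseDifferentiable_matOf (differentiable_conj2 h.differentiable₁)
    h.differentiable₄
  have key := hAB.mWr_quadratic hAB hF hG hF hG 0
  rw [h.mWr_decaying_self, h.mWr_decaying_self, h.mWr_growing_self, h.mWr_decaying_growing,
    h.mWr_growing_decaying] at key
  simp only [Matrix.mul_zero, zero_add, add_zero, Matrix.mul_neg, Matrix.neg_mul, zero_eq_neg,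
    add_neg_eq_zero] at key
  exact key.symm

theorem linear_relation (h : IsJostFrame k μ f₁ f₃ f₄)
    (hAB : ScatteringRelation (matOf f₁ f₃) (matOf (conj2 f₁) f₄) A B) :
    (2 * (μ : ℂ)) • (Aᴴ * qmat) - (2 * Complex.I * (k : ℂ)) • (Bᴴ * pmat)
      = (2 * (μ : ℂ)) • (qmat * A) + (2 * Complex.I * (k : ℂ)) • (pmat * B) := by
  have key := (h.scatteringRelation_conj hAB).mWr_linear hAB
    (entrywiseDifferentiable_matOf (differentiable_conj2 h.differentiable₁) h.differentiable₃)
    (entrywiseDifferentiable_matOf h.differentiable₁ h.differentiable₄)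
    (entrywiseDifferentiable_matOf h.differentiable₁ h.differentiable₃)
    (entrywiseDifferentiable_matOf (differentiable_conj2 h.differentiable₁) h.differentiable₄) 0
  rw [h.mWr_conj_decaying_decaying, h.mWr_conj_decaying_decaying, h.mWr_conj_decaying_growing,
    h.mWr_conj_growing_decaying] at key
  change Aᴴ * _ + Bᴴ * _ = _ at key
  simp only [Matrix.mul_smul, Matrix.smul_mul] at key
  rw [sub_eq_add_neg, ← neg_smul, key]
  module

end IsJostFrame

end JostFrame

theorem stmt_10_general (V₁ V₂ : ℝ → ℝ) (z k μ : ℝ) (hk : k ≠ 0) (hμ : 0 < μ)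
    (f₁ f₃ f₄t : ℝ → ℂ × ℂ) (h₁ : IsSolution V₁ V₂ z f₁) (h₃ : IsSolution V₁ V₂ z f₃)
    (h₄ : IsSolution V₁ V₂ z f₄t) (ha₁ : HasExpAsymptotics (Complex.I * k) (1, 0) f₁)
    (ha₃ : HasExpAsymptotics (-(μ : ℂ)) (0, 1) f₃) (ha₄ : HasExpAsymptotics (μ : ℂ) (0, 1) f₄t)
    (hconj₃ : conj2 f₃ = f₃) (hconj₄ : conj2 f₄t = f₄t) (c₁ c₂ : ℂ)
    (hc₁ : ∀ x, Wr f₁ (f4def f₁ f₄t c₁ c₂) x = 0)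
    (hc₂ : ∀ x, Wr (conj2 f₁) (f4def f₁ f₄t c₁ c₂) x = 0)
    (A B : Matrix (Fin 2) (Fin 2) ℂ)
    (hAB : ScatteringRelation (matOf f₁ f₃) (matOf (conj2 f₁) (f4def f₁ f₄t c₁ c₂)) A B) :
    (-(2 * Complex.I * (k : ℂ))) • pmat
        = (-(2 * Complex.I * (k : ℂ))) • (Aᴴ * pmat * A) - (2 * (μ : ℂ)) • (Aᴴ * qmat * B)
          + (2 * (μ : ℂ)) • (Bᴴ * qmat * A) + (2 * Complex.I * (k : ℂ)) • (Bᴴ * pmat * B) ∧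
    Aᵀ * ((2 * Complex.I * (k : ℂ)) • pmat - (2 * (μ : ℂ)) • qmat) * B
        = Bᵀ * ((2 * Complex.I * (k : ℂ)) • pmat - (2 * (μ : ℂ)) • qmat) * A ∧
    (2 * (μ : ℂ)) • (Aᴴ * qmat) - (2 * Complex.I * (k : ℂ)) • (Bᴴ * pmat)
        = (2 * (μ : ℂ)) • (qmat * A) + (2 * Complex.I * (k : ℂ)) • (pmat * B) := by
  have frame := isJostFrame_f4def hk hμ h₁ h₃ h₄ ha₁ ha₃ ha₄ hconj₃ hconj₄ hc₁ hc₂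
  exact ⟨frame.conjTranspose_quadratic_relation hAB, frame.transpose_quadratic_relation hAB,
    frame.linear_relation hAB⟩

theorem stmt_10 (γ : ℝ) (V₁ V₂ : ℝ → ℝ) (hV : PotentialHyp γ V₁ V₂)
    (lam : ℝ) (hlam : lam ≠ 0) (f₁ f₃ f₄t : ℝ → ℂ × ℂ)
    (h1 : IsSolution V₁ V₂ (((1 + lam ^ 2 : ℝ) : ℂ)) f₁)
    (h3 : IsSolution V₁ V₂ (((1 + lam ^ 2 : ℝ) : ℂ)) f₃)
    (h4t : IsSolution V₁ V₂ (((1 + lam ^ 2 : ℝ) : ℂ)) f₄t)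
    (hJost : JostAsymp γ lam f₁ f₃ f₄t)
    (hconj3 : conj2 f₃ = f₃) (hconj4 : conj2 f₄t = f₄t)
    (c₁ c₂ : ℂ)
    (hc1 : ∀ x : ℝ, Wr f₁ (f4def f₁ f₄t c₁ c₂) x = 0)
    (hc2 : ∀ x : ℝ, Wr (conj2 f₁) (f4def f₁ f₄t c₁ c₂) x = 0)
    (A B : Matrix (Fin 2) (Fin 2) ℂ)
    (hAB : ∀ x : ℝ,
      matOf f₁ f₃ x
        = matOf (conj2 f₁) (f4def f₁ f₄t c₁ c₂) (-x) * A + matOf f₁ f₃ (-x) * B) :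
    (-(2 * Complex.I * (lam : ℂ))) • pmat
        = (-(2 * Complex.I * (lam : ℂ))) • (Aᴴ * pmat * A)
          - (2 * ((mu lam : ℝ) : ℂ)) • (Aᴴ * qmat * B)
          + (2 * ((mu lam : ℝ) : ℂ)) • (Bᴴ * qmat * A)
          + (2 * Complex.I * (lam : ℂ)) • (Bᴴ * pmat * B) ∧
    Aᵀ * ((2 * Complex.I * (lam : ℂ)) • pmat - (2 * ((mu lam : ℝ) : ℂ)) • qmat) * B
        = Bᵀ * ((2 * Complex.I * (lam : ℂ)) • pmat - (2 * ((mu lam : ℝ) : ℂ)) • qmat) * A ∧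
    (2 * ((mu lam : ℝ) : ℂ)) • (Aᴴ * qmat) - (2 * Complex.I * (lam : ℂ)) • (Bᴴ * pmat)
        = (2 * ((mu lam : ℝ) : ℂ)) • (qmat * A) + (2 * Complex.I * (lam : ℂ)) • (pmat * B) := by
  obtain ⟨ha₁, ha₃, ha₄⟩ :=
    hJost.hasExpAsymptotics hV.1 h1.differentiable h3.differentiable h4t.differentiable
  exact stmt_10_general V₁ V₂ (1 + lam ^ 2) lam (mu lam) hlam (mu_pos lam) f₁ f₃ f₄t h1 h3 h4t
    ha₁ ha₃ ha₄ hconj3 hconj4 c₁ c₂ hc1 hc2 A B hAB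
end
end

section
/- Adopt the Jost setup of the context at λ = 0 (so μ = √2), and set F₁(x) := (f₁(x,0), f₃(x,0)) and G₂(x) := (f₁(−x,0), f₃(−x,0)). Then E = 1 is a resonance or an eigenvalue of ℋ — that is, there exists a nonzero bounded twice continuously differentiable solution f of ℋf = f (either f ∈ L², an eigenfunction, or f ∈ L^∞ ∖ L², a resonance) — if and only if det 𝒲[F₁, G₂] = 0. -/
noncomputable section

open Real MeasureTheory Matrix

/-!
Write `ℋf = z f` as a system `u'' = Q u` with `Q` bounded, even and symmetric for a nondegenerate
bilinear form, so that the Wronskian of two solutions is a constant symplectic pairing of their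
Cauchy data. A solution that is bounded at `+∞` has vanishing Wronskian with every solution whose
jet converges to some `(e, 0)`: its derivative is bounded as well, so in the limit the Wronskian
is the derivative of a bounded function, up to sign, and such a derivative can only converge to
`0`. Half as many independent solutions with convergent jets as the phase space has dimensions
therefore span a Lagrangian subspace, and this subspace consists of exactly the solutions bounded
at `+∞`. Its reflection consists of those bounded at `-∞`, and the Wronskian matrix between the two
bases is singular exactly when the two Lagrangian subspaces meet.
-/

open Asymptotics Filter Module Set Topology

section LinearAlgebra

variable {K V ι : Type*} [Field K] [AddCommGroup V] [Module K V]

lemma orthogonal_eq_of_le_orthogonal [FiniteDimensional K V] {B : LinearMap.BilinForm K V}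
    (hB : B.Nondegenerate) {L : Submodule K V} (hL : L ≤ B.orthogonal L)
    (hdim : finrank K V ≤ 2 * finrank K L) : B.orthogonal L = L := by
  refine (Submodule.eq_of_le_of_finrank_le hL ?_).symm
  rw [LinearMap.BilinForm.finrank_orthogonal hB]
  lia

lemma mem_orthogonal_span_range_iff {B : LinearMap.BilinForm K V} {a : ι → V} {v : V} :
    v ∈ B.orthogonal (Submodule.span K (range a)) ↔ ∀ i, B (a i) v = 0 := by
  refine ⟨fun h i ↦ h _ (Submodule.subset_span (mem_range_self i)), fun h ↦ ?_⟩
  have hle : Submodule.span K (range a) ≤ LinearMap.ker (B.flip v) :=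
    Submodule.span_le.2 (range_subset_iff.2 h)
  exact fun w hw ↦ hle hw

lemma det_bilinForm_eq_zero_iff [Fintype ι] [DecidableEq ι] (B : LinearMap.BilinForm K V)
    (a : ι → V) {b : ι → V} (hb : LinearIndependent K b) :
    (Matrix.of fun i j ↦ B (a i) (b j)).det = 0 ↔
      ∃ v ∈ Submodule.span K (range b), v ≠ 0 ∧ ∀ i, B (a i) v = 0 := by
  have hmul (c : ι → K) : Matrix.of (fun i j ↦ B (a i) (b j)) *ᵥ c = 0 ↔
      ∀ i, B (a i) (∑ j, c j • b j) = 0 := by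
    simp [funext_iff, Matrix.mulVec, dotProduct, mul_comm]
  have hne (c : ι → K) : ∑ j, c j • b j ≠ 0 ↔ c ≠ 0 :=
    not_congr ⟨fun h ↦ funext (Fintype.linearIndependent_iff.1 hb c h), fun h ↦ by simp [h]⟩
  simp only [← Matrix.exists_mulVec_eq_zero_iff, hmul, ← hne,
    Submodule.mem_span_range_iff_exists_fun]
  exact ⟨fun ⟨c, hc, h⟩ ↦ ⟨_, ⟨c, rfl⟩, hc, h⟩, fun ⟨_, ⟨c, hc⟩, h⟩ ↦ ⟨c, hc ▸ h⟩⟩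

/-- The symplectic form `ω((u, u'), (v, v')) = b(u', v) - b(u, v')` on the phase space `V × V`.
On `1`-jets of functions it is the Wronskian associated with `b`. -/
def symplecticForm (b : LinearMap.BilinForm K V) : LinearMap.BilinForm K (V × V) :=
  b.compl₁₂ (.snd K V V) (.fst K V V) - b.compl₁₂ (.fst K V V) (.snd K V V)

@[simp]
lemma symplecticForm_apply (b : LinearMap.BilinForm K V) (p q : V × V) :
    symplecticForm b p q = b p.2 q.1 - b p.1 q.2 := rfl

lemma symplecticForm_nondegenerate {b : LinearMap.BilinForm K V} (hb : b.Nondegenerate) :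
    (symplecticForm b).Nondegenerate := by
  refine ⟨fun p h ↦ Prod.ext (hb.1 _ fun v ↦ ?_) (hb.1 _ fun v ↦ ?_),
    fun q h ↦ Prod.ext (hb.2 _ fun v ↦ ?_) (hb.2 _ fun v ↦ ?_)⟩
  · simpa using h (0, v)
  · simpa using h (v, 0)
  · simpa using h (0, v)
  · simpa using h (v, 0)

end LinearAlgebra

section HalfLine

variable {E : Type*} [NormedAddCommGroup E] [NormedSpace ℝ E] {u u' u'' : ℝ → E} {c : E}

lemma mul_norm_le_of_norm_deriv_sub_le {a h ε : ℝ} (hh : 0 ≤ h)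
    (hu : ∀ t ∈ Icc a (a + h), HasDerivAt u (u' t) t)
    (hε : ∀ t ∈ Icc a (a + h), ‖u' t - c‖ ≤ ε) :
    h * ‖c‖ ≤ ‖u a‖ + ‖u (a + h)‖ + ε * h := by
  have hmean := norm_image_sub_le_of_norm_deriv_le_segment' (f := fun t ↦ u t - t • c)
    (fun t ht ↦ ((hu t ht).sub (by simpa using (hasDerivAt_id t).smul_const c)).hasDerivWithinAt)
    (fun t ht ↦ hε t (Ico_subset_Icc_self ht)) (a + h) (right_mem_Icc.2 (by linarith))
  have hsplit : h • c = u (a + h) - u a - (u (a + h) - (a + h) • c - (u a - a • c)) := by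
    module
  calc h * ‖c‖ = ‖h • c‖ := by rw [norm_smul, Real.norm_of_nonneg hh]
    _ ≤ ‖u (a + h)‖ + ‖u a‖ + ‖u (a + h) - (a + h) • c - (u a - a • c)‖ := by
      rw [hsplit]
      exact (norm_sub_le _ _).trans (by gcongr; exact norm_sub_le _ _)
    _ ≤ ‖u a‖ + ‖u (a + h)‖ + ε * h := by
      rw [add_sub_cancel_left] at hmean
      linarith

lemma norm_deriv_le_of_norm_deriv_deriv_le {a M : ℝ}
    (hu : ∀ t ∈ Icc a (a + 1), HasDerivAt u (u' t) t)
    (hu' : ∀ t ∈ Icc a (a + 1), HasDerivAt u' (u'' t) t)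
    (hM : ∀ t ∈ Icc a (a + 1), ‖u'' t‖ ≤ M) :
    ‖u' a‖ ≤ ‖u a‖ + ‖u (a + 1)‖ + M := by
  have ha : a ∈ Icc a (a + 1) := left_mem_Icc.2 (by linarith)
  have hM0 : 0 ≤ M := (norm_nonneg _).trans (hM a ha)
  have hvar (t) (ht : t ∈ Icc a (a + 1)) : ‖u' t - u' a‖ ≤ M :=
    calc ‖u' t - u' a‖ ≤ M * (t - a) :=
          norm_image_sub_le_of_norm_deriv_le_segment' (fun s hs ↦ (hu' s hs).hasDerivWithinAt)
            (fun s hs ↦ hM s (Ico_subset_Icc_self hs)) t ht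
      _ ≤ M := mul_le_of_le_one_right hM0 (by linarith [ht.2])
  simpa using mul_norm_le_of_norm_deriv_sub_le zero_le_one hu hvar

lemma eq_zero_of_tendsto_deriv_of_isBigO_one (hu : ∀ t, HasDerivAt u (u' t) t)
    (hbdd : u =O[atTop] (1 : ℝ → ℝ)) (hc : Tendsto u' atTop (𝓝 c)) : c = 0 := by
  by_contra hne
  have hpos : 0 < ‖c‖ := norm_pos_iff.2 hne
  obtain ⟨C, hC⟩ := hbdd.bound
  have hclose : ∀ᶠ t in atTop, ‖u' t - c‖ ≤ ‖c‖ / 2 := by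
    filter_upwards [Metric.tendsto_nhds.1 hc _ (half_pos hpos)] with t ht
    exact (dist_eq_norm (u' t) c ▸ ht).le
  obtain ⟨N, hN⟩ := eventually_atTop.1 (hC.and hclose)
  simp only [Pi.one_apply, norm_one, mul_one] at hN
  have hC0 : 0 ≤ C := (norm_nonneg _).trans (hN N le_rfl).1
  set h : ℝ := (4 * C + 1) / ‖c‖
  have hh0 : 0 ≤ h := by positivity
  have hlin := mul_norm_le_of_norm_deriv_sub_le (a := N) hh0 (fun t _ ↦ hu t)
    (fun t ht ↦ (hN t ht.1).2)
  have hhc : h * ‖c‖ = 4 * C + 1 := div_mul_cancel₀ _ hpos.ne'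
  linarith [(hN N le_rfl).1, (hN (N + h) (by linarith)).1]

end HalfLine

/-- The `1`-jet of a function, that is, its trajectory in phase space. -/
def jet {E : Type*} [NormedAddCommGroup E] [NormedSpace ℝ E] (u : ℝ → E) (x : ℝ) : E × E :=
  (u x, deriv u x)

section SolutionSpace

variable {𝕜 E : Type*} [RCLike 𝕜] [NormedAddCommGroup E] [NormedSpace ℝ E] [NormedSpace 𝕜 E]
  [IsScalarTower ℝ 𝕜 E] {Q : ℝ → E →L[𝕜] E} {M : ℝ}

/-- The space of `C²` solutions `u : ℝ → E` of the linear system `u'' = Q u`. -/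
def solutionSpace (Q : ℝ → E →L[𝕜] E) : Submodule 𝕜 (ℝ → E) where
  carrier := {u | ContDiff ℝ 2 u ∧ ∀ x, HasDerivAt (deriv u) (Q x (u x)) x}
  zero_mem' := ⟨contDiff_const, fun x ↦ by simp⟩
  add_mem' {u v} hu hv := by
    have hderiv : deriv (u + v) = deriv u + deriv v := funext fun x ↦
      deriv_add (hu.1.differentiable two_ne_zero x) (hv.1.differentiable two_ne_zero x)
    exact ⟨hu.1.add hv.1, fun x ↦ by simpa [hderiv] using (hu.2 x).add (hv.2 x)⟩
  smul_mem' c u hu := by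
    have hderiv : deriv (c • u) = c • deriv u := funext fun x ↦
      deriv_const_smul c (hu.1.differentiable two_ne_zero x)
    exact ⟨hu.1.const_smul c, fun x ↦ by simpa [hderiv] using (hu.2 x).const_smul c⟩

lemma hasDerivAt_of_mem_solutionSpace {u : ℝ → E} (hu : u ∈ solutionSpace Q) (x : ℝ) :
    HasDerivAt u (deriv u x) x :=
  (hu.1.differentiable two_ne_zero x).hasDerivAt

lemma hasDerivAt_jet {u : ℝ → E} (hu : u ∈ solutionSpace Q) (x : ℝ) :
    HasDerivAt (jet u) (deriv u x, Q x (u x)) x :=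
  (hasDerivAt_of_mem_solutionSpace hu x).prodMk (hu.2 x)

/-- The linear map sending a solution of `u'' = Q u` to its Cauchy data at `x`. -/
def jetAt (Q : ℝ → E →L[𝕜] E) (x : ℝ) : solutionSpace Q →ₗ[𝕜] E × E where
  toFun u := jet u x
  map_add' u v := Prod.ext rfl <|
    ((hasDerivAt_of_mem_solutionSpace u.2 x).add (hasDerivAt_of_mem_solutionSpace v.2 x)).deriv
  map_smul' c u := Prod.ext rfl ((hasDerivAt_of_mem_solutionSpace u.2 x).const_smul c).deriv

@[simp]
lemma jetAt_apply (x : ℝ) (u : solutionSpace Q) : jetAt Q x u = jet u x := rfl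

lemma jetAt_injective (hM : ∀ x, ‖Q x‖ ≤ M) (x : ℝ) : Function.Injective (jetAt Q x) := by
  have hlip (t : ℝ) : LipschitzWith (max 1 M.toNNReal) fun p : E × E ↦ (p.2, Q t p.1) := by
    refine (LipschitzWith.prod_snd.prodMk ((Q t).lipschitz.comp LipschitzWith.prod_fst)).weaken ?_
    rw [mul_one]
    exact max_le_max le_rfl (NNReal.le_toNNReal_of_coe_le (hM t))
  intro u v huv
  have hjet : jet (u : ℝ → E) = jet v :=
    ODE_solution_unique_univ (s := fun _ ↦ univ) (fun t ↦ (hlip t).lipschitzOnWith)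
      (fun t ↦ ⟨hasDerivAt_jet u.2 t, mem_univ _⟩) (fun t ↦ ⟨hasDerivAt_jet v.2 t, mem_univ _⟩) huv
  exact Subtype.ext (funext fun t ↦ congrArg Prod.fst (congrFun hjet t))

/-- The reflection `x ↦ -x` acting on the solutions of `u'' = Q u` for an even `Q`. -/
def reflect (heven : ∀ x, Q (-x) = Q x) : solutionSpace Q →ₗ[𝕜] solutionSpace Q where
  toFun u := ⟨fun x ↦ (u : ℝ → E) (-x), u.2.1.comp contDiff_neg, fun x ↦ by
    have hderiv : deriv (fun y ↦ (u : ℝ → E) (-y)) = -deriv u ∘ Neg.neg :=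
      funext fun y ↦ deriv_comp_neg (u : ℝ → E) y
    simpa [hderiv, heven] using ((u.2.2 (-x)).scomp x (hasDerivAt_neg x)).neg⟩
  map_add' _ _ := rfl
  map_smul' _ _ := rfl

@[simp]
lemma reflect_apply (heven : ∀ x, Q (-x) = Q x) (u : solutionSpace Q) (x : ℝ) :
    (reflect heven u : ℝ → E) x = (u : ℝ → E) (-x) := rfl

lemma reflect_involutive (heven : ∀ x, Q (-x) = Q x) : Function.Involutive (reflect heven) :=
  fun u ↦ Subtype.ext (funext fun x ↦ by simp)

lemma mem_span_range_reflect_iff {ι : Type*} {F : ι → solutionSpace Q}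
    (heven : ∀ x, Q (-x) = Q x) {u : solutionSpace Q} :
    u ∈ Submodule.span 𝕜 (range (reflect heven ∘ F)) ↔
      reflect heven u ∈ Submodule.span 𝕜 (range F) := by
  rw [range_comp, Submodule.span_image]
  refine ⟨?_, fun h ↦ ⟨_, h, reflect_involutive heven u⟩⟩
  rintro ⟨v, hv, rfl⟩
  rwa [reflect_involutive heven v]

lemma exists_norm_le_iff_isBigO_reflect (heven : ∀ x, Q (-x) = Q x) (u : solutionSpace Q) :
    (∃ C, ∀ x, ‖(u : ℝ → E) x‖ ≤ C) ↔
      (u : ℝ → E) =O[atTop] (1 : ℝ → ℝ) ∧ (reflect heven u : ℝ → E) =O[atTop] (1 : ℝ → ℝ) := by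
  have hneg : (reflect heven u : ℝ → E) =O[atTop] (1 : ℝ → ℝ) ↔
      (u : ℝ → E) =O[atBot] (1 : ℝ → ℝ) := by
    rw [← neg_atTop, ← Filter.map_neg, isBigO_map]
    rfl
  rw [hneg, ← u.2.1.continuous.isBounded_range_iff_isBigO_atTop_atBot,
    isBounded_iff_forall_norm_le]
  simp

lemma isBigO_jet_of_isBigO (hM : ∀ x, ‖Q x‖ ≤ M) {u : ℝ → E} (hu : u ∈ solutionSpace Q)
    (hbdd : u =O[atTop] (1 : ℝ → ℝ)) : jet u =O[atTop] (1 : ℝ → ℝ) := by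
  obtain ⟨C, hC⟩ := hbdd.bound
  obtain ⟨N, hN⟩ := eventually_atTop.1 hC
  simp only [Pi.one_apply, norm_one, mul_one] at hN
  refine hbdd.prod_left (.of_bound (C + C + M * C) ?_)
  filter_upwards [eventually_ge_atTop N] with x hx
  have hderiv : ‖deriv u x‖ ≤ ‖u x‖ + ‖u (x + 1)‖ + M * C :=
    norm_deriv_le_of_norm_deriv_deriv_le (fun t _ ↦ hasDerivAt_of_mem_solutionSpace hu t)
      (fun t _ ↦ hu.2 t) fun t ht ↦ (Q t).le_of_opNorm_le_of_le (hM t) (hN t (hx.trans ht.1))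
  simpa using hderiv.trans (by gcongr; exacts [hN x hx, hN _ (by linarith)])

lemma isBigO_one_of_mem_span {ι : Type*} {F : ι → solutionSpace Q} {e : ι → E}
    (hF : ∀ i, Tendsto (jet (F i : ℝ → E)) atTop (𝓝 (e i, 0)))
    {u : solutionSpace Q} (hu : u ∈ Submodule.span 𝕜 (range F)) :
    (u : ℝ → E) =O[atTop] (1 : ℝ → ℝ) := by
  induction hu using Submodule.span_induction with
  | mem _ h =>
    obtain ⟨i, rfl⟩ := h
    exact ((continuous_fst.tendsto _).comp (hF i)).isBigO_one ℝ
  | zero => exact isBigO_zero _ _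
  | add _ _ _ _ hv hw => exact hv.add hw
  | smul c _ _ hv => exact hv.const_smul_left c

end SolutionSpace

section Wronskian

variable {𝕜 E : Type*} [RCLike 𝕜] [NormedAddCommGroup E] [NormedSpace ℝ E] [NormedSpace 𝕜 E]
  [IsScalarTower ℝ 𝕜 E] [FiniteDimensional 𝕜 E] {Q : ℝ → E →L[𝕜] E} {M : ℝ}
  {b : LinearMap.BilinForm 𝕜 E}

lemma hasDerivAt_bilinForm (B : LinearMap.BilinForm 𝕜 E) {u v : ℝ → E} {u' v' : E} {x : ℝ}
    (hu : HasDerivAt u u' x) (hv : HasDerivAt v v' x) :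
    HasDerivAt (fun t ↦ B (u t) (v t)) (B (u x) v' + B u' (v x)) x :=
  (B.toContinuousBilinearMap.bilinearRestrictScalars ℝ).hasDerivAt_of_bilinear
    (fun _ ↦ hu) (fun _ ↦ hv)

lemma symplecticForm_jet_eq (hsymm : ∀ x, b.IsSelfAdjoint (Q x)) {u v : ℝ → E}
    (hu : u ∈ solutionSpace Q) (hv : v ∈ solutionSpace Q) (x y : ℝ) :
    symplecticForm b (jet u x) (jet v x) = symplecticForm b (jet u y) (jet v y) := by
  have hderiv (t : ℝ) :
      HasDerivAt (fun t ↦ symplecticForm b (jet u t) (jet v t)) 0 t := by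
    refine (hasDerivAt_bilinForm _ (hasDerivAt_jet hu t) (hasDerivAt_jet hv t)).congr_deriv ?_
    simp [jet, hsymm t (u t) (v t)]
  exact is_const_of_deriv_eq_zero (fun t ↦ (hderiv t).differentiableAt)
    (fun t ↦ (hderiv t).deriv) x y

-- If `w` is the constant Wronskian, then `b e u' → -w`; as `b e u` is bounded, `w = 0`.
lemma symplecticForm_jet_eq_zero_of_isBigO (hM : ∀ x, ‖Q x‖ ≤ M)
    (hsymm : ∀ x, b.IsSelfAdjoint (Q x)) {a u : ℝ → E} (ha : a ∈ solutionSpace Q)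
    (hu : u ∈ solutionSpace Q) {e : E} (hlim : Tendsto (jet a) atTop (𝓝 (e, 0)))
    (hbdd : u =O[atTop] (1 : ℝ → ℝ)) (x : ℝ) : symplecticForm b (jet a x) (jet u x) = 0 := by
  set w := symplecticForm b (jet a x) (jet u x) with hw
  let ω := (symplecticForm b).toContinuousBilinearMap
  have hvanish : Tendsto (fun t ↦ ω (jet a t - (e, 0)) (jet u t)) atTop (𝓝 0) :=
    (tendsto_sub_nhds_zero_iff.2 hlim).op_zero_isBoundedUnder_le'
      ((isBigO_one_iff ℝ).1 (isBigO_jet_of_isBigO hM hu hbdd)) (fun p q ↦ ω p q)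
      ⟨‖ω‖, ω.le_opNorm₂⟩
  have hderiv : Tendsto (fun t ↦ b e (deriv u t)) atTop (𝓝 (-w)) := by
    refine (zero_sub w ▸ hvanish.sub_const w).congr fun t ↦ ?_
    simp only [ω, hw, symplecticForm_jet_eq hsymm ha hu x t, map_sub]
    simp [jet]
  refine neg_eq_zero.1 (eq_zero_of_tendsto_deriv_of_isBigO_one (u := fun t ↦ b e (u t))
    (fun t ↦ ?_) ?_ hderiv)
  · simpa using hasDerivAt_bilinForm b (hasDerivAt_const t e) (hasDerivAt_of_mem_solutionSpace hu t)
  · exact ((b.toContinuousBilinearMap e).isBigO_comp u atTop).trans hbdd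

variable {ι : Type*} [Fintype ι] {F : ι → solutionSpace Q} {e : ι → E}

lemma orthogonal_span_jet_eq (hM : ∀ x, ‖Q x‖ ≤ M) (hsymm : ∀ x, b.IsSelfAdjoint (Q x))
    (hb : b.Nondegenerate) (hind : LinearIndependent 𝕜 F)
    (hcard : finrank 𝕜 E = Fintype.card ι)
    (hF : ∀ i, Tendsto (jet (F i : ℝ → E)) atTop (𝓝 (e i, 0))) (x : ℝ) :
    (symplecticForm b).orthogonal (Submodule.span 𝕜 (range (jetAt Q x ∘ F))) =
      Submodule.span 𝕜 (range (jetAt Q x ∘ F)) := by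
  refine orthogonal_eq_of_le_orthogonal (symplecticForm_nondegenerate hb) ?_ ?_
  · refine Submodule.span_le.2 (range_subset_iff.2 fun j ↦
      mem_orthogonal_span_range_iff.2 fun i ↦ ?_)
    exact symplecticForm_jet_eq_zero_of_isBigO hM hsymm (F i).2 (F j).2 (hF i)
      (isBigO_one_of_mem_span hF (Submodule.subset_span (mem_range_self j))) x
  · rw [finrank_span_eq_card (hind.map' _ (LinearMap.ker_eq_bot.2 (jetAt_injective hM x))),
      finrank_prod, hcard, two_mul]

lemma mem_span_range_iff_symplecticForm_jet_eq_zero (hM : ∀ x, ‖Q x‖ ≤ M)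
    (hsymm : ∀ x, b.IsSelfAdjoint (Q x)) (hb : b.Nondegenerate) (hind : LinearIndependent 𝕜 F)
    (hcard : finrank 𝕜 E = Fintype.card ι)
    (hF : ∀ i, Tendsto (jet (F i : ℝ → E)) atTop (𝓝 (e i, 0))) (x : ℝ) (u : solutionSpace Q) :
    u ∈ Submodule.span 𝕜 (range F) ↔
      ∀ i, symplecticForm b (jet (F i) x) (jet u x) = 0 := by
  have hmap : u ∈ Submodule.span 𝕜 (range F) ↔
      jetAt Q x u ∈ Submodule.span 𝕜 (range (jetAt Q x ∘ F)) := by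
    rw [range_comp, Submodule.span_image]
    exact ((jetAt_injective hM x).mem_set_image (s := Submodule.span 𝕜 (range F))).symm
  rw [hmap, ← orthogonal_span_jet_eq hM hsymm hb hind hcard hF, mem_orthogonal_span_range_iff]
  rfl

lemma mem_span_range_iff_isBigO_one (hM : ∀ x, ‖Q x‖ ≤ M) (hsymm : ∀ x, b.IsSelfAdjoint (Q x))
    (hb : b.Nondegenerate) (hind : LinearIndependent 𝕜 F)
    (hcard : finrank 𝕜 E = Fintype.card ι)
    (hF : ∀ i, Tendsto (jet (F i : ℝ → E)) atTop (𝓝 (e i, 0))) (u : solutionSpace Q) :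
    u ∈ Submodule.span 𝕜 (range F) ↔ (u : ℝ → E) =O[atTop] (1 : ℝ → ℝ) :=
  ⟨isBigO_one_of_mem_span hF, fun hbdd ↦
    (mem_span_range_iff_symplecticForm_jet_eq_zero hM hsymm hb hind hcard hF 0 u).2 fun i ↦
      symplecticForm_jet_eq_zero_of_isBigO hM hsymm (F i).2 u.2 (hF i) hbdd 0⟩

theorem exists_bounded_solution_iff_det_eq_zero [DecidableEq ι] (hM : ∀ x, ‖Q x‖ ≤ M)
    (hsymm : ∀ x, b.IsSelfAdjoint (Q x)) (hb : b.Nondegenerate) (heven : ∀ x, Q (-x) = Q x)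
    (hind : LinearIndependent 𝕜 F) (hcard : finrank 𝕜 E = Fintype.card ι)
    (hF : ∀ i, Tendsto (jet (F i : ℝ → E)) atTop (𝓝 (e i, 0))) (x : ℝ) :
    (∃ u : solutionSpace Q, u ≠ 0 ∧ ∃ C, ∀ t, ‖(u : ℝ → E) t‖ ≤ C) ↔
      (Matrix.of fun i j ↦
        symplecticForm b (jet (F i) x) (jet (reflect heven (F j)) x)).det = 0 := by
  have hmem := mem_span_range_iff_isBigO_one hM hsymm hb hind hcard hF
  have hdet := det_bilinForm_eq_zero_iff
    ((symplecticForm b).compl₁₂ (jetAt Q x) (jetAt Q x)) F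
    (hind.map' _ (LinearMap.ker_eq_bot.2 (reflect_involutive heven).injective))
  refine (exists_congr fun u ↦ ?_).trans hdet.symm
  rw [exists_norm_le_iff_isBigO_reflect heven, ← hmem, ← hmem, mem_span_range_reflect_iff,
    mem_span_range_iff_symplecticForm_jet_eq_zero hM hsymm hb hind hcard hF x]
  simp only [LinearMap.compl₁₂_apply, jetAt_apply]
  tauto

end Wronskian

section Asymptotics

lemma linearIndependent_pair_of_tendsto {𝕜 E α : Type*} [RCLike 𝕜] [NormedAddCommGroup E]
    [NormedSpace 𝕜 E] {l : Filter α} [l.NeBot] {f g : α → E} {v : E} (hv : v ≠ 0)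
    (hf : Tendsto f l (𝓝 v)) (hg₀ : g ≠ 0) (hg : Tendsto g l (𝓝 0)) :
    LinearIndependent 𝕜 ![f, g] := by
  refine LinearIndependent.pair_iff.2 fun s t hst ↦ ?_
  have hlim : Tendsto (s • f + t • g) l (𝓝 (s • v)) := by
    have hadd := (hf.const_smul s).add (hg.const_smul t)
    rwa [smul_zero, add_zero] at hadd
  have hs : s = 0 := by
    rw [hst] at hlim
    exact (smul_eq_zero.1 (tendsto_nhds_unique hlim tendsto_const_nhds)).resolve_right hv
  subst hs
  simpa [hg₀] using hst

variable {E : Type*} [NormedAddCommGroup E] [NormedSpace ℝ E] {g : ℝ → E} {v : E}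

lemma tendsto_jet_of_norm_iteratedDeriv_sub_le {γ C x₀ : ℝ} (hγ : 0 < γ)
    (h : ∀ j ≤ 1, ∀ x ≥ x₀, ‖iteratedDeriv j (fun y ↦ g y - v) x‖ ≤ C * exp (-γ * x)) :
    Tendsto (jet g) atTop (𝓝 (v, 0)) := by
  have hexp : Tendsto (fun x ↦ C * exp (-γ * x)) atTop (𝓝 0) := by
    simpa using (tendsto_exp_atBot.comp
      (tendsto_id.const_mul_atTop_of_neg (neg_lt_zero.2 hγ))).const_mul C
  have hlim (j) (hj : j ≤ 1) : Tendsto (iteratedDeriv j fun y ↦ g y - v) atTop (𝓝 0) :=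
    squeeze_zero_norm' ((eventually_ge_atTop x₀).mono (h j hj)) hexp
  have hfst := hlim 0 zero_le_one
  have hsnd := hlim 1 le_rfl
  rw [iteratedDeriv_zero] at hfst
  rw [iteratedDeriv_one, deriv_sub_const_fun] at hsnd
  exact (tendsto_sub_nhds_zero_iff.1 hfst).prodMk_nhds hsnd

lemma tendsto_jet_zero_of_tendsto_jet_exp_smul {k : ℝ} (hk : 0 < k) (hg : Differentiable ℝ g)
    {p : E × E} (h : Tendsto (jet fun y ↦ exp (k * y) • g y) atTop (𝓝 p)) :
    Tendsto (jet g) atTop (𝓝 0) := by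
  have hexp : Tendsto (fun x ↦ exp (-(k * x))) atTop (𝓝 0) :=
    tendsto_exp_neg_atTop_nhds_zero.comp (tendsto_id.const_mul_atTop hk)
  have hfst := (continuous_fst.tendsto p).comp h
  have hsnd := (continuous_snd.tendsto p).comp h
  have hzero := hexp.smul (hfst.prodMk_nhds (hsnd.sub (hfst.const_smul k)))
  rw [zero_smul] at hzero
  refine hzero.congr fun x ↦ ?_
  have hderiv : deriv (fun y ↦ exp (k * y) • g y) x =
      exp (k * x) • deriv g x + (exp (k * x) * k) • g x := by
    have hk' : HasDerivAt (fun y ↦ exp (k * y)) (exp (k * x) * k) x := by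
      simpa using ((hasDerivAt_id x).const_mul k).exp
    exact (hk'.smul (hg x).hasDerivAt).deriv
  have hcancel : exp (-(k * x)) * exp (k * x) = 1 := by simp [← Real.exp_add]
  simp only [jet, Function.comp_apply, hderiv, Prod.smul_mk, Prod.mk.injEq]
  constructor
  · rw [smul_smul, hcancel, one_smul]
  · rw [mul_comm _ k, mul_smul, add_sub_cancel_right, smul_smul, hcancel, one_smul]

end Asymptotics

section Components

variable {E F : Type*} [NormedAddCommGroup E] [NormedSpace ℝ E] [NormedAddCommGroup F]
  [NormedSpace ℝ F] {f : ℝ → E × F} {x : ℝ}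

lemma deriv_fst (hf : DifferentiableAt ℝ f x) : deriv (fun y ↦ (f y).1) x = (deriv f x).1 := by
  simpa using hf.hasDerivAt.hasFDerivAt.fst.hasDerivAt.deriv

lemma deriv_snd (hf : DifferentiableAt ℝ f x) : deriv (fun y ↦ (f y).2) x = (deriv f x).2 := by
  simpa using hf.hasDerivAt.hasFDerivAt.snd.hasDerivAt.deriv

end Components

section MatrixSchrodinger

/-- The bilinear, unconjugated dot product on `ℂ²`. Its symplectic form is the Wronskian `Wr`. -/
def dotForm : LinearMap.BilinForm ℂ (ℂ × ℂ) :=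
  (LinearMap.mul ℂ ℂ).compl₁₂ (.fst ℂ ℂ ℂ) (.fst ℂ ℂ ℂ) +
    (LinearMap.mul ℂ ℂ).compl₁₂ (.snd ℂ ℂ ℂ) (.snd ℂ ℂ ℂ)

@[simp]
lemma dotForm_apply (p q : ℂ × ℂ) : dotForm p q = p.1 * q.1 + p.2 * q.2 := rfl

lemma dotForm_nondegenerate : dotForm.Nondegenerate :=
  ⟨fun p h ↦ Prod.ext (by simpa using h (1, 0)) (by simpa using h (0, 1)),
    fun q h ↦ Prod.ext (by simpa using h (1, 0)) (by simpa using h (0, 1))⟩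

/-- The matrix `Q` for which `ℋf = z f` reads `f'' = Q f`: the sign of the second row of `ℋ` is
absorbed, which makes `Q` symmetric. -/
def schrodingerMatrix (V₁ V₂ : ℝ → ℝ) (z : ℂ) (x : ℝ) : ℂ × ℂ →L[ℂ] ℂ × ℂ :=
  ((1 - z + V₁ x) • ContinuousLinearMap.fst ℂ ℂ ℂ + (V₂ x : ℂ) • .snd ℂ ℂ ℂ).prod
    ((V₂ x : ℂ) • .fst ℂ ℂ ℂ + (1 + z + V₁ x) • .snd ℂ ℂ ℂ)

variable {V₁ V₂ : ℝ → ℝ} {z : ℂ}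

@[simp]
lemma schrodingerMatrix_apply (x : ℝ) (p : ℂ × ℂ) :
    schrodingerMatrix V₁ V₂ z x p =
      ((1 - z + V₁ x) * p.1 + V₂ x * p.2, V₂ x * p.1 + (1 + z + V₁ x) * p.2) := rfl

lemma isSelfAdjoint_schrodingerMatrix (x : ℝ) :
    dotForm.IsSelfAdjoint (schrodingerMatrix V₁ V₂ z x) := fun p q ↦ by
  simp
  ring

lemma norm_schrodingerMatrix_le {M : ℝ} {x : ℝ} (hM : |V₁ x| + |V₂ x| ≤ M) :
    ‖schrodingerMatrix V₁ V₂ z x‖ ≤ 1 + ‖z‖ + M := by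
  have hM₀ : 0 ≤ M := (by positivity : 0 ≤ |V₁ x| + |V₂ x|).trans hM
  refine ContinuousLinearMap.opNorm_le_bound _ (by positivity) fun p ↦ ?_
  have hrow {a b r s : ℂ} (ha : ‖a‖ ≤ 1 + ‖z‖ + |V₁ x|) (hb : ‖b‖ = |V₂ x|) (hr : ‖r‖ ≤ ‖p‖)
      (hs : ‖s‖ ≤ ‖p‖) : ‖a * r + b * s‖ ≤ (1 + ‖z‖ + M) * ‖p‖ :=
    calc ‖a * r + b * s‖ ≤ ‖a‖ * ‖r‖ + ‖b‖ * ‖s‖ := by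
          simpa only [norm_mul] using norm_add_le (a * r) (b * s)
      _ ≤ (1 + ‖z‖ + |V₁ x|) * ‖p‖ + |V₂ x| * ‖p‖ := by rw [hb]; gcongr
      _ ≤ (1 + ‖z‖ + M) * ‖p‖ := by
          rw [← add_mul, add_assoc _ |V₁ x|]
          gcongr
  have hdiag {w : ℂ} (hw : ‖w‖ ≤ 1 + ‖z‖) : ‖w + V₁ x‖ ≤ 1 + ‖z‖ + |V₁ x| :=
    (norm_add_le _ _).trans (by simpa using hw)
  have hoff : ‖(V₂ x : ℂ)‖ = |V₂ x| := by simp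
  rw [schrodingerMatrix_apply, Prod.norm_mk, add_comm ((V₂ x : ℂ) * p.1)]
  exact max_le
    (hrow (hdiag (by simpa using norm_sub_le 1 z)) hoff (norm_fst_le p) (norm_snd_le p))
    (hrow (hdiag (by simpa using norm_add_le 1 z)) hoff (norm_snd_le p) (norm_fst_le p))

lemma deriv_deriv_eq_iteratedDeriv_two {f : ℝ → ℂ × ℂ} (hf : ContDiff ℝ 2 f) (x : ℝ) :
    deriv (deriv f) x =
      (iteratedDeriv 2 (fun y ↦ (f y).1) x, iteratedDeriv 2 (fun y ↦ (f y).2) x) := by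
  have hf' (y : ℝ) : DifferentiableAt ℝ f y := hf.differentiable two_ne_zero y
  have hf'' : DifferentiableAt ℝ (deriv f) x := hf.differentiable_deriv_two x
  have hfst : deriv (fun y ↦ (f y).1) = fun y ↦ (deriv f y).1 := funext fun y ↦ deriv_fst (hf' y)
  have hsnd : deriv (fun y ↦ (f y).2) = fun y ↦ (deriv f y).2 := funext fun y ↦ deriv_snd (hf' y)
  simp only [iteratedDeriv_succ, iteratedDeriv_zero, hfst, hsnd, deriv_fst hf'', deriv_snd hf'']

lemma mem_solutionSpace_schrodingerMatrix_iff {f : ℝ → ℂ × ℂ} :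
    f ∈ solutionSpace (schrodingerMatrix V₁ V₂ z) ↔ IsSolution V₁ V₂ z f := by
  refine and_congr_right fun hf ↦ forall_congr' fun x ↦ ?_
  have hderiv : HasDerivAt (deriv f) (schrodingerMatrix V₁ V₂ z x (f x)) x ↔
      deriv (deriv f) x = schrodingerMatrix V₁ V₂ z x (f x) :=
    ⟨HasDerivAt.deriv, fun h ↦ h ▸ (hf.differentiable_deriv_two x).hasDerivAt⟩
  rw [hderiv, deriv_deriv_eq_iteratedDeriv_two hf, schrodingerMatrix_apply, matH]
  simp only [Prod.ext_iff, Prod.smul_fst, Prod.smul_snd, smul_eq_mul]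
  refine and_congr ⟨fun h ↦ ?_, fun h ↦ ?_⟩ ⟨fun h ↦ ?_, fun h ↦ ?_⟩
  · linear_combination -h
  · linear_combination -h
  · linear_combination h
  · linear_combination h

lemma mWr_matOf_s13 {u v : Fin 2 → ℝ → ℂ × ℂ} {x : ℝ} (hu : ∀ i, DifferentiableAt ℝ (u i) x)
    (hv : ∀ i, DifferentiableAt ℝ (v i) x) :
    mWr (matOf (u 0) (u 1)) (matOf (v 0) (v 1)) x =
      Matrix.of fun i j ↦ symplecticForm dotForm (jet (u i) x) (jet (v j) x) := by
  have hcol {w : Fin 2 → ℝ → ℂ × ℂ} (hw : ∀ i, DifferentiableAt ℝ (w i) x) :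
      mderiv (matOf (w 0) (w 1)) x = matOf (deriv (w 0)) (deriv (w 1)) x := by
    ext i j
    fin_cases i <;> fin_cases j <;> simp [mderiv, matOf, deriv_fst (hw _), deriv_snd (hw _)]
  ext i j
  rw [mWr, hcol hu, hcol hv]
  fin_cases i <;> fin_cases j <;> simp [matOf, jet, Matrix.mul_apply, Fin.sum_univ_two]

lemma PotentialHyp.exists_bound {γ : ℝ} (hV : PotentialHyp γ V₁ V₂) :
    ∃ M, ∀ x, |V₁ x| + |V₂ x| ≤ M := by
  obtain ⟨hγ, -, -, -, -, -, hdecay⟩ := hV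
  obtain ⟨C, hC⟩ := hdecay 0
  simp only [iteratedDeriv_zero] at hC
  have hC₀ : 0 ≤ C := by
    simpa using (by positivity : 0 ≤ |V₁ 0| + |V₂ 0|).trans (hC 0)
  refine ⟨C, fun x ↦ (hC x).trans (mul_le_of_le_one_right hC₀ (exp_le_one_iff.2 ?_))⟩
  exact mul_nonpos_of_nonpos_of_nonneg (neg_nonpos.2 hγ.le) (abs_nonneg x)

theorem stmt_13_general {M : ℝ} (hM : ∀ x, |V₁ x| + |V₂ x| ≤ M) (hV₁ : ∀ x, V₁ (-x) = V₁ x)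
    (hV₂ : ∀ x, V₂ (-x) = V₂ x) {f₁ f₃ : ℝ → ℂ × ℂ} {e₁ e₃ : ℂ × ℂ}
    (h₁ : IsSolution V₁ V₂ z f₁) (h₃ : IsSolution V₁ V₂ z f₃)
    (hind : LinearIndependent ℂ ![f₁, f₃]) (hlim₁ : Tendsto (jet f₁) atTop (𝓝 (e₁, 0)))
    (hlim₃ : Tendsto (jet f₃) atTop (𝓝 (e₃, 0))) :
    (∃ f : ℝ → ℂ × ℂ, f ≠ 0 ∧ IsSolution V₁ V₂ z f ∧ ∃ B : ℝ, ∀ x : ℝ, ‖f x‖ ≤ B) ↔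
      ∀ x : ℝ, (mWr (matOf f₁ f₃) (fun y ↦ matOf f₁ f₃ (-y)) x).det = 0 := by
  have hmem : ∀ i, ![f₁, f₃] i ∈ solutionSpace (schrodingerMatrix V₁ V₂ z) :=
    Fin.forall_fin_two.2 ⟨mem_solutionSpace_schrodingerMatrix_iff.2 h₁,
      mem_solutionSpace_schrodingerMatrix_iff.2 h₃⟩
  let F (i : Fin 2) : solutionSpace (schrodingerMatrix V₁ V₂ z) := ⟨![f₁, f₃] i, hmem i⟩
  have hF : LinearIndependent ℂ F := LinearIndependent.of_comp (Submodule.subtype _) hind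
  have hlim : ∀ i, Tendsto (jet (F i : ℝ → ℂ × ℂ)) atTop (𝓝 (![e₁, e₃] i, 0)) :=
    Fin.forall_fin_two.2 ⟨hlim₁, hlim₃⟩
  have heven (x : ℝ) : schrodingerMatrix V₁ V₂ z (-x) = schrodingerMatrix V₁ V₂ z x := by
    simp only [schrodingerMatrix, hV₁, hV₂]
  have hmWr (x : ℝ) : mWr (matOf f₁ f₃) (fun y ↦ matOf f₁ f₃ (-y)) x = Matrix.of fun i j ↦
      symplecticForm dotForm (jet (F i) x) (jet (reflect heven (F j)) x) :=
    mWr_matOf_s13 (u := fun i ↦ F i) (v := fun j ↦ reflect heven (F j))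
      (fun i ↦ (F i).2.1.differentiable two_ne_zero x)
      (fun j ↦ (reflect heven (F j)).2.1.differentiable two_ne_zero x)
  simp only [hmWr, ← exists_bounded_solution_iff_det_eq_zero
    (fun x ↦ norm_schrodingerMatrix_le (hM x)) isSelfAdjoint_schrodingerMatrix
    dotForm_nondegenerate heven hF (by simp) hlim, forall_const]
  simp only [← mem_solutionSpace_schrodingerMatrix_iff]
  exact ⟨fun ⟨f, hf, hmem, hB⟩ ↦ ⟨⟨f, hmem⟩, fun h ↦ hf (congrArg Subtype.val h), hB⟩,
    fun ⟨u, hu, hB⟩ ↦ ⟨u, fun h ↦ hu (Subtype.ext h), u.2, hB⟩⟩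

end MatrixSchrodinger

theorem stmt_13 (γ : ℝ) (V₁ V₂ : ℝ → ℝ) (hV : PotentialHyp γ V₁ V₂)
    (f₁ f₃ : ℝ → ℂ × ℂ)
    (h1 : IsSolution V₁ V₂ 1 f₁) (h3 : IsSolution V₁ V₂ 1 f₃)
    (hasymp : ∃ x0 C : ℝ, 0 ≤ x0 ∧ 0 < C ∧ ∀ j : ℕ, j ≤ 1 → ∀ x : ℝ, x0 ≤ x →
      ‖iteratedDeriv j (fun y : ℝ => f₁ y - ((1 : ℂ), (0 : ℂ))) x‖ ≤ C * Real.exp (-γ * x) ∧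
      ‖iteratedDeriv j
          (fun y : ℝ => Real.exp (Real.sqrt 2 * y) • f₃ y - ((0 : ℂ), (1 : ℂ))) x‖
        ≤ C * Real.exp (-γ * x)) :
    (∃ f : ℝ → ℂ × ℂ, f ≠ 0 ∧ IsSolution V₁ V₂ 1 f ∧ ∃ B : ℝ, ∀ x : ℝ, ‖f x‖ ≤ B) ↔
      ∀ x : ℝ, (mWr (matOf f₁ f₃) (fun y => matOf f₁ f₃ (-y)) x).det = 0 := by
  obtain ⟨x₀, C, -, -, hasymp⟩ := hasymp
  obtain ⟨M, hM⟩ := hV.exists_bound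
  obtain ⟨hγ, -, -, -, hV₁, hV₂, -⟩ := hV
  have hlim₁ : Tendsto (jet f₁) atTop (𝓝 ((1, 0), 0)) :=
    tendsto_jet_of_norm_iteratedDeriv_sub_le hγ fun j hj x hx ↦ (hasymp j hj x hx).1
  have hexp : Tendsto (jet fun y ↦ exp (√2 * y) • f₃ y) atTop (𝓝 ((0, 1), 0)) :=
    tendsto_jet_of_norm_iteratedDeriv_sub_le hγ fun j hj x hx ↦ (hasymp j hj x hx).2
  have hlim₃ : Tendsto (jet f₃) atTop (𝓝 0) :=
    tendsto_jet_zero_of_tendsto_jet_exp_smul (by positivity) (h3.1.differentiable two_ne_zero) hexp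
  have hf₃ : f₃ ≠ 0 := fun h ↦ by
    simpa [h, jet, tendsto_const_nhds_iff, Prod.ext_iff] using hexp.fst_nhds
  exact stmt_13_general hM hV₁ hV₂ h1 h3
    (linearIndependent_pair_of_tendsto (by simp) hlim₁.fst_nhds hf₃ hlim₃.fst_nhds) hlim₁ hlim₃
end
end
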